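/- Let a, b, s be positive integers with s < a, and let k_1, …, k_s be integers with 2 ≤ k_1 < k_2 < ⋯ < k_s ≤ a−1. Let q_1 < ⋯ < q_{a−s} be the increasing enumeration of {1,…,a} \ {a−k_1+1, …, a−k_s+1}. Then the number of lozenge tilings of H_{2a,2b}(k_1,…,k_s) invariant under 180° rotation about the center is the perfect square M_⊙(H_{2a,2b}(k_1,…,k_s)) = ( ∏_{j=1}^{a−s} C(a+b+q_j−1, 2q_j−1) · ∏_{1≤j<k≤a−s} (q_k−q_j)/(q_j+q_k−1) )², where C(n,r) denotes the binomial coefficient. -/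

import Mathlib

/-!
Geometric setup: the triangular lattice is drawn in the plane (identified with `ℝ × ℝ`)
so that one family of lattice lines is vertical.  Lattice vertices are generated by
`v1 = (√3/2, 1/2)` and `v2 = (0,1)`, anchored so that the bottom vertex of the western
vertical side of the hexagon is at the origin.

The hexagon with side lengths `a, a, 2b, a, a, 2b` (clockwise from the northwestern side)
then has vertices `(0,0)`, `(0,2b)`, `(a√3/2, a/2+2b)`, `(a√3, 2b)`, `(a√3, 0)`,
`(a√3/2, -a/2)`; its center is `(a√3/2, b)` and its horizontal symmetry axis is `y = b`.
-/

noncomputable section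

abbrev Pt : Type := ℝ × ℝ

namespace PP

/-- √3, the ratio of the long diagonal of a unit lozenge to its side. -/
def s3 : ℝ := Real.sqrt 3

/-- The vertices of the triangular lattice (one family of lattice lines vertical). -/
def triLattice : Set Pt :=
  {p | ∃ m n : ℤ, p = ((m : ℝ) * (s3 / 2), (m : ℝ) / 2 + (n : ℝ))}

/-- The six unit vectors along lattice directions. -/
def unitVecs : Set Pt :=
  {(0, 1), (0, -1), (s3 / 2, 1 / 2), (-(s3 / 2), -(1 / 2)),
    (s3 / 2, -(1 / 2)), (-(s3 / 2), 1 / 2)}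

/-- A (unit) lozenge of the triangular lattice: the union of two unit lattice triangles
sharing an edge, i.e. the convex hull of `p, p+u, p+v, p+u+v` for a lattice vertex `p`
and two distinct non-opposite lattice unit vectors `u, v`. -/
def IsLozenge (L : Set Pt) : Prop :=
  ∃ p u v : Pt, p ∈ triLattice ∧ u ∈ unitVecs ∧ v ∈ unitVecs ∧ u ≠ v ∧ u ≠ -v ∧
    L = convexHull ℝ {p, p + u, p + v, p + u + v}

/-- A lozenge tiling of a region `R`: a set of lozenges covering `R` whose interiors
are pairwise disjoint. -/
def IsLozengeTiling (R : Set Pt) (T : Set (Set Pt)) : Prop :=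
  (∀ L ∈ T, IsLozenge L) ∧ ⋃₀ T = R ∧
    ∀ L ∈ T, ∀ L' ∈ T, L ≠ L' → interior L ∩ interior L' = ∅

/-- The hexagon with side lengths `A, A, 2b, A, A, 2b`, clockwise from the NW side. -/
def hexagon (A b : ℕ) : Set Pt :=
  convexHull ℝ
    {((0 : ℝ), (0 : ℝ)), ((0 : ℝ), 2 * (b : ℝ)),
      ((A : ℝ) * (s3 / 2), (A : ℝ) / 2 + 2 * (b : ℝ)),
      ((A : ℝ) * s3, 2 * (b : ℝ)), ((A : ℝ) * s3, (0 : ℝ)),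
      ((A : ℝ) * (s3 / 2), -((A : ℝ) / 2))}

/-- The left-pointing triangular hole of side 2 whose vertical (right) side lies at
distance `2k` (in units of `√3` times half the lattice spacing, i.e. at `x = k√3`)
from the left side of the hexagon, centered on the horizontal symmetry axis `y = b`. -/
def leftHole (b k : ℕ) : Set Pt :=
  convexHull ℝ
    {((k : ℝ) * s3, (b : ℝ) - 1), ((k : ℝ) * s3, (b : ℝ) + 1), (((k : ℝ) - 1) * s3, (b : ℝ))}

/-- The mirror image of `leftHole b k` across the vertical symmetry axis of the hexagon:
a right-pointing triangular hole of side 2. -/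
def rightHole (A b k : ℕ) : Set Pt :=
  convexHull ℝ
    {(((A : ℝ) - k) * s3, (b : ℝ) - 1), (((A : ℝ) - k) * s3, (b : ℝ) + 1),
      (((A : ℝ) - k + 1) * s3, (b : ℝ))}

/-- The region `H_{A,2b}(k_1,…,k_s)`: the hexagon with side lengths `A, A, 2b, A, A, 2b`,
with the (open) triangular holes `leftHole (k i)` and their mirror images removed. -/
def Hreg (A b s : ℕ) (k : Fin s → ℕ) : Set Pt :=
  hexagon A b \ ⋃ i : Fin s, (interior (leftHole b (k i)) ∪ interior (rightHole A b (k i)))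

/-- The horizontal lattice rhombus of side `t` centered at the center `(A√3/2, b)`
of the hexagon. -/
def centralRhombus (A b t : ℕ) : Set Pt :=
  convexHull ℝ
    {((A : ℝ) * (s3 / 2) - (t : ℝ) * (s3 / 2), (b : ℝ)),
      ((A : ℝ) * (s3 / 2) + (t : ℝ) * (s3 / 2), (b : ℝ)),
      ((A : ℝ) * (s3 / 2), (b : ℝ) - (t : ℝ) / 2),
      ((A : ℝ) * (s3 / 2), (b : ℝ) + (t : ℝ) / 2)}

/-- The region `H_{A,2b}(k_1,…,k_s; t)`: `H_{A,2b}(k_1,…,k_s)` with the (open) central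
horizontal rhombus of side `t` also removed. -/
def HregC (A b s : ℕ) (k : Fin s → ℕ) (t : ℕ) : Set Pt :=
  Hreg A b s k \ interior (centralRhombus A b t)

/-- Rotation by `180°` about the center `(A√3/2, b)` of the hexagon. -/
def rot180 (A b : ℕ) (p : Pt) : Pt := ((A : ℝ) * s3 - p.1, 2 * (b : ℝ) - p.2)

/-- Reflection across the vertical symmetry axis `x = A√3/2` of the hexagon. -/
def reflV (A : ℕ) (p : Pt) : Pt := ((A : ℝ) * s3 - p.1, p.2)

/-- A tiling is invariant under rotation by `180°` about the center of the region. -/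
def RotInvariant (A b : ℕ) (T : Set (Set Pt)) : Prop :=
  ∀ L ∈ T, rot180 A b '' L ∈ T

/-- A tiling is invariant under reflection across the vertical symmetry axis. -/
def ReflInvariant (A : ℕ) (T : Set (Set Pt)) : Prop :=
  ∀ L ∈ T, reflV A '' L ∈ T

/-- `M_⊙(R)`: the number of lozenge tilings of `R` invariant under rotation by `180°`
about the center (of the hexagon with parameters `A`, `b` from which `R` was built). -/
def Mrot (A b : ℕ) (R : Set Pt) : ℕ :=
  Nat.card {T : Set (Set Pt) // IsLozengeTiling R T ∧ RotInvariant A b T}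

/-- `M_{⊙,|}(R)`: the number of lozenge tilings of `R` invariant both under rotation by
`180°` about the center and under reflection across the vertical symmetry axis. -/
def MrotRefl (A b : ℕ) (R : Set Pt) : ℕ :=
  Nat.card {T : Set (Set Pt) //
    IsLozengeTiling R T ∧ RotInvariant A b T ∧ ReflInvariant A T}

end PP

set_option linter.unusedSimpArgs false

namespace LT
open Matrix Finset

theorem cb_aux {m n : ℕ} (f : Fin m → Fin n) (hf : Function.Injective f) :
    ∃ (p : Fin m ↪o Fin n) (σ : Equiv.Perm (Fin m)), f = p ∘ σ := by
  have hc : (univ.image f).card = m := by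
    rw [card_image_of_injective _ hf]; simp
  let p := (univ.image f).orderEmbOfFin hc
  have hr : ∀ i, ∃ j, p j = f i := by
    intro i
    have : f i ∈ Set.range p := by
      rw [range_orderEmbOfFin]; simp
    exact this
  choose g hg using hr
  have hgi : Function.Injective g := by
    intro i j h
    apply hf; rw [← hg, ← hg, h]
  refine ⟨p, Equiv.ofBijective g (Finite.injective_iff_bijective.1 hgi), ?_⟩
  funext i; simp [hg]

theorem cauchyBinet {m n : ℕ} (A B : Matrix (Fin m) (Fin n) ℚ) :
    (A * Bᵀ).det = ∑ p : Fin m ↪o Fin n,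
      (A.submatrix id p).det * (B.submatrix id p).det := by
  have h1 : (A * Bᵀ).det = ∑ f : Fin m → Fin n,
      (∏ i, A i (f i)) * (Matrix.of fun i j => B j (f i)).det := by
    have : (A * Bᵀ) = fun i => ∑ k, A i k • (fun j => B j k) := by
      funext i j
      simp [Matrix.mul_apply]
    rw [this]
    change Matrix.detRowAlternating _ = _
    rw [← AlternatingMap.coe_multilinearMap, MultilinearMap.map_sum]
    refine sum_congr rfl fun f _ => ?_
    rw [MultilinearMap.map_smul_univ, smul_eq_mul]
    rfl
  have h2 : ∑ f : Fin m → Fin n,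
      (∏ i, A i (f i)) * (Matrix.of fun i j => B j (f i)).det
      = ∑ q : (Fin m ↪o Fin n) × Equiv.Perm (Fin m),
      (∏ i, A i (q.1 (q.2 i))) * (Matrix.of fun i j => B j (q.1 (q.2 i))).det := by
    symm
    refine Finset.sum_of_injOn (fun q => q.1 ∘ q.2) ?_ (by simp) ?_ (by simp)
    · rintro ⟨p, σ⟩ _ ⟨p', σ'⟩ _ h
      simp only at h
      have hp : p = p' := by
        apply DFunLike.coe_injective
        apply (StrictMono.range_inj p.strictMono p'.strictMono).1
        rw [← EquivLike.range_comp p σ, ← EquivLike.range_comp p' σ', h]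
      subst hp
      congr 1
      ext i
      have := congrFun h i
      simpa [Fin.ext_iff] using this
    · intro f _ hf
      have : ¬ Function.Injective f := by
        intro hi
        obtain ⟨p, σ, h⟩ := cb_aux f hi
        apply hf
        exact ⟨(p, σ), by simp, h.symm⟩
      unfold Function.Injective at this
      push Not at this
      obtain ⟨i, j, hij, hne⟩ := this
      rw [Matrix.det_zero_of_row_eq hne, mul_zero]
      funext k
      simp [hij]
  rw [h1, h2, Fintype.sum_prod_type]
  refine sum_congr rfl fun p _ => ?_
  have h3 : ∀ σ : Equiv.Perm (Fin m),
     (Matrix.of fun i j => B j (p (σ i))).det = (Equiv.Perm.sign σ : ℤ) * (B.submatrix id p).det := by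
    intro σ
    rw [← Matrix.det_transpose (B.submatrix id p), ← Matrix.det_permute]
    rfl
  simp only [h3]
  rw [← Matrix.det_transpose (A.submatrix id p), Matrix.det_apply' (A.submatrix id p)ᵀ, sum_mul]
  refine sum_congr rfl fun σ _ => ?_
  simp only [transpose_apply, submatrix_apply, id]
  ring

theorem fold_det {m : Type*} [Fintype m] [DecidableEq m] (P Q : Matrix m m ℚ) :
    (Matrix.fromBlocks P Q Q P).det = (P + Q).det * (P - Q).det := by
  have h : Matrix.fromBlocks 1 1 0 1 * Matrix.fromBlocks P Q Q P * Matrix.fromBlocks 1 (-1) 0 1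
    = Matrix.fromBlocks (P+Q) 0 Q (P - Q) := by
    simp [Matrix.fromBlocks_multiply]
    constructor <;> abel
  have := congrArg Matrix.det h
  rw [Matrix.det_mul, Matrix.det_mul, Matrix.det_fromBlocks_zero₂₁, Matrix.det_fromBlocks_zero₂₁,
    Matrix.det_fromBlocks_zero₁₂] at this
  simpa using this

theorem cauchy_det' : ∀ (n : ℕ) (x y : Fin n → ℚ) (_ : ∀ i j, x i + y j ≠ 0),
    (Matrix.of fun i j => 1 / (x i + y j)).det =
      (∏ i, ∏ j ∈ Ioi i,
        ((x j - x i) * (y j - y i))) / ∏ i, ∏ j, (x i + y j) := by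
  intro n
  induction n with
  | zero => intro x y _; simp
  | succ n ih =>
    intro x y h
    have ih' := ih (fun i => x i.succ) (fun i => y i.succ) (fun i j => h _ _)
    let B : Matrix (Fin (n+1)) (Fin (n+1)) ℚ := fun i j => if i = 0 then 1 / (x 0 + y j) else
      (x i - x 0) * (y j - y 0) / ((x i + y j) * (x i + y 0) * (x 0 + y j))
    rw [Matrix.det_eq_of_forall_row_eq_smul_add_const (B := B)
      (fun i => if i = 0 then 0 else (x 0 + y 0) / (x i + y 0)) 0 (by simp)]
    · rw [Matrix.det_succ_column_zero, Fin.sum_univ_succ]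
      rw [Finset.sum_eq_zero (s := univ) (f := fun i : Fin n => _)]
      · have hm : B.submatrix (Fin.succAbove 0) Fin.succ = Matrix.of fun i j =>
            ((x i.succ - x 0) / (x i.succ + y 0)) * (Matrix.of (fun i j : Fin n =>
              ((y j.succ - y 0) / (x 0 + y j.succ)) *
               (Matrix.of (fun i j : Fin n => 1 / (x i.succ + y j.succ))) i j)) i j := by
          ext i j
          have h1 := h i.succ j.succ
          have h2 := h 0 j.succ
          have h3 := h i.succ 0
          rw [submatrix_apply]
          simp [B]
          field_simp
        rw [hm, Matrix.det_mul_column, Matrix.det_mul_row, ih']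
        rw [Fin.prod_univ_succ (f := fun i => ∏ j ∈ Ioi i, _)]
        rw [Fin.prod_univ_succ (f := fun i => ∏ j, (x i + y j))]
        simp only [Fin.prod_Ioi_zero, Fin.prod_Ioi_succ]
        simp only [Fin.prod_univ_succ (f := fun j => (x _ + y j))]
        simp only [prod_div_distrib, prod_mul_distrib]
        simp [B]
        field_simp
      · intro i _
        simp [B]
    · intro i j
      have h1 := h i j
      have h2 := h 0 j
      have h3 := h i 0
      by_cases hi : i = 0
      · subst hi; simp [B]
      · simp [B, hi]
        field_simp
        ring

theorem cauchy_det (n : ℕ) (x y : Fin n → ℚ) (h : ∀ i j, x i + y j ≠ 0) :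
    (Matrix.of fun i j => 1 / (x i + y j)).det =
      (∏ p ∈ univ.filter (fun p : Fin n × Fin n => p.1 < p.2),
        ((x p.2 - x p.1) * (y p.2 - y p.1))) / ∏ p : Fin n × Fin n, (x p.1 + y p.2) := by
  rw [cauchy_det' n x y h, Fintype.prod_prod_type, prod_filter, Fintype.prod_prod_type]
  congr 1
  refine prod_congr rfl fun i _ => ?_
  rw [← prod_filter]
  refine prod_congr ?_ fun _ _ => rfl
  ext j; simp

/-- complementary minors -/
theorem jacobi {m n : Type*} [Fintype m] [DecidableEq m] [Fintype n] [DecidableEq n]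
    (M N : Matrix (m ⊕ n) (m ⊕ n) ℚ) (h : M * N = 1) :
    M.det * N.toBlocks₂₂.det = M.toBlocks₁₁.det := by
  have e : M * Matrix.fromBlocks 1 N.toBlocks₁₂ 0 N.toBlocks₂₂ =
    Matrix.fromBlocks M.toBlocks₁₁ 0 M.toBlocks₂₁ 1 := by
    rw [← Matrix.fromBlocks_toBlocks M, ← Matrix.fromBlocks_toBlocks N, Matrix.fromBlocks_multiply,
      ← Matrix.fromBlocks_one, Matrix.fromBlocks_inj] at h
    conv_lhs => rw [← Matrix.fromBlocks_toBlocks M]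
    rw [Matrix.fromBlocks_multiply, Matrix.fromBlocks_inj]
    simp [h]
  have := congrArg Matrix.det e
  rw [Matrix.det_mul, Matrix.det_fromBlocks_zero₂₁, Matrix.det_fromBlocks_zero₁₂] at this
  simpa using this



/-- `(E^{1/2}+E^{-1/2})^2` -/
def Wop : (ℤ → ℚ) →ₗ[ℚ] (ℤ → ℚ) where
  toFun f y := f (y - 1) + 2 * f y + f (y + 1)
  map_add' f g := by funext y; simp; ring
  map_smul' c f := by funext y; simp; ring

def dvec (σ : ℚ) (l : ℤ) (y : ℤ) : ℚ := (if y = l then 1 else 0) + σ * (if y = -1 - l then 1 else 0)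

theorem W_dvec (σ : ℚ) (l : ℤ) :
    Wop (dvec σ l) = dvec σ (l + 1) + (2 : ℚ) • dvec σ l + dvec σ (l - 1) := by
  funext y
  simp only [Wop, dvec, LinearMap.coe_mk, AddHom.coe_mk, Pi.add_apply, Pi.smul_apply, smul_eq_mul]
  have e1 : (y - 1 = l) ↔ (y = l + 1) := by omega
  have e2 : (y + 1 = l) ↔ (y = l - 1) := by omega
  have e3 : (y - 1 = -1 - l) ↔ (y = -1 - (l - 1)) := by omega
  have e4 : (y + 1 = -1 - l) ↔ (y = -1 - (l + 1)) := by omega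
  simp only [e1, e2, e3, e4]
  ring

theorem dvec_neg (σ : ℚ) (hσ : σ * σ = 1) : dvec σ (-1) = σ • dvec σ 0 := by
  funext y
  simp only [dvec, Pi.smul_apply, smul_eq_mul]
  have e1 : (y = -1 - -1) ↔ y = 0 := by omega
  have e2 : (y = -1 - 0) ↔ y = -1 := by omega
  simp only [e1, e2]
  linear_combination (-(if y = -1 then (1:ℚ) else 0)) * hσ

/-- coefficients, `s = 0` for antisymmetric and `s = 2` for symmetric -/
def cf (s : ℚ) (l h : ℕ) : ℚ := (-1) ^ (l + h) * (((l + h).choose (2 * h) : ℚ) + s * ((l + h).choose (2 * h + 1) : ℚ))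

theorem cf_rec (s : ℚ) (l h : ℕ) :
    cf s (l + 2) (h + 1) = cf s (l + 1) h - 2 * cf s (l + 1) (h + 1) - cf s l (h + 1) := by
  unfold cf
  have p1 : ∀ k, ((l + 2 + (h + 1)).choose (k + 2) : ℚ) = (l + 1 + h).choose k
      + 2 * (l + 1 + (h + 1)).choose (k + 2) - (l + (h + 1)).choose (k + 2) := by
    intro k
    have e1 : l + 2 + (h + 1) = (l + h + 1) + 1 + 1 := by ring
    have e2 : l + 1 + (h + 1) = (l + h + 1) + 1 := by ring
    have e3 : l + (h + 1) = l + h + 1 := by ring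
    have e4 : l + 1 + h = l + h + 1 := by ring
    rw [e1, e2, e3, e4]
    simp only [Nat.choose_succ_succ (l + h + 1 + 1), Nat.choose_succ_succ (l + h + 1)]
    push_cast
    ring
  have q1 := p1 (2 * h)
  have q2 := p1 (2 * h + 1)
  have e1 : 2 * (h + 1) = 2 * h + 2 := by ring
  have e2 : 2 * h + 2 + 1 = 2 * h + 1 + 2 := by ring
  rw [e1, e2, q1, q2]
  ring

theorem cf_rec0 (s : ℚ) (l : ℕ) : cf s (l + 2) 0 = - 2 * cf s (l + 1) 0 - cf s l 0 := by
  unfold cf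
  simp
  ring

theorem cf_zero (s : ℚ) (l h : ℕ) (H : l < h) : cf s l h = 0 := by
  unfold cf
  rw [Nat.choose_eq_zero_of_lt (by omega), Nat.choose_eq_zero_of_lt (by omega)]
  simp

theorem cf_diag (s : ℚ) (l : ℕ) : cf s l l = 1 := by
  unfold cf
  rw [show l + l = 2 * l by ring, Nat.choose_self, Nat.choose_eq_zero_of_lt (by omega)]
  simp

theorem dvec_expand (s σ : ℚ) (hσ : σ * σ = 1) (hs : s = 1 + σ) (l : ℕ) :
    ∀ N, l < N → dvec σ l = ∑ h ∈ range N, cf s l h • (Wop ^ h) (dvec σ 0) := by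
  induction l using Nat.twoStepInduction with
  | zero =>
    intro N hN
    obtain ⟨N, rfl⟩ : ∃ M, N = M + 1 := ⟨N - 1, by omega⟩
    rw [sum_range_succ', sum_eq_zero]
    · simp [cf]
    · intro h _
      rw [cf_zero _ _ _ (by omega), zero_smul]
  | one =>
    intro N hN
    obtain ⟨N, rfl⟩ : ∃ M, N = M + 2 := ⟨N - 2, by omega⟩
    rw [sum_range_succ', sum_range_succ', sum_eq_zero]
    · have := W_dvec σ 0
      rw [show (0:ℤ) - 1 = -1 by ring, dvec_neg σ hσ] at this
      simp [cf, this, hs]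
      funext y
      simp
      ring
    · intro h _
      rw [cf_zero _ _ _ (by omega), zero_smul]
  | more l ih1 ih2 =>
    intro N hN
    have := W_dvec σ ((l + 1 : ℕ) : ℤ)
    have e : dvec σ ((l + 2 : ℕ) : ℤ) = Wop (dvec σ ((l + 1 : ℕ) : ℤ)) - (2 : ℚ) • dvec σ ((l + 1 : ℕ) : ℤ)
        - dvec σ (l : ℤ) := by
      rw [this]; push_cast
      rw [show (l : ℤ) + 1 + 1 = l + 2 by ring, show (l : ℤ) + 1 - 1 = l by ring]
      abel
    obtain ⟨N, rfl⟩ : ∃ M, N = M + 1 := ⟨N - 1, by omega⟩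
    rw [e]
    conv_lhs => rw [ih1 (N + 1) (by omega)]
    conv_lhs => arg 1; arg 1; rw [ih2 N (by omega)]
    conv_lhs => arg 1; arg 2; rw [ih2 (N + 1) (by omega)]
    rw [sum_range_succ', sum_range_succ', sum_range_succ', cf_rec0]
    simp only [map_sum, map_smul, cf_rec, pow_succ', Module.End.mul_apply, sub_smul, sum_sub_distrib,
      mul_smul, smul_add, smul_sum, pow_zero, Module.End.one_apply]
    funext y
    simp
    ring

def Gm (n : ℕ) (σ : ℚ) : Matrix (Fin n) (Fin n) ℚ := fun h l => (Wop ^ (h : ℕ)) (dvec σ 0) (l : ℕ)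

def Cm (n : ℕ) (s : ℚ) : Matrix (Fin n) (Fin n) ℚ := fun l h => cf s l h

theorem Cm_Gm (n : ℕ) (s σ : ℚ) (hσ : σ * σ = 1) (hs : s = 1 + σ) : Cm n s * Gm n σ = 1 := by
  ext l l'
  have h := congrFun (dvec_expand s σ hσ hs l n l.2) ((l' : ℕ) : ℤ)
  rw [Finset.sum_apply, ← Fin.sum_univ_eq_sum_range (fun h => (cf s l h • (Wop ^ h) (dvec σ 0)) ((l' : ℕ) : ℤ))] at h
  rw [Matrix.mul_apply]
  simp only [Pi.smul_apply, smul_eq_mul] at h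
  unfold Cm Gm
  rw [← h, Matrix.one_apply]
  unfold dvec
  rw [if_neg (c := ((l' : ℕ) : ℤ) = -1 - _) (by omega)]
  simp [Fin.ext_iff, eq_comm]

theorem Cm_det (n : ℕ) (s : ℚ) : (Cm n s).det = 1 := by
  rw [Matrix.det_of_isLowerTriangular]
  · simp [Cm, cf_diag]
  · intro i j hij
    exact cf_zero _ _ _ hij

theorem Gm_det (n : ℕ) (s σ : ℚ) (hσ : σ * σ = 1) (hs : s = 1 + σ) : (Gm n σ).det = 1 := by
  have := congrArg Matrix.det (Cm_Gm n s σ hσ hs)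
  rw [Matrix.det_mul, Cm_det, one_mul, Matrix.det_one] at this
  exact this

theorem choose_rel (n h : ℕ) : ((n + h).choose (2 * h + 1) : ℚ) * (2 * h + 1) = (n + h).choose (2 * h) * (n - h) := by
  rcases le_or_gt h n with H | H
  · have := Nat.choose_succ_right_eq (n + h) (2 * h)
    have e : n + h - 2 * h = n - h := by omega
    rw [e] at this
    have t : ((n - h : ℕ) : ℚ) = n - h := by push_cast [H]; ring
    rw [← t]
    exact_mod_cast this
  · rw [Nat.choose_eq_zero_of_lt (by omega), Nat.choose_eq_zero_of_lt (by omega)]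
    simp

theorem tele (h h' n : ℕ) : ∑ l ∈ range n, cf 0 l h * cf 2 l h' =
    (-1) ^ h * (-1) ^ h' * ((n + h).choose (2 * h + 1) * (n + h').choose (2 * h' + 1)
       * (2 * h + 1) * (1 / (h + h' + 1))) := by
  have key : ∀ l, cf 2 l h' = (-1) ^ (l + h') * ((2 * l + 1) / (2 * h' + 1) * (l + h').choose (2 * h')) := by
    intro l
    unfold cf
    have := choose_rel l h'
    have h0 : (2 * h' + 1 : ℚ) ≠ 0 := by positivity
    field_simp
    linear_combination 2 * this
  have hpos : (h + h' + 1 : ℚ) ≠ 0 := by positivity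
  have h0 : (2 * h' + 1 : ℚ) ≠ 0 := by positivity
  have h1 : (2 * h + 1 : ℚ) ≠ 0 := by positivity
  induction n with
  | zero =>
    rw [Nat.choose_eq_zero_of_lt (by omega : 0 + h < 2 * h + 1)]
    simp
  | succ n ih =>
    rw [sum_range_succ, ih, key]
    unfold cf
    have a1 := choose_rel n h
    have a2 := choose_rel n h'
    have b1 : ((n + 1 + h).choose (2 * h + 1) : ℚ) = (n + h).choose (2 * h) + (n + h).choose (2 * h + 1) := by
      rw [show n + 1 + h = n + h + 1 by ring, Nat.choose_succ_succ]; push_cast; rfl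
    have b2 : ((n + 1 + h').choose (2 * h' + 1) : ℚ) = (n + h').choose (2 * h') + (n + h').choose (2 * h' + 1) := by
      rw [show n + 1 + h' = n + h' + 1 by ring, Nat.choose_succ_succ]; push_cast; rfl
    rw [b1, b2]
    have c1 : ((n + h).choose (2 * h + 1) : ℚ) = (n + h).choose (2 * h) * (n - h) / (2 * h + 1) := by
      rw [← a1]; field_simp
    have c2 : ((n + h').choose (2 * h' + 1) : ℚ) = (n + h').choose (2 * h') * (n - h') / (2 * h' + 1) := by
      rw [← a2]; field_simp
    rw [c1, c2]
    have e : ((-1 : ℚ) ^ n) * (-1) ^ n = 1 := by rw [← mul_pow]; simp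
    simp only [pow_add]
    generalize ((n + h).choose (2 * h) : ℚ) = α
    generalize ((n + h').choose (2 * h') : ℚ) = β
    have e' : (-1 : ℚ) ^ n * (-1) ^ h * (α + 0 * (α * (↑n - ↑h) / (2 * ↑h + 1))) * ((-1) ^ n * (-1) ^ h' * ((2 * ↑n + 1) / (2 * ↑h' + 1) * β)) = ((-1) ^ h * (-1) ^ h' * α * ( ((2 * ↑n + 1) / (2 * ↑h' + 1) * β))) := by
      linear_combination ((-1) ^ h * (-1) ^ h' * α * ( ((2 * ↑n + 1) / (2 * ↑h' + 1) * β))) * e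
    rw [e']
    field_simp
    ring

theorem algMain (n m t : ℕ) (j : Fin m → Fin n) (c : Fin t → Fin n)
    (hb : Function.Bijective (Sum.elim j c)) :
    ∑ p : Fin m ↪o Fin n, ((Gm n 1).submatrix j p).det * ((Gm n (-1)).submatrix j p).det
    = ((∏ i, ((n + c i : ℕ).choose (2 * c i + 1) : ℚ)) *
      ∏ p ∈ univ.filter (fun p : Fin t × Fin t => p.1 < p.2),
        (((c p.2 : ℕ) : ℚ) - (c p.1 : ℕ)) / (((c p.1 : ℕ) : ℚ) + (c p.2 : ℕ) + 1)) ^ 2 := by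
  have h1 := cauchyBinet ((Gm n 1).submatrix j id) ((Gm n (-1)).submatrix j id)
  simp only [submatrix_submatrix, Function.comp_id, Function.id_comp] at h1
  rw [← h1]
  let e : Fin m ⊕ Fin t ≃ Fin n := Equiv.ofBijective _ hb
  let K := Gm n 1 * (Gm n (-1))ᵀ
  let L := (Cm n 0)ᵀ * Cm n 2
  have hG1 := mul_eq_one_comm.1 (Cm_Gm n 2 1 (by norm_num) (by norm_num))
  have hG2 := (Cm_Gm n 0 (-1) (by norm_num) (by norm_num))
  have hKL : K * L = 1 := by
    have : (Gm n (-1))ᵀ * (Cm n 0)ᵀ = 1 := by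
      rw [← Matrix.transpose_mul, hG2, Matrix.transpose_one]
    calc K * L = Gm n 1 * ((Gm n (-1))ᵀ * (Cm n 0)ᵀ) * Cm n 2 := by
            simp only [K, L, Matrix.mul_assoc]
      _ = 1 := by rw [this, Matrix.mul_one, hG1]
  have hK : K.det = 1 := by
    simp only [K, Matrix.det_mul, Matrix.det_transpose]
    rw [Gm_det n 2 1 (by norm_num) (by norm_num), Gm_det n 0 (-1) (by norm_num) (by norm_num), one_mul]
  have hJ := jacobi (K.submatrix e e) (L.submatrix e e) (by
    rw [Matrix.submatrix_mul_equiv, hKL, Matrix.submatrix_one_equiv])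
  rw [Matrix.det_submatrix_equiv_self, hK, one_mul] at hJ
  have e1 : ((Gm n 1).submatrix j id * ((Gm n (-1)).submatrix j id)ᵀ) = (K.submatrix e e).toBlocks₁₁ := by
    ext i i'
    simp [K, Matrix.mul_apply, toBlocks₁₁, e]
  rw [e1, ← hJ]
  have e2 : (L.submatrix e e).toBlocks₂₂ = Matrix.of fun i i' =>
     ((-1) ^ (c i : ℕ) * ((n + c i : ℕ).choose (2 * c i + 1) : ℚ) * (2 * (c i : ℕ) + 1)) *
       (Matrix.of fun i i' => ((-1) ^ (c i' : ℕ) * ((n + c i' : ℕ).choose (2 * c i' + 1) : ℚ)) *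
        (Matrix.of fun i i' : Fin t => 1 / ((((c i : ℕ) : ℚ) + 1/2) + (((c i' : ℕ) : ℚ) + 1/2))) i i') i i' := by
    ext i i'
    have := tele (c i) (c i') n
    rw [← Fin.sum_univ_eq_sum_range (fun l => cf 0 l (c i) * cf 2 l (c i'))] at this
    simp only [L, toBlocks₂₂, Matrix.of_apply, submatrix_apply, Matrix.mul_apply, transpose_apply, Cm]
    have E : ∀ x, e (Sum.inr x) = c x := fun x => rfl
    simp only [E]
    rw [this]
    rw [show (((c i : ℕ) : ℚ) + 1/2) + (((c i' : ℕ) : ℚ) + 1/2) = (c i : ℕ) + (c i' : ℕ) + 1 by ring]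
    ring
  rw [e2, Matrix.det_mul_column, Matrix.det_mul_row, cauchy_det _ _ _ (fun i j => by positivity)]
  have hsq : ∀ i, ((-1 : ℚ) ^ (c i : ℕ)) * (-1) ^ (c i : ℕ) = 1 := fun i => by rw [← mul_pow]; simp
  have hprod : ∏ p : Fin t × Fin t, ((((c p.1 : ℕ) : ℚ) + 1/2) + (((c p.2 : ℕ) : ℚ) + 1/2)) =
      (∏ i, (2 * ((c i : ℕ) : ℚ) + 1)) *
        (∏ p ∈ univ.filter (fun p : Fin t × Fin t => p.1 < p.2), (((c p.1 : ℕ) : ℚ) + (c p.2 : ℕ) + 1)) ^ 2 := by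
    rw [← prod_filter_mul_prod_filter_not univ (fun p : Fin t × Fin t => p.1 = p.2)]
    congr 1
    · symm
      refine Finset.prod_bij (fun i _ => (i, i)) (by simp) (by simp) ?_ ?_
      · rintro ⟨x, y⟩ h
        simp at h
        exact ⟨x, by simp, by simp [h]⟩
      · intro i _
        simp; ring
    · rw [← prod_filter_mul_prod_filter_not (univ.filter _) (fun p : Fin t × Fin t => p.1 < p.2), sq]
      simp only [filter_filter]
      congr 1
      · refine prod_congr ?_ ?_
        · ext p; simp; exact fun h => ne_of_lt h
        · intro p _; ring
      · refine Finset.prod_bij (fun p _ => (p.2, p.1)) ?_ ?_ ?_ ?_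
        · rintro ⟨x, y⟩ h; simp at h ⊢; exact lt_of_le_of_ne h.2 (Ne.symm h.1)
        · rintro ⟨x, y⟩ _ ⟨z, w⟩ _ h; simp at h ⊢; tauto
        · rintro ⟨x, y⟩ h; simp at h; exact ⟨(y, x), by simp; exact ⟨ne_of_gt h, h.le⟩, rfl⟩
        · rintro ⟨x, y⟩ _; simp; ring
  rw [hprod]
  have hne : ∏ i, (2 * ((c i : ℕ) : ℚ) + 1) ≠ 0 := by
    refine prod_ne_zero_iff.2 fun i _ => by positivity
  have hne2 : (∏ p ∈ univ.filter (fun p : Fin t × Fin t => p.1 < p.2), (((c p.1 : ℕ) : ℚ) + (c p.2 : ℕ) + 1)) ≠ 0 := by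
    refine prod_ne_zero_iff.2 fun i _ => by positivity
  simp only [prod_mul_distrib, prod_div_distrib]
  have hs2 : (∏ i, (-1 : ℚ) ^ (c i : ℕ)) * (∏ i, (-1 : ℚ) ^ (c i : ℕ)) = 1 := by
    rw [← prod_mul_distrib]; exact prod_eq_one fun i _ => hsq i
  have hd : ∏ x ∈ univ.filter (fun p : Fin t × Fin t => p.1 < p.2), (((c x.2 : ℕ) : ℚ) + 1/2 - (((c x.1 : ℕ) : ℚ) + 1/2)) =
    ∏ x ∈ univ.filter (fun p : Fin t × Fin t => p.1 < p.2), (((c x.2 : ℕ) : ℚ) - (c x.1 : ℕ)) :=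
    prod_congr rfl fun _ _ => by ring
  rw [hd]
  generalize (∏ i, (-1 : ℚ) ^ (c i : ℕ)) = S at hs2 ⊢
  field_simp
  linear_combination (∏ x, ((n + c x : ℕ).choose (2 * c x + 1) : ℚ)) ^ 2 * (∏ x ∈ univ.filter (fun p : Fin t × Fin t => p.1 < p.2), (((c x.2 : ℕ) : ℚ) - (c x.1 : ℕ))) ^ 2 * hs2



def stepN (N : Finset ℤ → ℕ) (S : Finset ℤ) : ℕ :=
  ∑ E ∈ S.powerset, if Disjoint (S \ E) (E.image (· + 1)) then N ((S \ E) ∪ E.image (· + 1)) else 0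

def insN (m : ℤ) (N : Finset ℤ → ℕ) (S : Finset ℤ) : ℕ :=
  if m ∈ S ∧ m + 1 ∈ S then N (S \ {m, m + 1}) else 0

def Top : (ℤ → ℚ) →ₗ[ℚ] (ℤ → ℚ) where
  toFun f y := f y + f (y + 1)
  map_add' f g := by funext y; simp; ring
  map_smul' c f := by funext y; simp; ring

def dl (m : ℤ) (y : ℤ) : ℚ := if y = m then 1 else 0

def Good (N : Finset ℤ → ℕ) (L : Multiset (ℤ → ℚ)) : Prop :=
  ∃ (n : ℕ) (v : Fin n → ℤ → ℚ) (ε : ℚ), (univ : Finset (Fin n)).val.map v = L ∧ (ε = 1 ∨ ε = -1) ∧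
    (∀ x : Fin n → ℤ, StrictMono x →
      (N (univ.image x) : ℚ) = ε * (Matrix.of fun r s => v r (x s)).det) ∧
    ∀ S, S.card ≠ n → N S = 0

theorem good_init (b : ℕ) : Good (fun S => if S = Ico 0 (2 * b : ℤ) then 1 else 0)
    ((Ico 0 (2 * b : ℤ)).val.map dl) := by
  refine ⟨2 * b, fun r => dl (r : ℕ), 1, ?_, Or.inl rfl, ?_, ?_⟩
  · have : (Ico 0 (2 * b : ℤ)) = (univ : Finset (Fin (2 * b))).image (fun r : Fin (2 * b) => ((r : ℕ) : ℤ)) := by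
      ext z
      simp only [mem_Ico, mem_image, mem_univ, true_and]
      constructor
      · rintro ⟨h1, h2⟩
        exact ⟨⟨z.toNat, by omega⟩, by simp; omega⟩
      · rintro ⟨r, rfl⟩
        have := r.2
        omega
    rw [this, Finset.image_val_of_injOn, Multiset.map_map]
    · rfl
    · intro r _ r' _ h
      simpa [Fin.ext_iff] using h
  · intro x hx
    by_cases h : univ.image x = Ico 0 (2 * b : ℤ)
    · simp only [if_pos h]
      have hxe : x = fun s : Fin (2 * b) => ((s : ℕ) : ℤ) := by
        apply (StrictMono.range_inj hx (by intro s t hst; simpa using hst)).1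
        have h' := congrArg (fun S : Finset ℤ => (S : Set ℤ)) h
        simp only [coe_image, coe_univ, Set.image_univ] at h'
        rw [h']
        ext z
        simp only [coe_Ico, Set.mem_Ico, Set.mem_range]
        constructor
        · rintro ⟨h1, h2⟩
          exact ⟨⟨z.toNat, by omega⟩, by simp; omega⟩
        · rintro ⟨r, rfl⟩
          have := r.2
          omega
      have : (Matrix.of fun r s : Fin (2 * b) => dl (r : ℕ) (x s)) = 1 := by
        ext r s
        simp [hxe, dl, Matrix.one_apply, Fin.ext_iff, eq_comm]
      rw [this]; simp
    · simp only [if_neg h]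
      have : ∃ s, x s ∉ Ico 0 (2 * b : ℤ) := by
        by_contra hc
        push Not at hc
        apply h
        apply Finset.eq_of_subset_of_card_le
        · intro z hz
          obtain ⟨s, _, rfl⟩ := mem_image.1 hz
          exact hc s
        · rw [card_image_of_injective _ hx.injective]; simp
      obtain ⟨s, hs⟩ := this
      rw [Matrix.det_eq_zero_of_column_eq_zero s]
      · simp
      · intro r
        simp only [Matrix.of_apply, dl]
        rw [if_neg]
        intro h
        apply hs
        rw [h, mem_Ico]
        have := r.2
        omega
  · intro S hS
    simp only
    rw [if_neg]
    rintro rfl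
    simp at hS
    omega

theorem good_step {N : Finset ℤ → ℕ} {L : Multiset (ℤ → ℚ)} (h : Good N L) :
    Good (stepN N) (L.map Top) := by
  obtain ⟨n, v, ε, hv, hε, hN, hN0⟩ := h
  refine ⟨n, fun r => Top (v r), ε, ?_, hε, ?_, ?_⟩
  · rw [← hv, Multiset.map_map]; rfl
  · intro x hx
    have e1 : (Matrix.of fun r s => Top (v r) (x s)).det =
        ∑ s : Finset (Fin n), (Matrix.of fun r k => v r (x k + if k ∈ s then 1 else 0)).det := by
      rw [← Matrix.det_transpose]
      have : (Matrix.of fun r s => Top (v r) (x s))ᵀ =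
        (fun s r => v r (x s + 1)) + (fun s r => v r (x s)) := by
        ext r s
        simp [Top, add_comm]
      rw [this]
      change Matrix.detRowAlternating _ = _
      rw [← AlternatingMap.coe_multilinearMap, MultilinearMap.map_add_univ]
      refine sum_congr rfl fun s _ => ?_
      rw [← Matrix.det_transpose]
      change Matrix.detRowAlternating _ = Matrix.detRowAlternating _
      congr 1
      funext k r
      by_cases hk : k ∈ s <;> simp [hk]
    rw [e1]
    unfold stepN
    push_cast
    rw [mul_sum]
    symm
    refine Finset.sum_bij (fun s _ => s.image x) ?_ ?_ ?_ ?_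
    · intro s _
      rw [mem_powerset]
      exact image_subset_image (subset_univ s)
    · intro s _ t _ hst
      exact image_injective hx.injective hst
    · intro E hE
      rw [mem_powerset, subset_image_iff] at hE
      obtain ⟨s, _, rfl⟩ := hE
      exact ⟨s, by simp, rfl⟩
    · intro s _
      have hsd : univ.image x \ s.image x = (univ \ s).image x := by
        rw [image_sdiff _ _ hx.injective]
      have hun : (univ.image x \ s.image x) ∪ (s.image x).image (· + 1) =
          univ.image (fun k => x k + if k ∈ s then 1 else 0) := by
        rw [hsd]
        ext z
        simp only [mem_union, mem_image, mem_sdiff, mem_univ, true_and]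
        constructor
        · rintro (⟨k, hk, rfl⟩ | ⟨_, ⟨k, hk, rfl⟩, rfl⟩)
          · exact ⟨k, by simp [hk]⟩
          · exact ⟨k, by simp [hk]⟩
        · rintro ⟨k, rfl⟩
          by_cases hk : k ∈ s
          · right; exact ⟨_, ⟨k, hk, rfl⟩, by simp [hk]⟩
          · left; exact ⟨k, hk, by simp [hk]⟩
      split_ifs with hd
      · rw [hun, hN]
        intro k l hkl
        have h1 := hx hkl
        by_contra hc
        simp only at hc
        have hk : k ∈ s := by
          by_contra hk
          simp only [hk, if_false] at hc
          split_ifs at hc <;> omega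
        have hl : l ∉ s := by
          intro hl
          simp only [hk, hl, if_true] at hc
          omega
        simp only [hk, hl, if_true, if_false] at hc
        have h2 : x l = x k + 1 := by omega
        rw [Finset.disjoint_left] at hd
        apply hd (a := x l)
        · rw [hsd]; exact mem_image_of_mem _ (by simp [hl])
        · rw [h2]
          exact mem_image_of_mem _ (mem_image_of_mem _ hk)
      · rw [Finset.not_disjoint_iff] at hd
        obtain ⟨z, hz1, hz2⟩ := hd
        rw [hsd] at hz1
        simp only [mem_image, mem_sdiff, mem_univ, true_and] at hz1 hz2
        obtain ⟨l, hl, rfl⟩ := hz1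
        obtain ⟨_, ⟨k, hk, rfl⟩, hkl⟩ := hz2
        rw [Matrix.det_zero_of_column_eq (i := k) (j := l)]
        · simp
        · rintro rfl; exact hl hk
        · intro r
          simp [hk, hl, hkl]
  · intro S hS
    unfold stepN
    refine sum_eq_zero fun E hE => ?_
    rw [mem_powerset] at hE
    split_ifs with hd
    · apply hN0
      rw [card_union_of_disjoint hd, card_image_of_injective _ (add_left_injective 1),
        card_sdiff_of_subset hE]
      have := card_le_card hE
      omega
    · rfl

theorem map_cons_univ {α : Type*} {n : ℕ} (x : α) (v : Fin n → α) :
    (univ : Finset (Fin (n + 1))).val.map (Fin.cons x v : Fin (n + 1) → α) = x ::ₘ univ.val.map v := by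
  rw [Fin.univ_succ, Finset.cons_val, Finset.map_val, Multiset.map_cons, Multiset.map_map]
  rfl

theorem good_ins {N : Finset ℤ → ℕ} {L : Multiset (ℤ → ℚ)} (h : Good N L) (m : ℤ) :
    Good (insN m N) (dl m ::ₘ dl (m + 1) ::ₘ L) := by
  obtain ⟨n, v, ε, hv, hε, hN, hN0⟩ := h
  refine ⟨n + 2, Fin.cons (dl m) (Fin.cons (dl (m + 1)) v), ε, ?_, hε, ?_, ?_⟩
  · rw [← hv]
    rw [map_cons_univ, map_cons_univ]
  · intro x hx
    unfold insN
    split_ifs with hm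
    · obtain ⟨hm1, hm2⟩ := hm
      simp only [mem_image, mem_univ, true_and] at hm1 hm2
      obtain ⟨p, hp⟩ := hm1
      obtain ⟨p', hp'⟩ := hm2
      have hpp : p < p' := by
        rw [← hx.lt_iff_lt]; omega
      have hpp' : (p' : ℕ) = p + 1 := by
        by_contra hc
        have h1 : (p : ℕ) + 1 < p' := by
          have : (p : ℕ) < p' := hpp
          omega
        have h2 := hx (show p < ⟨p + 1, by omega⟩ by simp [Fin.lt_def])
        have h3 := hx (show (⟨p + 1, by omega⟩ : Fin (n + 2)) < p' by simp [Fin.lt_def, h1])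
        omega
      have hpn : (p : ℕ) < n + 1 := by have := p'.2; omega
      let j : Fin (n + 1) := ⟨p, hpn⟩
      have hj : p.succAbove j = p' := by
        rw [Fin.succAbove_of_le_castSucc]
        · ext; simp [j, hpp']
        · simp [j, Fin.le_def]
      rw [Matrix.det_succ_row_zero, Finset.sum_eq_single p]
      · rw [Matrix.det_succ_row_zero, Finset.sum_eq_single j]
        · have hx' : StrictMono (fun s => x (p.succAbove (j.succAbove s))) :=
            hx.comp ((Fin.strictMono_succAbove p).comp (Fin.strictMono_succAbove j))
          have him : univ.image x \ {m, m + 1} = univ.image (fun s => x (p.succAbove (j.succAbove s))) := by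
            ext z
            simp only [mem_sdiff, mem_image, mem_univ, true_and, mem_insert, mem_singleton]
            constructor
            · rintro ⟨⟨k, rfl⟩, hk⟩
              have k1 : k ≠ p := by rintro rfl; exact hk (Or.inl hp)
              obtain ⟨k', rfl⟩ := Fin.exists_succAbove_eq k1
              have k2 : k' ≠ j := by rintro rfl; rw [hj] at hk; exact hk (Or.inr hp')
              obtain ⟨k'', rfl⟩ := Fin.exists_succAbove_eq k2
              exact ⟨k'', rfl⟩
            · rintro ⟨k, rfl⟩
              refine ⟨⟨_, rfl⟩, ?_⟩
              rintro (h | h)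
              · rw [← hp] at h
                exact Fin.succAbove_ne _ _ (hx.injective h)
              · rw [← hp', ← hj] at h
                exact Fin.succAbove_ne _ _ (Fin.succAbove_right_injective (hx.injective h))
          rw [him, hN _ hx']
          have hs : ((-1 : ℚ) ^ (p : ℕ)) * (-1) ^ (p : ℕ) = 1 := by rw [← mul_pow]; simp
          have hM : ((Matrix.of fun r s => (Fin.cons (dl m) (Fin.cons (dl (m + 1)) v) : Fin (n+2) → ℤ → ℚ) r (x s)).submatrix
             Fin.succ p.succAbove).submatrix Fin.succ j.succAbove =
              Matrix.of fun r s => v r (x (p.succAbove (j.succAbove s))) := by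
            ext r s; simp
          rw [hM]
          simp only [submatrix_apply, Matrix.of_apply, Fin.cons_zero, Fin.cons_succ, hj, hp, hp', dl, if_true, j]
          linear_combination (-ε * (Matrix.of fun r s => v r (x (p.succAbove (j.succAbove s)))).det) * hs
        · intro k _ hk
          simp only [submatrix_apply, Matrix.of_apply, Fin.cons_zero, Fin.cons_succ, dl]
          rw [if_neg]
          · simp
          · intro h
            rw [← hp', ← hj] at h
            exact hk (Fin.succAbove_right_injective (hx.injective h))
        · simp
      · intro k _ hk
        simp only [Matrix.of_apply, Fin.cons_zero, dl]
        rw [if_neg]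
        · simp
        · intro h
          exact hk (hx.injective (h.trans hp.symm))
      · simp
    · rw [not_and_or] at hm
      symm
      rw [Nat.cast_zero]
      apply mul_eq_zero_of_right
      rcases hm with hm | hm
      · apply Matrix.det_eq_zero_of_row_eq_zero 0
        intro s
        simp only [Matrix.of_apply, Fin.cons_zero, dl]
        rw [if_neg]
        rintro h; exact hm (h ▸ mem_image_of_mem _ (mem_univ _))
      · apply Matrix.det_eq_zero_of_row_eq_zero (Fin.succ 0)
        intro s
        simp only [Matrix.of_apply, Fin.cons_zero, Fin.cons_succ, dl]
        rw [if_neg]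
        rintro h; exact hm (h ▸ mem_image_of_mem _ (mem_univ _))
  · intro S hS
    unfold insN
    split_ifs with hm
    · apply hN0
      have : ({m, m + 1} : Finset ℤ) ⊆ S := by
        intro z hz
        simp only [mem_insert, mem_singleton] at hz
        rcases hz with rfl | rfl
        exacts [hm.1, hm.2]
      rw [card_sdiff_of_subset this, card_pair (by omega)]
      have := card_le_card this
      rw [card_pair (by omega)] at this
      omega
    · rfl



def Nseq (b : ℕ) (K : Finset ℕ) : ℕ → Finset ℤ → ℕ
  | 0 => fun S => if S = Ico 0 (2 * b : ℤ) then 1 else 0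
  | i + 1 => if (i + 1) % 2 = 0 ∧ (i + 1) / 2 ∈ K then
      insN ((b : ℤ) - ((i + 1) / 2 : ℕ) - 1) (stepN (Nseq b K i)) else stepN (Nseq b K i)

def Lseq (b s : ℕ) (k : Fin s → ℕ) (t : ℕ) : Multiset (ℤ → ℚ) :=
  (∑ l : Fin b, ({(Top ^ (2 * t)) (dl (b + (l : ℕ)))} + {(Top ^ (2 * t)) (dl (b - 1 - (l : ℕ)))} : Multiset (ℤ → ℚ)))
  + ∑ i : Fin s, if k i ≤ t then ({(Top ^ (2 * (t - k i))) (dl (b - k i))} +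
    {(Top ^ (2 * (t - k i))) (dl (b - k i - 1))} : Multiset (ℤ → ℚ)) else 0

theorem map_sum' {ι α β : Type*} (S : Finset ι) (F : ι → Multiset α) (f : α → β) :
    (∑ i ∈ S, F i).map f = ∑ i ∈ S, (F i).map f :=
  map_sum (Multiset.mapAddMonoidHom f) F S

theorem Lseq_zero (b s : ℕ) (k : Fin s → ℕ) (hk : ∀ i, 1 ≤ k i) :
    Lseq b s k 0 = (Ico 0 (2 * b : ℤ)).val.map dl := by
  unfold Lseq
  have h0 : ∑ i : Fin s, (if k i ≤ 0 then ({(Top ^ (2 * (0 - k i))) (dl (b - k i))} +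
    {(Top ^ (2 * (0 - k i))) (dl (b - k i - 1))} : Multiset (ℤ → ℚ)) else 0) = 0 := by
    refine sum_eq_zero fun i _ => ?_
    rw [if_neg]
    have := hk i
    omega
  rw [h0, add_zero, sum_add_distrib]
  simp only [mul_zero, pow_zero, Module.End.one_apply]
  have e1 : (Ico 0 (2 * b : ℤ)) = (Ico (b : ℤ) (2 * b : ℤ)).disjUnion (Ico 0 (b : ℤ)) (by
      rw [Finset.disjoint_left]; intro x; simp only [mem_Ico]; omega) := by
    ext x; simp only [mem_Ico, mem_disjUnion]; omega
  have e2 : (Ico (b : ℤ) (2 * b : ℤ)) = (univ : Finset (Fin b)).image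
      (fun l : Fin b => (b : ℤ) + (l : ℕ)) := by
    ext z
    simp only [mem_Ico, mem_image, mem_univ, true_and]
    constructor
    · rintro ⟨h1, h2⟩
      exact ⟨⟨(z - b).toNat, by omega⟩, by simp; omega⟩
    · rintro ⟨r, rfl⟩
      have := r.2
      omega
  have e3 : (Ico 0 (b : ℤ)) = (univ : Finset (Fin b)).image
      (fun l : Fin b => (b : ℤ) - 1 - (l : ℕ)) := by
    ext z
    simp only [mem_Ico, mem_image, mem_univ, true_and]
    constructor
    · rintro ⟨h1, h2⟩
      exact ⟨⟨(b - 1 - z).toNat, by omega⟩, by simp; omega⟩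
    · rintro ⟨r, rfl⟩
      have := r.2
      omega
  rw [e1, Finset.disjUnion_val, e2, e3, Multiset.map_add,
    Finset.image_val_of_injOn (fun x _ y _ h => by simpa [Fin.ext_iff] using h),
    Finset.image_val_of_injOn (fun x _ y _ h => by simpa [Fin.ext_iff] using h), Multiset.map_map,
    Multiset.map_map]
  congr 1
  · exact Multiset.sum_map_singleton (Multiset.map (fun l : Fin b => dl (b + (l : ℕ))) univ.val) ▸ by
      rw [Multiset.map_map]; rfl
  · exact Multiset.sum_map_singleton (Multiset.map (fun l : Fin b => dl (b - 1 - (l : ℕ))) univ.val) ▸ by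
      rw [Multiset.map_map]; rfl

theorem Top_succ (r : ℕ) (f : ℤ → ℚ) : Top (Top ((Top ^ (2 * r)) f)) = (Top ^ (2 * (r + 1))) f := by
  rw [show 2 * (r + 1) = 2 * r + 1 + 1 by ring, pow_succ', pow_succ']
  rfl

theorem Lseq_succ (b s : ℕ) (k : Fin s → ℕ) (t : ℕ) :
    Lseq b s k (t + 1) = ((Lseq b s k t).map Top).map Top +
      ∑ i : Fin s, if k i = t + 1 then ({dl (b - (t + 1 : ℕ))} +
    {dl (b - (t + 1 : ℕ) - 1)} : Multiset (ℤ → ℚ)) else 0 := by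
  unfold Lseq
  simp only [Multiset.map_add, map_sum', Multiset.map_singleton, Top_succ]
  rw [add_assoc]
  congr 1
  rw [← sum_add_distrib]
  refine sum_congr rfl fun i _ => ?_
  by_cases h1 : k i ≤ t
  · rw [if_pos h1, if_pos (by omega), if_neg (by omega)]
    simp only [Multiset.map_add, Multiset.map_singleton, Top_succ, add_zero]
    rw [show t - k i + 1 = t + 1 - k i by omega]
  · by_cases h2 : k i = t + 1
    · rw [if_neg h1, if_pos h2, if_pos (by omega), h2]
      simp
    · rw [if_neg h1, if_neg h2, if_neg (by omega)]
      simp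

theorem good_seq (b s : ℕ) (k : Fin s → ℕ) (hinj : Function.Injective k) (hk : ∀ i, 1 ≤ k i) (t : ℕ) :
    Good (Nseq b (univ.image k) (2 * t)) (Lseq b s k t) := by
  induction t with
  | zero =>
    rw [Lseq_zero b s k hk]
    exact good_init b
  | succ t ih =>
    rw [Lseq_succ]
    have h1 : Nseq b (univ.image k) (2 * t + 1) = stepN (Nseq b (univ.image k) (2 * t)) := by
      rw [Nseq, if_neg (by omega)]
    have h2 := good_step (good_step ih)
    rw [← h1] at h2
    rw [show 2 * (t + 1) = (2 * t + 1) + 1 by ring, Nseq]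
    have e : (2 * t + 1 + 1) / 2 = t + 1 := by omega
    by_cases hK : t + 1 ∈ univ.image k
    · rw [if_pos ⟨by omega, by rwa [e]⟩, e]
      obtain ⟨i, _, hi⟩ := mem_image.1 hK
      rw [Finset.sum_eq_single i]
      · rw [if_pos hi]
        have := good_ins h2 ((b : ℤ) - (t + 1 : ℕ) - 1)
        rw [sub_add_cancel] at this
        convert this using 1
        rw [← Multiset.singleton_add, ← Multiset.singleton_add, add_comm]
        abel
      · intro j _ hj
        rw [if_neg]
        intro h
        exact hj (hinj (h.trans hi.symm))
      · simp
    · rw [if_neg (by rw [e]; tauto)]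
      rw [Finset.sum_eq_zero, add_zero]
      · exact h2
      · intro i _
        rw [if_neg]
        intro h
        exact hK (h ▸ mem_image_of_mem _ (mem_univ _))

theorem exists_equiv {α β γ : Type*} [Fintype α] [Fintype β] (f : α → γ) (g : β → γ)
    (h : (univ : Finset α).val.map f = (univ : Finset β).val.map g) : ∃ e : α ≃ β, ∀ x, g (e x) = f x := by
  classical
  have hc : ∀ c, Nonempty ({x // f x = c} ≃ {y // g y = c}) := by
    intro c
    rw [← Fintype.card_eq, Fintype.card_subtype, Fintype.card_subtype]
    have := congrArg (Multiset.count c) h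
    rw [Multiset.count_map, Multiset.count_map] at this
    simp only [eq_comm (a := c)] at this
    exact this
  have e := fun c => Classical.choice (hc c)
  exact ⟨Equiv.ofFiberEquiv e, Equiv.ofFiberEquiv_map e⟩

def upv (a b s : ℕ) (k : Fin s → ℕ) : Fin (b + s) → ℤ → ℚ :=
  Fin.addCases (fun l => (Wop ^ a) (dl (l : ℕ))) (fun i => (Wop ^ (a - k i)) (dl 0))

def upT (a b s : ℕ) (k : Fin s → ℕ) : Fin (b + s) → ℤ → ℚ :=
  Fin.addCases (fun l => (Top ^ (2 * a)) (dl (b + (l : ℕ)))) (fun i => (Top ^ (2 * (a - k i))) (dl (b - k i)))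

def dnT (a b s : ℕ) (k : Fin s → ℕ) : Fin (b + s) → ℤ → ℚ :=
  Fin.addCases (fun l => (Top ^ (2 * a)) (dl (b - 1 - (l : ℕ)))) (fun i => (Top ^ (2 * (a - k i))) (dl (b - k i - 1)))

theorem Top_W (r : ℕ) (f : ℤ → ℚ) (c : ℤ) : ∀ z, (Top ^ (2 * r)) f z = (Wop ^ r) (fun y => f (y + c)) (z + r - c) := by
  induction r with
  | zero => intro z; simp
  | succ r ih =>
    intro z
    rw [← Top_succ, pow_succ']
    change ((Top ^ (2 * r)) f z + (Top ^ (2 * r)) f (z + 1)) + ((Top ^ (2 * r)) f (z + 1) + (Top ^ (2 * r)) f (z + 1 + 1)) =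
      Wop ((Wop ^ r) _) _
    rw [ih, ih, ih]
    change _ = (Wop ^ r) (fun y => f (y + c)) _ + 2 * (Wop ^ r) (fun y => f (y + c)) _ + (Wop ^ r) (fun y => f (y + c)) _
    push_cast
    rw [show z + (r + 1 : ℤ) - c - 1 = z + r - c by ring, show z + 1 + r - c = z + (r + 1 : ℤ) - c by ring,
      show z + 1 + 1 + r - c = z + (r + 1 : ℤ) - c + 1 by ring]
    ring

theorem W_refl (r : ℕ) (f : ℤ → ℚ) : ∀ y, (Wop ^ r) f (-1 - y) = (Wop ^ r) (fun y => f (-1 - y)) y := by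
  induction r with
  | zero => intro z; simp
  | succ r ih =>
    intro z
    rw [pow_succ']
    change (Wop ^ r) f _ + 2 * (Wop ^ r) f _ + (Wop ^ r) f _ = (Wop ^ r) (fun y => f (-1 - y)) _ + 2 * (Wop ^ r) (fun y => f (-1 - y)) _ + (Wop ^ r) (fun y => f (-1 - y)) _
    rw [← ih, ← ih, ← ih, show -1 - z - 1 = -1 - (z + 1) by ring, show -1 - z + 1 = -1 - (z - 1) by ring]
    ring

theorem Wcongr (r : ℕ) {f g : ℤ → ℚ} {y z : ℤ} (h : f = g) (h' : y = z) :
    (Wop ^ r) f y = (Wop ^ r) g z := by rw [h, h']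

theorem upT_eq (a b s : ℕ) (k : Fin s → ℕ) (hka : ∀ i, k i ≤ a) (r : Fin (b + s)) (y : ℤ) :
    upT a b s k r (y + b - a) = upv a b s k r y := by
  refine Fin.addCases (fun l => ?_) (fun i => ?_) r
  · simp only [upT, upv, Fin.addCases_left]
    rw [Top_W a _ b]
    refine Wcongr _ ?_ ?_
    · funext z; simp only [dl]
      congr 1
      simp only [eq_iff_iff]
      omega
    · ring
  · simp only [upT, upv, Fin.addCases_right]
    rw [Top_W _ _ (b - k i)]
    refine Wcongr _ ?_ ?_
    · funext z; simp only [dl]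
      congr 1
      simp only [eq_iff_iff]
      omega
    · have := hka i
      push_cast [this]
      ring

theorem dnT_eq (a b s : ℕ) (k : Fin s → ℕ) (hka : ∀ i, k i ≤ a) (r : Fin (b + s)) (y : ℤ) :
    dnT a b s k r (y + b - a) = upv a b s k r (-1 - y) := by
  refine Fin.addCases (fun l => ?_) (fun i => ?_) r
  · simp only [dnT, upv, Fin.addCases_left]
    rw [Top_W a _ b, W_refl]
    refine Wcongr _ ?_ ?_
    · funext z; simp only [dl]
      congr 1
      simp only [eq_iff_iff]
      omega
    · ring
  · simp only [dnT, upv, Fin.addCases_right]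
    rw [Top_W _ _ (b - k i), W_refl]
    refine Wcongr _ ?_ ?_
    · funext z; simp only [dl]
      congr 1
      simp only [eq_iff_iff]
      omega
    · have := hka i
      push_cast [this]
      ring

theorem Lseq_final (a b s : ℕ) (k : Fin s → ℕ) (hka : ∀ i, k i ≤ a) :
    Lseq b s k a = (univ : Finset (Fin (b + s) ⊕ Fin (b + s))).val.map (Sum.elim (upT a b s k) (dnT a b s k)) := by
  have h : ∀ {α : Type} [Fintype α] (f : α → ℤ → ℚ), (univ : Finset α).val.map f = ∑ i, ({f i} : Multiset (ℤ → ℚ)) := by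
    intro α _ f
    conv_lhs => rw [← Multiset.sum_map_singleton ((univ : Finset α).val.map f), Multiset.map_map]
    rfl
  rw [h, Fintype.sum_sum_type, Fin.sum_univ_add, Fin.sum_univ_add]
  simp only [Sum.elim_inl, Sum.elim_inr, upT, dnT, Fin.addCases_left, Fin.addCases_right]
  unfold Lseq
  rw [sum_add_distrib]
  simp only [hka, if_true]
  rw [sum_add_distrib]
  abel



def Zm (b s : ℕ) (c : ℚ) : Matrix (Fin (b + s)) (Fin (b + s)) ℚ := fun r r' =>
  Fin.addCases (motive := fun _ => ℚ) (fun l => Fin.addCases (motive := fun _ => ℚ) (fun l' => cf c l l') (fun _ => 0) r')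
    (fun i => if r' = Fin.natAdd b i then 1 else 0) r

theorem Zm_det (b s : ℕ) (c : ℚ) : (Zm b s c).det = 1 := by
  rw [Matrix.det_of_lowerTriangular]
  · refine prod_eq_one fun r _ => ?_
    refine Fin.addCases (fun l => ?_) (fun i => ?_) r
    · simp [Zm, cf_diag]
    · simp [Zm]
  · intro r r' h
    have h : r < r' := h
    revert h
    refine Fin.addCases (fun l => ?_) (fun i => ?_) r <;> refine Fin.addCases (fun l' => ?_) (fun i' => ?_) r' <;> intro h
    · simp only [Zm, Fin.addCases_left]
      exact cf_zero _ _ _ h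
    · simp [Zm]
    · simp only [Zm, Fin.addCases_right]
      rw [if_neg]
      exact h.ne'
    · simp only [Zm, Fin.addCases_right]
      rw [if_neg]
      exact h.ne'

def jm (a b s : ℕ) (k : Fin s → ℕ) (hk : ∀ i, 1 ≤ k i) (hka : ∀ i, k i ≤ a) : Fin (b + s) → Fin (a + b) :=
  Fin.addCases (fun l => ⟨a + l, by omega⟩) (fun i => ⟨a - k i, by have := hk i; have := hka i; omega⟩)

theorem upv_pm (σ : ℚ) (r : ℕ) (l y : ℤ) :
    (Wop ^ r) (dl l) y + σ * (Wop ^ r) (dl l) (-1 - y) = (Wop ^ r) (dvec σ l) y := by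
  rw [W_refl]
  have : dvec σ l = dl l + σ • (fun y => dl l (-1 - y)) := by
    funext z
    simp only [dvec, dl, Pi.add_apply, Pi.smul_apply, smul_eq_mul]
    congr 2
    congr 1
    simp only [eq_iff_iff]
    omega
  rw [this, map_add, map_smul]
  rfl

theorem det_row (a b s : ℕ) (k : Fin s → ℕ) (hk : ∀ i, 1 ≤ k i) (hka : ∀ i, k i ≤ a) (σ : ℚ) (hσ : σ * σ = 1)
    (p : Fin (b + s) → Fin (a + b)) :
    (Matrix.of fun r t => upv a b s k r (p t : ℕ) + σ * upv a b s k r (-1 - (p t : ℕ))).det =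
      ((Gm (a + b) σ).submatrix (jm a b s k hk hka) p).det := by
  have : (Matrix.of fun r t => upv a b s k r (p t : ℕ) + σ * upv a b s k r (-1 - (p t : ℕ))) =
     Zm b s (1 + σ) * (Gm (a + b) σ).submatrix (jm a b s k hk hka) p := by
    ext r t
    rw [Matrix.mul_apply, Fin.sum_univ_add]
    refine Fin.addCases (fun l => ?_) (fun i => ?_) r
    · simp only [Zm, Matrix.of_apply, upv, upv_pm, Fin.addCases_left, Fin.addCases_right, jm, submatrix_apply, Gm,
        zero_mul, sum_const_zero, add_zero]
      conv_lhs => rw [dvec_expand (1 + σ) σ hσ rfl l b l.2, map_sum, Finset.sum_apply]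
      rw [← Fin.sum_univ_eq_sum_range (fun h => ((Wop ^ a) (cf (1 + σ) l h • (Wop ^ h) (dvec σ 0))) ((p t : ℕ) : ℤ))]
      refine sum_congr rfl fun h _ => ?_
      rw [map_smul, pow_add]
      rfl
    · simp only [Zm, Matrix.of_apply, upv, upv_pm, Fin.addCases_right, jm, submatrix_apply, Gm]
      rw [Finset.sum_eq_zero, Finset.sum_eq_single i]
      · simp
      · intro i' _ hi
        simp [hi]
      · simp
      · intro l _
        rw [if_neg, zero_mul]
        simp [Fin.ext_iff]
        omega
  rw [this, Matrix.det_mul, Zm_det, one_mul]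

/-- the symmetric boundary set -/
def Sp (a b m : ℕ) (p : Fin m → Fin (a + b)) : Finset ℤ :=
  univ.image (fun t => ((p t : ℕ) : ℤ) + b - a) ∪ univ.image (fun t => (-1 - ((p t : ℕ) : ℤ)) + b - a)

def gE (m : ℕ) : Fin m ⊕ Fin m ≃ Fin (m + m) :=
  (Equiv.sumComm _ _).trans ((Equiv.sumCongr Fin.revPerm (Equiv.refl _)).trans finSumFinEquiv)

theorem count1 (a b s : ℕ) (k : Fin s → ℕ) (hinj : Function.Injective k) (hk : ∀ i, 1 ≤ k i) (hka : ∀ i, k i ≤ a) :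
    (∃ ε : ℚ, (ε = 1 ∨ ε = -1) ∧ ∀ p : Fin (b + s) ↪o Fin (a + b), (Nseq b (univ.image k) (2 * a) (Sp a b (b + s) p) : ℚ) =
      ε * (((Gm (a + b) 1).submatrix (jm a b s k hk hka) p).det * ((Gm (a + b) (-1)).submatrix (jm a b s k hk hka) p).det))
     ∧ ∀ S, S.card ≠ (b + s) + (b + s) → Nseq b (univ.image k) (2 * a) S = 0 := by
  obtain ⟨n, v, ε, hv, hε, hN, hN0⟩ := good_seq b s k hinj hk a
  rw [Lseq_final a b s k hka] at hv
  obtain ⟨e, he⟩ := exists_equiv _ _ hv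
  have hn : n = (b + s) + (b + s) := by
    have := Fintype.card_congr e
    simpa using this
  subst hn
  refine ⟨⟨ε * (Equiv.Perm.sign ((gE (b + s)).symm.trans e.symm)  : ℤ), ?_, ?_⟩, hN0⟩
  · rcases Int.units_eq_one_or (Equiv.Perm.sign ((gE (b + s)).symm.trans e.symm)) with h | h <;> rw [h] <;>
    rcases hε with rfl | rfl <;> simp
  · intro p
    let x : Fin (b + s) ⊕ Fin (b + s) → ℤ := Sum.elim (fun t => ((p t : ℕ) : ℤ) + b - a)
      (fun t => (-1 - ((p t : ℕ) : ℤ)) + b - a)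
    have hx : StrictMono (x ∘ (gE (b + s)).symm) := by
      intro y z hyz
      obtain ⟨y, rfl⟩ := (gE (b + s)).surjective y
      obtain ⟨z, rfl⟩ := (gE (b + s)).surjective z
      simp only [Function.comp, Equiv.symm_apply_apply]
      rcases y with y | y <;> rcases z with z | z
      · have : y < z := (Fin.natAdd_lt_natAdd_iff (b + s)).1 hyz
        have := p.strictMono this
        simp only [x, Sum.elim_inl]
        have : (p y : ℕ) < p z := this
        omega
      · exfalso
        simp only [gE, Equiv.trans_apply, Equiv.sumComm_apply, Sum.swap_inl, Sum.swap_inr, Equiv.sumCongr_apply, Sum.map_inl,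
          Sum.map_inr, finSumFinEquiv_apply_left, finSumFinEquiv_apply_right, Fin.lt_def, Fin.val_natAdd, Fin.val_castAdd] at hyz
        have := (Fin.revPerm z).2
        omega
      · simp only [x, Sum.elim_inl, Sum.elim_inr]
        omega
      · have : z < y := by
          simp only [gE, Equiv.trans_apply, Equiv.sumComm_apply, Sum.swap_inl, Sum.swap_inr, Equiv.sumCongr_apply, Sum.map_inl,
          Sum.map_inr, finSumFinEquiv_apply_left, finSumFinEquiv_apply_right, Fin.lt_def, Fin.val_natAdd, Fin.val_castAdd, Fin.revPerm_apply, Fin.val_rev] at hyz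
          rw [Fin.lt_def]
          omega
        have := p.strictMono this
        simp only [x, Sum.elim_inr]
        have : (p z : ℕ) < p y := this
        omega
    have hS : Sp a b (b + s) p = univ.image (x ∘ (gE (b + s)).symm) := by
      ext z
      simp only [Sp, mem_union, mem_image, mem_univ, true_and, Function.comp]
      have := (gE (b + s)).symm.surjective.exists (p := fun y => x y = z)
      rw [← this]
      simp [x]
    rw [hS, hN _ hx, mul_assoc]
    congr 1
    let w : Fin (b + s) ⊕ Fin (b + s) → ℤ → ℚ := Sum.elim (upT a b s k) (dnT a b s k)
    have h1 : (Matrix.of fun r t => v r ((x ∘ (gE (b + s)).symm) t)) =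
        ((Matrix.of fun r t => w r (x t)).submatrix e e).submatrix id ((gE (b + s)).symm.trans e.symm) := by
      ext r t
      simp [w, he]
    rw [h1, Matrix.det_permute', Matrix.det_submatrix_equiv_self]
    congr 1
    let P : Matrix (Fin (b + s)) (Fin (b + s)) ℚ := Matrix.of fun r t => upv a b s k r (p t : ℕ)
    let Q : Matrix (Fin (b + s)) (Fin (b + s)) ℚ := Matrix.of fun r t => upv a b s k r (-1 - (p t : ℕ))
    have h2 : (Matrix.of fun r t => w r (x t)) = Matrix.fromBlocks P Q Q P := by
      ext r t
      rcases r with r | r <;> rcases t with t | t <;>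
        simp [w, x, P, Q, upT_eq a b s k hka, dnT_eq a b s k hka]
    rw [h2, fold_det, ← det_row a b s k hk hka 1 (by norm_num), ← det_row a b s k hk hka (-1) (by norm_num)]
    congr 2
    · ext r t; simp [P, Q]
    · ext r t; simp [P, Q]; ring

theorem Sp_inj (a b m : ℕ) (p p' : Fin m ↪o Fin (a + b)) (h : Sp a b m p = Sp a b m p') : p = p' := by
  have key : ∀ p p' : Fin m ↪o Fin (a + b), Sp a b m p = Sp a b m p' → ∀ t, ∃ t', p' t' = p t := by
    intro p p' h t
    have h1 : ((p t : ℕ) : ℤ) + b - a ∈ Sp a b m p := by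
      unfold Sp; rw [mem_union]; left; exact mem_image_of_mem _ (mem_univ t)
    rw [h] at h1
    unfold Sp at h1
    simp only [mem_union, mem_image, mem_univ, true_and] at h1
    rcases h1 with ⟨t', h1⟩ | ⟨t', h1⟩
    · exact ⟨t', by rw [Fin.ext_iff]; omega⟩
    · omega
  have : (p : Fin m → Fin (a + b)) = p' := by
    apply (StrictMono.range_inj p.strictMono p'.strictMono).1
    ext z
    constructor
    · rintro ⟨t, rfl⟩; exact key p p' h t
    · rintro ⟨t, rfl⟩; exact key p' p h.symm t
  exact DFunLike.coe_injective this

def symS (a b : ℕ) : Finset (Finset ℤ) :=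
  (Ico (-2 * a : ℤ) (2 * b)).powerset.filter (fun S => ∀ j ∈ S, 2 * (b : ℤ) - 2 * a - 1 - j ∈ S)

theorem count2 (a b s t : ℕ) (k : Fin s → ℕ) (hinj : Function.Injective k) (hk : ∀ i, 1 ≤ k i) (hka : ∀ i, k i ≤ a)
    (c : Fin t → Fin (a + b)) (hc : Function.Bijective (Sum.elim (jm a b s k hk hka) c)) :
    ((∑ S ∈ symS a b, Nseq b (univ.image k) (2 * a) S : ℕ) : ℚ) =
      ((∏ i, ((a + b + c i : ℕ).choose (2 * c i + 1) : ℚ)) *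
      ∏ p ∈ univ.filter (fun p : Fin t × Fin t => p.1 < p.2),
        (((c p.2 : ℕ) : ℚ) - (c p.1 : ℕ)) / ((c p.1 : ℕ) + (c p.2 : ℕ) + 1)) ^ 2 := by
  obtain ⟨⟨ε, hε, h1⟩, h0⟩ := count1 a b s k hinj hk hka
  rw [← algMain (a + b) (b + s) t (jm a b s k hk hka) c hc]
  have h2 : ∑ S ∈ symS a b, Nseq b (univ.image k) (2 * a) S =
      ∑ p : Fin (b + s) ↪o Fin (a + b), Nseq b (univ.image k) (2 * a) (Sp a b (b + s) p) := by
    symm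
    rw [← Finset.sum_image (s := univ) (g := fun p : Fin (b + s) ↪o Fin (a + b) => Sp a b (b + s) p)
      (f := fun S => Nseq b (univ.image k) (2 * a) S) (fun p _ p' _ h => Sp_inj a b _ p p' h)]
    apply Finset.sum_subset
    · intro S hS
      obtain ⟨p, _, rfl⟩ := mem_image.1 hS
      simp only [symS, mem_filter, mem_powerset]
      constructor
      · intro z hz
        simp only [Sp, mem_union, mem_image, mem_univ, true_and] at hz
        rw [mem_Ico]
        rcases hz with ⟨t, rfl⟩ | ⟨t, rfl⟩ <;> have := (p t).2 <;> omega
      · intro z hz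
        simp only [Sp, mem_union, mem_image, mem_univ, true_and] at hz ⊢
        rcases hz with ⟨t, rfl⟩ | ⟨t, rfl⟩
        · right; exact ⟨t, by ring⟩
        · left; exact ⟨t, by ring⟩
    · intro S hS hS'
      apply h0
      intro hcard
      apply hS'
      simp only [symS, mem_filter, mem_powerset] at hS
      obtain ⟨hSub, hsym⟩ := hS
      let P : Finset (Fin (a + b)) := univ.filter (fun x => ((x : ℕ) : ℤ) + b - a ∈ S)
      have hSP : S = P.image (fun x : Fin (a + b) => ((x : ℕ) : ℤ) + b - a) ∪ P.image (fun x : Fin (a + b) => (-1 - ((x : ℕ) : ℤ)) + b - a) := by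
        ext z
        simp only [mem_union, mem_image, P, mem_filter, mem_univ, true_and]
        constructor
        · intro hz
          have hz1 := mem_Ico.1 (hSub hz)
          by_cases h : 0 ≤ z - b + a
          · left
            refine ⟨⟨(z - b + a).toNat, by omega⟩, ?_, ?_⟩
            · convert hz using 1; simp; omega
            · simp; omega
          · right
            refine ⟨⟨(-1 - (z - b + a)).toNat, by omega⟩, ?_, ?_⟩
            · convert hsym z hz using 1; simp; omega
            · simp; omega
        · rintro (⟨x, hx, rfl⟩ | ⟨x, hx, rfl⟩)
          · exact hx
          · convert hsym _ hx using 1; ring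
      have hPc : P.card = b + s := by
        have := congrArg Finset.card hSP
        rw [card_union_of_disjoint, card_image_of_injective, card_image_of_injective, hcard] at this
        · omega
        · intro x y h; simp only [Fin.ext_iff] at *; omega
        · intro x y h; simp only [Fin.ext_iff] at *; omega
        · rw [Finset.disjoint_left]
          intro z h1 h2
          simp only [mem_image] at h1 h2
          obtain ⟨x, _, rfl⟩ := h1
          obtain ⟨y, _, h⟩ := h2
          omega
      refine mem_image.2 ⟨P.orderEmbOfFin hPc, mem_univ _, ?_⟩
      have hr : P = univ.image (P.orderEmbOfFin hPc) := by
        apply Finset.coe_injective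
        rw [coe_image, coe_univ, Set.image_univ, Finset.range_orderEmbOfFin]
      conv_rhs => rw [hSP, hr]
      rw [image_image, image_image]
      rfl
  rw [h2]
  push_cast
  have h3 : ∑ p : Fin (b + s) ↪o Fin (a + b), (Nseq b (univ.image k) (2 * a) (Sp a b (b + s) p) : ℚ) = ε *
      ∑ p : Fin (b + s) ↪o Fin (a + b), (((Gm (a + b) 1).submatrix (jm a b s k hk hka) p).det * ((Gm (a + b) (-1)).submatrix (jm a b s k hk hka) p).det) := by
    rw [mul_sum]
    exact sum_congr rfl fun p _ => h1 p
  rcases hε with rfl | rfl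
  · rw [h3, one_mul]
  · have h4 : 0 ≤ ∑ p : Fin (b + s) ↪o Fin (a + b), (Nseq b (univ.image k) (2 * a) (Sp a b (b + s) p) : ℚ) :=
      sum_nonneg fun _ _ => Nat.cast_nonneg _
    have h5 := algMain (a + b) (b + s) t (jm a b s k hk hka) c hc
    have h6 := sq_nonneg ((∏ i, ((a + b + c i : ℕ).choose (2 * c i + 1) : ℚ)) *
      ∏ p ∈ univ.filter (fun p : Fin t × Fin t => p.1 < p.2),
        (((c p.2 : ℕ) : ℚ) - (c p.1 : ℕ)) / ((c p.1 : ℕ) + (c p.2 : ℕ) + 1))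
    rw [← h5] at h6
    linarith



def stS (b : ℕ) (K : Finset ℕ) (i : ℕ) : Finset ℤ :=
  if i % 2 = 0 ∧ i / 2 ∈ K then {(b : ℤ) - (i / 2 : ℕ) - 1, (b : ℤ) - (i / 2 : ℕ) - 1 + 1} else ∅

theorem Nseq_succ (b : ℕ) (K : Finset ℕ) (i : ℕ) (S : Finset ℤ) :
    Nseq b K (i + 1) S = if stS b K (i + 1) ⊆ S then stepN (Nseq b K i) (S \ stS b K (i + 1)) else 0 := by
  rw [Nseq, stS]
  split_ifs with h1 h2 h3
  · rw [insN, if_pos]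
    constructor
    · exact h2 (by simp)
    · exact h2 (by simp)
  · rw [insN, if_neg]
    rintro ⟨h3, h4⟩
    apply h2
    intro z hz
    simp only [mem_insert, mem_singleton] at hz
    rcases hz with rfl | rfl
    exacts [h3, h4]
  · simp
  · simp at h3

def Stp (b : ℕ) (K : Finset ℕ) (n : ℕ) (X Xn F : Finset ℤ) : Prop :=
  stS b K (n + 1) ⊆ Xn ∧ F ⊆ Xn \ stS b K (n + 1) ∧
  Disjoint ((Xn \ stS b K (n + 1)) \ F) (F.image (· + 1)) ∧
  X = ((Xn \ stS b K (n + 1)) \ F) ∪ F.image (· + 1)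

abbrev Dat := (ℕ → Finset ℤ) × (ℕ → Finset ℤ)

def DP (b : ℕ) (K : Finset ℕ) (i : ℕ) (S : Finset ℤ) (d : Dat) : Prop :=
  (∀ n, i < n → d.1 n = ∅) ∧ (∀ n, i ≤ n → d.2 n = ∅) ∧ d.1 0 = Ico 0 (2 * b : ℤ) ∧ d.1 i = S ∧
  ∀ n < i, Stp b K n (d.1 n) (d.1 (n + 1)) (d.2 n)

theorem DP_count (b : ℕ) (K : Finset ℕ) (i : ℕ) : ∀ S, ∃ H : Finset Dat, (∀ d, d ∈ H ↔ DP b K i S d) ∧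
    H.card = Nseq b K i S := by
  classical
  induction i with
  | zero =>
    intro S
    by_cases hS : S = Ico 0 (2 * b : ℤ)
    · refine ⟨{(fun n => if n = 0 then S else ∅, fun _ => ∅)}, ?_, ?_⟩
      · intro d
        rw [mem_singleton]
        constructor
        · rintro rfl
          refine ⟨fun n hn => ?_, fun n _ => rfl, ?_, ?_, ?_⟩
          · simp only; rw [if_neg (by omega)]
          · simpa using hS
          · simp
          · intro n hn; omega
        · rintro ⟨h1, h2, h3, h4, h5⟩
          ext n : 2
          · simp only
            split_ifs with h
            · rw [h, h4]
            · exact h1 n (by omega)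
          · exact h2 n (by omega)
      · simp [Nseq, hS]
    · refine ⟨∅, ?_, ?_⟩
      · intro d
        simp only [notMem_empty, false_iff]
        rintro ⟨h1, h2, h3, h4, h5⟩
        exact hS (h4.symm.trans h3)
      · simp [Nseq, hS]
  | succ i ih =>
    intro S
    choose H hH hHc using ih
    rw [Nseq_succ]
    by_cases hst : stS b K (i + 1) ⊆ S
    swap
    · refine ⟨∅, ?_, ?_⟩
      · intro d
        simp only [notMem_empty, false_iff]
        rintro ⟨h1, h2, h3, h4, h5⟩
        have := (h5 i (by omega)).1
        rw [h4] at this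
        exact hst this
      · rw [if_neg hst]; rfl
    · rw [if_pos hst]
      set O := S \ stS b K (i + 1) with hO
      let pr : Finset ℤ → Finset ℤ := fun E => (O \ E) ∪ E.image (· + 1)
      let up : Finset ℤ → Dat → Dat := fun E d => (Function.update d.1 (i + 1) S, Function.update d.2 i E)
      refine ⟨(O.powerset.filter (fun E => Disjoint (O \ E) (E.image (· + 1)))).biUnion
        (fun E => (H (pr E)).image (up E)), ?_, ?_⟩
      · intro d
        simp only [mem_biUnion, mem_filter, mem_powerset, mem_image]
        constructor
        · rintro ⟨E, ⟨hE, hd⟩, d, hdH, rfl⟩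
          obtain ⟨h1, h2, h3, h4, h5⟩ := (hH _ _).1 hdH
          refine ⟨fun n hn => ?_, fun n hn => ?_, ?_, ?_, ?_⟩
          · simp only [up]
            rw [Function.update_of_ne (by omega)]
            exact h1 n (by omega)
          · simp only [up]
            rw [Function.update_of_ne (by omega)]
            exact h2 n (by omega)
          · simp only [up]
            rw [Function.update_of_ne (by omega)]
            exact h3
          · simp [up]
          · intro n hn
            simp only [up]
            rw [Function.update_of_ne (by omega : n ≠ i + 1)]
            by_cases hni : n = i
            · subst hni
              rw [Function.update_self, Function.update_self, h4]
              exact ⟨hst, hE, hd, rfl⟩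
            · rw [Function.update_of_ne (by omega), Function.update_of_ne (by omega)]
              exact h5 n (by omega)
        · rintro ⟨h1, h2, h3, h4, h5⟩
          obtain ⟨s1, s2, s3, s4⟩ := h5 i (by omega)
          rw [h4] at s1 s2 s3 s4
          refine ⟨d.2 i, ⟨s2, s3⟩, (Function.update d.1 (i + 1) ∅, Function.update d.2 i ∅), ?_, ?_⟩
          · rw [hH]
            refine ⟨fun n hn => ?_, fun n hn => ?_, ?_, ?_, ?_⟩
            · simp only
              by_cases hni : n = i + 1
              · rw [hni, Function.update_self]
              · rw [Function.update_of_ne hni]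
                exact h1 n (by omega)
            · simp only
              by_cases hni : n = i
              · rw [hni, Function.update_self]
              · rw [Function.update_of_ne hni]
                exact h2 n (by omega)
            · simp only
              rw [Function.update_of_ne (by omega)]
              exact h3
            · simp only
              rw [Function.update_of_ne (by omega)]
              exact s4
            · intro n hn
              simp only
              rw [Function.update_of_ne (by omega), Function.update_of_ne (by omega), Function.update_of_ne (by omega)]
              exact h5 n (by omega)
          · simp [up, ← h4]
      · rw [card_biUnion]
        · unfold stepN
          rw [sum_filter]
          refine sum_congr rfl fun E _ => ?_
          split_ifs with hd
          · rw [card_image_of_injOn, hHc]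
            intro d hd' d' hd'' h
            obtain ⟨h1, h2, h3, h4, h5⟩ := (hH _ _).1 hd'
            obtain ⟨g1, g2, g3, g4, g5⟩ := (hH _ _).1 hd''
            have e1 := congrArg Prod.fst h
            have e2 := congrArg Prod.snd h
            ext n : 2
            · by_cases hn : n = i + 1
              · rw [h1 n (by omega), g1 n (by omega)]
              · have := congrFun e1 n
                simpa only [up, Function.update_of_ne hn] using this
            · by_cases hn : n = i
              · rw [h2 n (by omega), g2 n (by omega)]
              · have := congrFun e2 n
                simpa only [up, Function.update_of_ne hn] using this
          · rfl
        · intro E _ E' _ hEE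
          simp only [Function.onFun]
          rw [Finset.disjoint_left]
          rintro d hd hd'
          obtain ⟨x, _, rfl⟩ := mem_image.1 hd
          obtain ⟨y, _, h⟩ := mem_image.1 hd'
          have := congrFun (congrArg Prod.snd h) i
          simp only [up, Function.update_self] at this
          exact hEE this.symm

inductive Lz
  | A (i j : ℤ)
  | B (i j : ℤ)
  | C (i j : ℤ)

def InR (a b : ℕ) (K : Finset ℕ) (i j : ℤ) : Prop :=
  (0 ≤ i ∧ i ≤ 4 * a - 1 ∧ -2 * a ≤ j ∧ j ≤ 2 * b - 1 ∧ 0 ≤ i + j ∧ i + j ≤ 2 * a + 2 * b - 1) ∧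
  ∀ k ∈ K, ¬ (i ≤ 2 * k - 1 ∧ j ≤ b - k ∧ b + k - 1 ≤ i + j) ∧
    ¬ (4 * a - 2 * k ≤ i ∧ b - 1 - 2 * a + k ≤ j ∧ i + j ≤ b + 2 * a - k)

def InL (a b : ℕ) (K : Finset ℕ) (i j : ℤ) : Prop :=
  (0 ≤ i ∧ i ≤ 4 * a - 1 ∧ -2 * a ≤ j ∧ j ≤ 2 * b - 1 ∧ -1 ≤ i + j ∧ i + j ≤ 2 * a + 2 * b - 2) ∧
  ∀ k ∈ K, ¬ (i ≤ 2 * k - 1 ∧ j ≤ b - k ∧ b + k - 2 ≤ i + j) ∧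
    ¬ (4 * a - 2 * k ≤ i ∧ b - 1 - 2 * a + k ≤ j ∧ i + j ≤ b + 2 * a - k - 1)

def Ex3 (p q r : Prop) : Prop := ¬ (p ∧ q) ∧ ¬ (p ∧ r) ∧ ¬ (q ∧ r)

/-- exact covers -/
def CT (a b : ℕ) (K : Finset ℕ) (τ : Set Lz) : Prop := ∀ i j : ℤ,
  ((InR a b K i j ↔ (Lz.A i j ∈ τ ∨ Lz.B i (j - 1) ∈ τ ∨ Lz.C i j ∈ τ)) ∧
    Ex3 (Lz.A i j ∈ τ) (Lz.B i (j - 1) ∈ τ) (Lz.C i j ∈ τ)) ∧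
  ((InL a b K i j ↔ (Lz.A i j ∈ τ ∨ Lz.B i j ∈ τ ∨ Lz.C (i + 1) j ∈ τ)) ∧
    Ex3 (Lz.A i j ∈ τ) (Lz.B i j ∈ τ) (Lz.C (i + 1) j ∈ τ))

def rotL (a b : ℕ) : Lz → Lz
  | Lz.A i j => Lz.A (4 * a - 1 - i) (2 * b - 2 * a - 1 - j)
  | Lz.B i j => Lz.B (4 * a - 1 - i) (2 * b - 2 * a - 2 - j)
  | Lz.C i j => Lz.C (4 * a - i) (2 * b - 2 * a - 1 - j)

theorem rotL_rotL (a b : ℕ) (x : Lz) : rotL a b (rotL a b x) = x := by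
  cases x <;> simp [rotL]

def CRot (a b : ℕ) (τ : Set Lz) : Prop := ∀ x ∈ τ, rotL a b x ∈ τ

theorem CRot_iff {a b : ℕ} {τ : Set Lz} (h : CRot a b τ) (x : Lz) : rotL a b x ∈ τ ↔ x ∈ τ :=
  ⟨fun hx => rotL_rotL a b x ▸ h _ hx, h x⟩

theorem InR_half {a b : ℕ} {K : Finset ℕ} (hK : ∀ k ∈ K, 2 ≤ k ∧ k + 1 ≤ a) (n : ℕ) (hn : n ≤ 2 * a) (ha : 0 < a) (j : ℤ) :
    InR a b K n j ↔ (-(n : ℤ) ≤ j ∧ j < 2 * b) ∧ ∀ k ∈ K, ¬ (n + 1 = 2 * k ∧ j = b - k) := by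
  unfold InR
  constructor
  · rintro ⟨h1, h2⟩
    refine ⟨by omega, fun k hk => ?_⟩
    have := (h2 k hk).1
    omega
  · rintro ⟨h1, h2⟩
    refine ⟨by omega, fun k hk => ?_⟩
    have := h2 k hk
    have := hK k hk
    constructor <;> omega

theorem mem_stS (b : ℕ) (K : Finset ℕ) (n : ℕ) (j : ℤ) :
    j ∈ stS b K n ↔ ∃ k ∈ K, n = 2 * k ∧ (j = b - k - 1 ∨ j = b - k) := by
  unfold stS
  split_ifs with h
  · simp only [mem_insert, mem_singleton]
    constructor
    · intro hj
      exact ⟨n / 2, h.2, by omega, by omega⟩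
    · rintro ⟨k, hk, rfl, hj⟩
      omega
  · simp only [notMem_empty, false_iff]
    rintro ⟨k, hk, rfl, hj⟩
    apply h
    refine ⟨by omega, ?_⟩
    rwa [show 2 * k / 2 = k by omega]

theorem InL_half {a b : ℕ} {K : Finset ℕ} (hK : ∀ k ∈ K, 2 ≤ k ∧ k + 1 ≤ a) (n : ℕ) (hn : n < 2 * a) (j : ℤ) :
    InL a b K n j ↔ InR a b K ((n + 1 : ℕ) : ℤ) j ∧ j ∉ stS b K (n + 1) := by
  rw [InR_half hK (n + 1) (by omega) (by omega), mem_stS]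
  unfold InL
  constructor
  · rintro ⟨h1, h2⟩
    refine ⟨⟨by omega, fun k hk => ?_⟩, ?_⟩
    · have := (h2 k hk).1
      omega
    · rintro ⟨k, hk, h3, h4⟩
      have := (h2 k hk).1
      omega
  · rintro ⟨⟨h1, h2⟩, h3⟩
    refine ⟨by omega, fun k hk => ?_⟩
    have h4 := h2 k hk
    have h5 := hK k hk
    have h6 : ¬ (n + 1 = 2 * k ∧ (j = b - k - 1 ∨ j = b - k)) := fun h => h3 ⟨k, hk, h⟩
    constructor <;> omega

theorem InR_rot (a b : ℕ) (K : Finset ℕ) (i j : ℤ) :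
    InR a b K i j ↔ InL a b K (4 * a - 1 - i) (2 * b - 2 * a - 1 - j) := by
  unfold InR InL
  apply and_congr
  · omega
  · apply forall₂_congr
    intro k hk
    rw [and_comm]
    apply and_congr <;> apply not_congr <;> omega



open Classical in
def dX (a b : ℕ) (K : Finset ℕ) (τ : Set Lz) (n : ℕ) : Finset ℤ :=
  if n ≤ 2 * a then (Ico (-2 * a : ℤ) (2 * b)).filter (fun j => InR a b K n j ∧ Lz.C n j ∉ τ) else ∅

open Classical in
def dF (a b : ℕ) (τ : Set Lz) (n : ℕ) : Finset ℤ :=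
  if n < 2 * a then (Ico (-2 * a : ℤ) (2 * b)).filter (fun j => Lz.B n j ∈ τ) else ∅

def dD (a b : ℕ) (K : Finset ℕ) (τ : Set Lz) : Dat := (dX a b K τ, dF a b τ)

theorem mem_dX {a b : ℕ} {K : Finset ℕ} (hK : ∀ k ∈ K, 2 ≤ k ∧ k + 1 ≤ a) (ha : 0 < a) (τ : Set Lz) (n : ℕ)
    (hn : n ≤ 2 * a) (j : ℤ) : j ∈ dX a b K τ n ↔ InR a b K n j ∧ Lz.C n j ∉ τ := by
  unfold dX
  simp only [if_pos hn, mem_filter]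
  rw [and_iff_right_iff_imp]
  rintro ⟨h, _⟩
  have := ((InR_half hK n hn ha j).1 h).1
  rw [mem_Ico]
  omega

theorem mem_dF {a b : ℕ} {K : Finset ℕ} {τ : Set Lz} (h : CT a b K τ) (n : ℕ)
    (hn : n < 2 * a) (j : ℤ) : j ∈ dF a b τ n ↔ Lz.B n j ∈ τ := by
  unfold dF
  simp only [if_pos hn, mem_filter]
  rw [and_iff_right_iff_imp]
  intro hB
  have := ((h n j).2.1.2 (Or.inr (Or.inl hB))).1
  rw [mem_Ico]
  omega

theorem mem_dO {a b : ℕ} {K : Finset ℕ} (hK : ∀ k ∈ K, 2 ≤ k ∧ k + 1 ≤ a) {τ : Set Lz} (h : CT a b K τ) (n : ℕ)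
    (hn : n < 2 * a) (j : ℤ) : j ∈ dX a b K τ (n + 1) \ stS b K (n + 1) ↔ Lz.A n j ∈ τ ∨ Lz.B n j ∈ τ := by
  rw [mem_sdiff, mem_dX hK (by omega) τ (n + 1) (by omega)]
  have h1 := InL_half (b := b) hK n hn j
  have h2 := (h n j).2
  unfold Ex3 at h2
  push_cast at *
  tauto

theorem mem_image_add_one (F : Finset ℤ) (j : ℤ) : j ∈ F.image (· + 1) ↔ j - 1 ∈ F := by
  simp only [mem_image]
  constructor
  · rintro ⟨x, hx, rfl⟩; simpa using hx
  · intro h; exact ⟨j - 1, h, by ring⟩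

theorem dD_DP {a b : ℕ} {K : Finset ℕ} (hK : ∀ k ∈ K, 2 ≤ k ∧ k + 1 ≤ a) (ha : 0 < a) {τ : Set Lz} (h : CT a b K τ) :
    DP b K (2 * a) (dX a b K τ (2 * a)) (dD a b K τ) := by
  refine ⟨fun n hn => ?_, fun n hn => ?_, ?_, rfl, ?_⟩
  · simp only [dD, dX]; rw [if_neg (by omega)]
  · simp only [dD, dF]; rw [if_neg (by omega)]
  · ext j
    simp only [dD]
    rw [mem_dX hK ha τ 0 (by omega), InR_half hK 0 (by omega) ha, mem_Ico]
    constructor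
    · rintro ⟨⟨h1, _⟩, _⟩
      push_cast at h1
      omega
    · intro h1
      refine ⟨⟨by push_cast; omega, fun k hk => ?_⟩, ?_⟩
      · have := hK k hk
        omega
      · intro hC
        have := (h (-1) j).2.1.2 (Or.inr (Or.inr (by simpa using hC)))
        have := this.1
        omega
  · intro n hn
    simp only [dD]
    refine ⟨?_, ?_, ?_, ?_⟩
    · intro j hj
      rw [mem_dX hK ha τ (n + 1) (by omega), InR_half hK (n + 1) (by omega) ha]
      have hj' := hj
      rw [mem_stS] at hj
      obtain ⟨k, hk, h1, h2⟩ := hj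
      have := hK k hk
      refine ⟨⟨by omega, fun k' hk' => by omega⟩, ?_⟩
      intro hC
      have h3 := (h n j).2.1.2 (Or.inr (Or.inr (by simpa using hC)))
      rw [InL_half hK n hn] at h3
      exact h3.2 hj'
    · intro j hj
      rw [mem_dF h n hn] at hj
      rw [mem_dO hK h n hn]
      exact Or.inr hj
    · rw [Finset.disjoint_left]
      intro j hj hj'
      rw [mem_sdiff, mem_dO hK h n hn, mem_dF h n hn] at hj
      rw [mem_image_add_one, mem_dF h n hn] at hj'
      have := (h n j).1.2
      unfold Ex3 at this
      tauto
    · ext j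
      rw [mem_union, mem_sdiff, mem_dO hK h n hn, mem_dF h n hn, mem_image_add_one, mem_dF h n hn,
        mem_dX hK ha τ n (by omega)]
      have h1 := (h n j).1
      have h2 := (h n j).2.2
      unfold Ex3 at h1 h2
      tauto

theorem dX_sym {a b : ℕ} {K : Finset ℕ} (hK : ∀ k ∈ K, 2 ≤ k ∧ k + 1 ≤ a) (ha : 0 < a) {τ : Set Lz} (hr : CRot a b τ) :
    dX a b K τ (2 * a) ∈ symS a b := by
  simp only [symS, mem_filter, mem_powerset]
  constructor
  · intro j hj
    rw [mem_dX hK ha τ _ le_rfl, InR_half hK _ le_rfl ha] at hj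
    have := hj.1.1
    rw [mem_Ico]
    push_cast at this
    omega
  · intro j hj
    rw [mem_dX hK ha τ _ le_rfl, InR_half hK _ le_rfl ha] at hj ⊢
    obtain ⟨⟨h1, h2⟩, h3⟩ := hj
    push_cast at *
    refine ⟨⟨by omega, fun k hk => by omega⟩, ?_⟩
    intro hC
    apply h3
    rw [← CRot_iff hr]
    simp only [rotL]
    convert hC using 2
    ring

def Hf (a b : ℕ) (K : Finset ℕ) (d : Dat) : Lz → Prop
  | Lz.A i j => ∃ n : ℕ, n < 2 * a ∧ i = n ∧ j ∈ (d.1 (n + 1) \ stS b K (n + 1)) \ d.2 n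
  | Lz.B i j => ∃ n : ℕ, n < 2 * a ∧ i = n ∧ j ∈ d.2 n
  | Lz.C i j => ∃ n : ℕ, 1 ≤ n ∧ n ≤ 2 * a ∧ i = n ∧ InR a b K n j ∧ j ∉ d.1 n

def Rc (a b : ℕ) (K : Finset ℕ) (d : Dat) : Set Lz := {x | Hf a b K d x ∨ Hf a b K d (rotL a b x)}

theorem Hf_iff {a b : ℕ} {K : Finset ℕ} (hK : ∀ k ∈ K, 2 ≤ k ∧ k + 1 ≤ a) (ha : 0 < a) {τ : Set Lz} (h : CT a b K τ) :
    (∀ x, Hf a b K (dD a b K τ) x → x ∈ τ) := by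
  rintro (⟨i, j⟩ | ⟨i, j⟩ | ⟨i, j⟩)
  · rintro ⟨n, hn, rfl, hj⟩
    simp only [dD] at hj
    rw [mem_sdiff, mem_dO hK h n hn, mem_dF h n hn] at hj
    tauto
  · rintro ⟨n, hn, rfl, hj⟩
    simp only [dD] at hj
    rwa [mem_dF h n hn] at hj
  · rintro ⟨n, hn1, hn, rfl, hR, hj⟩
    simp only [dD] at hj
    rw [mem_dX hK ha τ n hn] at hj
    tauto

theorem Hf_or {a b : ℕ} {K : Finset ℕ} (hK : ∀ k ∈ K, 2 ≤ k ∧ k + 1 ≤ a) (ha : 0 < a) {τ : Set Lz} (h : CT a b K τ)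
     (x : Lz) (hx : x ∈ τ) (hh : match x with
      | Lz.A i _ => i < 2 * a
      | Lz.B i _ => i < 2 * a
      | Lz.C i _ => i ≤ 2 * a) : Hf a b K (dD a b K τ) x := by
  rcases x with ⟨i, j⟩ | ⟨i, j⟩ | ⟨i, j⟩
  · simp only at hh
    have h1 := ((h i j).1.1.2 (Or.inl hx)).1
    obtain ⟨n, rfl⟩ : ∃ n : ℕ, i = n := ⟨i.toNat, by omega⟩
    have hn : n < 2 * a := by omega
    refine ⟨n, hn, rfl, ?_⟩
    simp only [dD]
    rw [mem_sdiff, mem_dO hK h n hn, mem_dF h n hn]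
    have := (h n j).2.2
    unfold Ex3 at this
    tauto
  · simp only at hh
    have h1 := ((h i j).2.1.2 (Or.inr (Or.inl hx))).1
    obtain ⟨n, rfl⟩ : ∃ n : ℕ, i = n := ⟨i.toNat, by omega⟩
    have hn : n < 2 * a := by omega
    refine ⟨n, hn, rfl, ?_⟩
    simp only [dD]
    rwa [mem_dF h n hn]
  · simp only at hh
    have h1 := ((h (i - 1) j).2.1.2 (Or.inr (Or.inr (by simpa using hx)))).1
    obtain ⟨n, rfl⟩ : ∃ n : ℕ, i = n := ⟨i.toNat, by omega⟩
    have hn : n ≤ 2 * a := by omega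
    refine ⟨n, by omega, hn, rfl, ?_⟩
    simp only [dD]
    rw [mem_dX hK ha τ n hn]
    have := (h n j).1.1
    tauto

theorem Rc_dD {a b : ℕ} {K : Finset ℕ} (hK : ∀ k ∈ K, 2 ≤ k ∧ k + 1 ≤ a) (ha : 0 < a) {τ : Set Lz} (h : CT a b K τ)
    (hr : CRot a b τ) : Rc a b K (dD a b K τ) = τ := by
  ext x
  constructor
  · rintro (hx | hx)
    · exact Hf_iff hK ha h x hx
    · exact (CRot_iff hr x).1 (Hf_iff hK ha h _ hx)
  · intro hx
    have hx' := hr x hx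
    have k1 := Hf_or hK ha h x hx
    have k2 := Hf_or hK ha h _ hx'
    rcases x with ⟨i, j⟩ | ⟨i, j⟩ | ⟨i, j⟩
    · by_cases hi : i < 2 * a
      · exact Or.inl (k1 hi)
      · exact Or.inr (k2 (by simp only [rotL]; omega))
    · by_cases hi : i < 2 * a
      · exact Or.inl (k1 hi)
      · exact Or.inr (k2 (by simp only [rotL]; omega))
    · by_cases hi : i ≤ 2 * a
      · exact Or.inl (k1 hi)
      · exact Or.inr (k2 (by simp only [rotL]; omega))

theorem CRot_Rc (a b : ℕ) (K : Finset ℕ) (d : Dat) : CRot a b (Rc a b K d) := by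
  rintro x (hx | hx)
  · right; rwa [rotL_rotL]
  · left; exact hx

theorem X_sub {a b : ℕ} {K : Finset ℕ} (hK : ∀ k ∈ K, 2 ≤ k ∧ k + 1 ≤ a) (ha : 0 < a) {d : Dat} {S : Finset ℤ}
    (h : DP b K (2 * a) S d) : ∀ n ≤ 2 * a, ∀ j ∈ d.1 n, InR a b K n j := by
  obtain ⟨h1, h2, h3, h4, h5⟩ := h
  have key : ∀ n ≤ 2 * a, ∀ j ∈ d.1 n, -(n : ℤ) ≤ j ∧ j < 2 * b := by
    intro n
    induction n with
    | zero =>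
      intro _ j hj
      rw [h3, mem_Ico] at hj
      push_cast
      omega
    | succ n ih =>
      intro hn j hj
      obtain ⟨s1, s2, s3, s4⟩ := h5 n (by omega)
      have ih := ih (by omega)
      by_cases hst : j ∈ stS b K (n + 1)
      · rw [mem_stS] at hst
        obtain ⟨k, hk, e1, e2⟩ := hst
        have := hK k hk
        omega
      · by_cases hF : j ∈ d.2 n
        · have := ih (j + 1) (by
            rw [s4, mem_union, mem_image_add_one]; right; simpa using hF)
          push_cast
          omega
        · have := ih j (by
            rw [s4, mem_union]; left; rw [mem_sdiff, mem_sdiff]; exact ⟨⟨hj, hst⟩, hF⟩)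
          push_cast
          omega
  intro n hn j hj
  rw [InR_half hK n hn ha]
  refine ⟨key n hn j hj, ?_⟩
  rintro k hk ⟨e1, rfl⟩
  have hk' := hK k hk
  obtain ⟨s1, s2, s3, s4⟩ := h5 n (by omega)
  rw [s4, mem_union, mem_image_add_one] at hj
  rcases hj with hj | hj
  · rw [mem_sdiff, mem_sdiff, mem_stS] at hj
    exact hj.1.2 ⟨k, hk, e1, Or.inr rfl⟩
  · have := s2 hj
    rw [mem_sdiff, mem_stS] at this
    exact this.2 ⟨k, hk, e1, Or.inl rfl⟩

theorem Rc_A {a b : ℕ} {K : Finset ℕ} {d : Dat} (n : ℕ) (hn : n < 2 * a) (j : ℤ) :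
    Lz.A n j ∈ Rc a b K d ↔ j ∈ (d.1 (n + 1) \ stS b K (n + 1)) \ d.2 n := by
  constructor
  · rintro (⟨m, hm, e, h⟩ | ⟨m, hm, e, h⟩)
    · obtain rfl : n = m := by omega
      exact h
    · omega
  · intro h
    exact Or.inl ⟨n, hn, rfl, h⟩

theorem Rc_B {a b : ℕ} {K : Finset ℕ} {d : Dat} (n : ℕ) (hn : n < 2 * a) (j : ℤ) :
    Lz.B n j ∈ Rc a b K d ↔ j ∈ d.2 n := by
  constructor
  · rintro (⟨m, hm, e, h⟩ | ⟨m, hm, e, h⟩)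
    · obtain rfl : n = m := by omega
      exact h
    · omega
  · intro h
    exact Or.inl ⟨n, hn, rfl, h⟩

theorem Rc_C {a b : ℕ} {K : Finset ℕ} (hK : ∀ k ∈ K, 2 ≤ k ∧ k + 1 ≤ a) (ha : 0 < a) {d : Dat} {S : Finset ℤ}
    (hd : DP b K (2 * a) S d) (hS : S ∈ symS a b) (n : ℕ) (hn : n ≤ 2 * a) (j : ℤ) :
    Lz.C n j ∈ Rc a b K d ↔ InR a b K n j ∧ j ∉ d.1 n := by
  constructor
  · rintro (⟨m, hm1, hm, e, h⟩ | ⟨m, hm1, hm, e, h⟩)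
    · obtain rfl : n = m := by omega
      exact h
    · obtain rfl : n = m := by omega
      obtain rfl : n = 2 * a := by omega
      rw [InR_half hK _ le_rfl ha] at h ⊢
      obtain ⟨⟨h1, h2⟩, h3⟩ := h
      refine ⟨⟨by omega, fun k hk => by omega⟩, ?_⟩
      intro hj
      rw [hd.2.2.2.1] at hj h3
      simp only [symS, mem_filter] at hS
      exact h3 (hS.2 _ hj)
  · rintro ⟨h1, h2⟩
    rcases Nat.eq_zero_or_pos n with rfl | hn0
    · exfalso
      apply h2
      rw [hd.2.2.1, mem_Ico]
      rw [InR_half hK _ hn ha] at h1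
      have := h1.1
      push_cast at this
      omega
    · exact Or.inl ⟨n, hn0, hn, rfl, h1, h2⟩

theorem CT_Rc {a b : ℕ} {K : Finset ℕ} (hK : ∀ k ∈ K, 2 ≤ k ∧ k + 1 ≤ a) (ha : 0 < a) {d : Dat} {S : Finset ℤ}
    (hd : DP b K (2 * a) S d) (hS : S ∈ symS a b) : CT a b K (Rc a b K d) := by
  have hX := X_sub hK ha hd
  have hC := Rc_C hK ha hd hS
  have h5 := hd.2.2.2.2
  have right : ∀ n : ℕ, n < 2 * a → ∀ j : ℤ,
    ((InR a b K n j ↔ (Lz.A n j ∈ Rc a b K d ∨ Lz.B n (j - 1) ∈ Rc a b K d ∨ Lz.C n j ∈ Rc a b K d)) ∧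
    Ex3 (Lz.A n j ∈ Rc a b K d) (Lz.B n (j - 1) ∈ Rc a b K d) (Lz.C n j ∈ Rc a b K d)) := by
    intro n hn j
    rw [Rc_A n hn, Rc_B n hn, hC n hn.le]
    obtain ⟨s1, s2, s3, s4⟩ := h5 n hn
    have e : j ∈ d.1 n ↔ j ∈ (d.1 (n + 1) \ stS b K (n + 1)) \ d.2 n ∨ j - 1 ∈ d.2 n := by
      conv_lhs => rw [s4]
      rw [mem_union, mem_image_add_one]
    have e2 : ¬ (j ∈ (d.1 (n + 1) \ stS b K (n + 1)) \ d.2 n ∧ j - 1 ∈ d.2 n) := by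
      rintro ⟨h1, h2⟩
      exact Finset.disjoint_left.1 s3 h1 ((mem_image_add_one _ _).2 h2)
    have e3 := hX n hn.le j
    unfold Ex3
    tauto
  have left : ∀ n : ℕ, n < 2 * a → ∀ j : ℤ,
    ((InL a b K n j ↔ (Lz.A n j ∈ Rc a b K d ∨ Lz.B n j ∈ Rc a b K d ∨ Lz.C (n + 1) j ∈ Rc a b K d)) ∧
    Ex3 (Lz.A n j ∈ Rc a b K d) (Lz.B n j ∈ Rc a b K d) (Lz.C (n + 1) j ∈ Rc a b K d)) := by
    intro n hn j
    have c := hC (n + 1) (by omega) j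
    rw [Nat.cast_succ] at c
    rw [Rc_A n hn, Rc_B n hn, c, InL_half hK n hn, Nat.cast_succ]
    obtain ⟨s1, s2, s3, s4⟩ := h5 n hn
    have s2 := @s2 j
    have s1 := @s1 j
    have e3 := hX (n + 1) (by omega) j
    rw [Nat.cast_succ] at e3
    unfold Ex3
    rw [mem_sdiff, mem_sdiff]
    rw [mem_sdiff] at s2
    clear c hC h5 hX right s3 s4
    generalize (j ∈ d.1 (n + 1)) = p at *
    generalize (j ∈ stS b K (n + 1)) = q at *
    generalize (j ∈ d.2 n) = r at *
    generalize InR a b K ((n : ℤ) + 1) j = t at *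
    by_cases p <;> by_cases q <;> by_cases r <;> by_cases t <;> simp_all
  have hlo : ∀ i j : ℤ, i < 0 → Lz.A i j ∉ Rc a b K d ∧ Lz.B i j ∉ Rc a b K d ∧ Lz.C (i + 1) j ∉ Rc a b K d
      ∧ Lz.C i j ∉ Rc a b K d := by
    intro i j hi
    refine ⟨?_, ?_, ?_, ?_⟩
    · rintro (⟨n, hn, e, h⟩ | ⟨n, hn, e, h⟩) <;> omega
    · rintro (⟨n, hn, e, h⟩ | ⟨n, hn, e, h⟩) <;> omega
    · rintro (⟨n, hn1, hn, e, h⟩ | ⟨n, hn1, hn, e, h⟩) <;> omega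
    · rintro (⟨n, hn1, hn, e, h⟩ | ⟨n, hn1, hn, e, h⟩) <;> omega
  have both : ∀ i j : ℤ, i < 2 * a →
    ((InR a b K i j ↔ (Lz.A i j ∈ Rc a b K d ∨ Lz.B i (j - 1) ∈ Rc a b K d ∨ Lz.C i j ∈ Rc a b K d)) ∧
    Ex3 (Lz.A i j ∈ Rc a b K d) (Lz.B i (j - 1) ∈ Rc a b K d) (Lz.C i j ∈ Rc a b K d)) ∧
    ((InL a b K i j ↔ (Lz.A i j ∈ Rc a b K d ∨ Lz.B i j ∈ Rc a b K d ∨ Lz.C (i + 1) j ∈ Rc a b K d)) ∧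
    Ex3 (Lz.A i j ∈ Rc a b K d) (Lz.B i j ∈ Rc a b K d) (Lz.C (i + 1) j ∈ Rc a b K d)) := by
    intro i j hi
    by_cases h0 : 0 ≤ i
    · obtain ⟨n, rfl⟩ : ∃ n : ℕ, i = n := ⟨i.toNat, by omega⟩
      exact ⟨right n (by omega) j, left n (by omega) j⟩
    · have l1 := hlo i j (by omega)
      have l2 := hlo i (j - 1) (by omega)
      have r1 : ¬ InR a b K i j := fun h => by have := h.1; omega
      have r2 : ¬ InL a b K i j := fun h => by have := h.1; omega
      unfold Ex3
      tauto
  have hrot := CRot_iff (CRot_Rc a b K d)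
  intro i j
  by_cases hi : i < 2 * a
  · exact both i j hi
  · have h := both (4 * a - 1 - i) (2 * b - 2 * a - 1 - j) (by omega)
    have q1 := hrot (Lz.A i j)
    have q2 := hrot (Lz.B i j)
    have q3 := hrot (Lz.B i (j - 1))
    have q4 := hrot (Lz.C i j)
    have q5 := hrot (Lz.C (i + 1) j)
    have r1 := InR_rot a b K i j
    have r2 := InR_rot a b K (4 * a - 1 - i) (2 * b - 2 * a - 1 - j)
    simp only [rotL] at q1 q2 q3 q4 q5
    rw [show (2 * b - 2 * a - 2 - (j - 1) : ℤ) = 2 * b - 2 * a - 1 - j by ring] at q3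
    rw [show (4 * a - (i + 1) : ℤ) = 4 * a - 1 - i by ring] at q5
    rw [show (4 * a - 1 - (4 * a - 1 - i) : ℤ) = i by ring,
      show (2 * b - 2 * a - 1 - (2 * b - 2 * a - 1 - j) : ℤ) = j by ring] at r2
    rw [show (2 * b - 2 * a - 1 - j - 1 : ℤ) = 2 * b - 2 * a - 2 - j by ring,
      show (4 * a - 1 - i + 1 : ℤ) = 4 * a - i by ring, q1, q2, q3, q4, q5, ← r1, r2] at h
    obtain ⟨⟨h1, h2, h3, h4⟩, ⟨g1, g2, g3, g4⟩⟩ := h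
    exact ⟨⟨g1, g2, g3, g4⟩, ⟨h1, h2, h3, h4⟩⟩

theorem dD_Rc {a b : ℕ} {K : Finset ℕ} (hK : ∀ k ∈ K, 2 ≤ k ∧ k + 1 ≤ a) (ha : 0 < a) {d : Dat} {S : Finset ℤ}
    (hd : DP b K (2 * a) S d) (hS : S ∈ symS a b) : dD a b K (Rc a b K d) = d := by
  have hX := X_sub hK ha hd
  have hC := Rc_C hK ha hd hS
  have hCT := CT_Rc hK ha hd hS
  obtain ⟨h1, h2, h3, h4, h5⟩ := hd
  ext n j : 3
  · simp only [dD]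
    by_cases hn : n ≤ 2 * a
    · rw [mem_dX hK ha _ n hn, hC n hn]
      have := hX n hn j
      tauto
    · rw [h1 n (by omega), dX, if_neg hn]
  · simp only [dD]
    by_cases hn : n < 2 * a
    · rw [mem_dF hCT n hn, Rc_B n hn]
    · rw [h2 n (by omega), dF, if_neg hn]

theorem card_CT {a b : ℕ} {K : Finset ℕ} (hK : ∀ k ∈ K, 2 ≤ k ∧ k + 1 ≤ a) (ha : 0 < a) :
    Nat.card {τ : Set Lz // CT a b K τ ∧ CRot a b τ} = ∑ S ∈ symS a b, Nseq b K (2 * a) S := by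
  classical
  choose H hH hHc using DP_count b K (2 * a)
  have e : {τ : Set Lz // CT a b K τ ∧ CRot a b τ} ≃ {d // d ∈ (symS a b).biUnion H} :=
    { toFun := fun τ => ⟨dD a b K τ.1, by
        rw [mem_biUnion]
        exact ⟨_, dX_sym hK ha τ.2.2, (hH _ _).2 (dD_DP hK ha τ.2.1)⟩⟩
      invFun := fun d => ⟨Rc a b K d.1, by
        obtain ⟨S, hS, hd⟩ := mem_biUnion.1 d.2
        exact ⟨CT_Rc hK ha ((hH _ _).1 hd) hS, CRot_Rc _ _ _ _⟩⟩
      left_inv := fun τ => Subtype.ext (Rc_dD hK ha τ.2.1 τ.2.2)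
      right_inv := fun d => Subtype.ext (by
        obtain ⟨S, hS, hd⟩ := mem_biUnion.1 d.2
        exact dD_Rc hK ha ((hH _ _).1 hd) hS) }
  rw [Nat.card_congr e, Nat.card_eq_fintype_card, Fintype.card_coe, card_biUnion]
  · exact sum_congr rfl fun S _ => hHc S
  · intro S _ S' _ hne
    simp only [Function.onFun]
    rw [Finset.disjoint_left]
    intro d h1 h2
    exact hne (((hH _ _).1 h1).2.2.2.1.symm.trans ((hH _ _).1 h2).2.2.2.1)


open PP

theorem s3_pos : 0 < s3 := Real.sqrt_pos.2 (by norm_num)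

def mkP (u v : ℝ) : Pt := (u * (s3 / 2), v + u / 2)

def U : Pt →ₗ[ℝ] ℝ := (2 / s3) • LinearMap.fst ℝ ℝ ℝ
def V : Pt →ₗ[ℝ] ℝ := LinearMap.snd ℝ ℝ ℝ - (1 / s3) • LinearMap.fst ℝ ℝ ℝ
def W : Pt →ₗ[ℝ] ℝ := U + V

theorem W_eq (p : Pt) : W p = U p + V p := rfl

@[simp] theorem U_mk (u v : ℝ) : U (mkP u v) = u := by
  have := s3_pos.ne'
  simp [U, mkP]; field_simp
@[simp] theorem V_mk (u v : ℝ) : V (mkP u v) = v := by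
  have := s3_pos.ne'
  simp [V, mkP]; field_simp; ring
@[simp] theorem W_mk (u v : ℝ) : W (mkP u v) = u + v := by
  simp [W_eq]

theorem mk_UV (p : Pt) : mkP (U p) (V p) = p := by
  have := s3_pos.ne'
  ext
  · simp [U, mkP]; field_simp
  · simp [U, V, mkP]; field_simp; ring

theorem mk_add (u v u' v' : ℝ) : mkP u v + mkP u' v' = mkP (u + u') (v + v') := by
  ext <;> simp [mkP] <;> ring

theorem mk_neg (u v : ℝ) : -mkP u v = mkP (-u) (-v) := by
  ext <;> simp [mkP] <;> ring

theorem mk_inj {u v u' v' : ℝ} (h : mkP u v = mkP u' v') : u = u' ∧ v = v' := by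
  have h1 := congrArg U h
  have h2 := congrArg V h
  simpa using And.intro h1 h2

theorem conv_line {C : Set Pt} (hC : Convex ℝ C) (f : ℝ → Pt) (A B : Pt) (hf : ∀ x, f x = A + x • B)
    {x y z : ℝ} (hx : f x ∈ C) (hy : f y ∈ C) (h1 : x ≤ z) (h2 : z ≤ y) : f z ∈ C := by
  have : Convex ℝ (f ⁻¹' C) := by
    intro x hx y hy s t hs ht hst
    have := hC hx hy hs ht hst
    rw [Set.mem_preimage]
    convert this using 1
    rw [hf, hf, hf]
    ext
    · simp; linear_combination A.1 * (-hst)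
    · simp; linear_combination A.2 * (-hst)
  exact this.ordConnected.out hx hy ⟨h1, h2⟩

theorem convV {C : Set Pt} (hC : Convex ℝ C) {u x y z : ℝ} (hx : mkP u x ∈ C) (hy : mkP u y ∈ C) (h1 : x ≤ z)
    (h2 : z ≤ y) : mkP u z ∈ C :=
  conv_line hC (fun z => mkP u z) (mkP u 0) (mkP 0 1) (by intro x; ext <;> simp [mkP] <;> ring) hx hy h1 h2

theorem convU {C : Set Pt} (hC : Convex ℝ C) {v x y z : ℝ} (hx : mkP x v ∈ C) (hy : mkP y v ∈ C) (h1 : x ≤ z)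
    (h2 : z ≤ y) : mkP z v ∈ C :=
  conv_line hC (fun z => mkP z v) (mkP 0 v) (mkP 1 0) (by intro x; ext <;> simp [mkP] <;> ring) hx hy h1 h2

theorem convW {C : Set Pt} (hC : Convex ℝ C) {w x y z : ℝ} (hx : mkP x (w - x) ∈ C) (hy : mkP y (w - y) ∈ C)
    (h1 : x ≤ z) (h2 : z ≤ y) : mkP z (w - z) ∈ C :=
  conv_line hC (fun z => mkP z (w - z)) (mkP 0 w) (mkP 1 (-1)) (by intro x; ext <;> simp [mkP] <;> ring) hx hy h1 h2

theorem convW' {C : Set Pt} (hC : Convex ℝ C) (w : ℝ) {x x' y y' z z' : ℝ} (hx : mkP x x' ∈ C) (hy : mkP y y' ∈ C)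
    (e1 : x + x' = w) (e2 : y + y' = w) (e3 : z + z' = w)
    (h1 : x ≤ z) (h2 : z ≤ y) : mkP z z' ∈ C := by
  obtain rfl : x' = w - x := by linarith
  obtain rfl : y' = w - y := by linarith
  obtain rfl : z' = w - z := by linarith
  exact convW hC hx hy h1 h2

theorem cvx_le (f : Pt →ₗ[ℝ] ℝ) (c : ℝ) : Convex ℝ {p | f p ≤ c} := convex_halfSpace_le f.isLinear c
theorem cvx_ge (f : Pt →ₗ[ℝ] ℝ) (c : ℝ) : Convex ℝ {p | c ≤ f p} := convex_halfSpace_ge f.isLinear c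

theorem int_le (f : Pt →ₗ[ℝ] ℝ) (hf : Function.Surjective f) (c : ℝ) :
    interior {p | f p ≤ c} = {p | f p < c} := by
  have h := (f.isOpenMap_of_finiteDimensional hf).preimage_interior_eq_interior_preimage
    f.continuous_of_finiteDimensional (Set.Iic c)
  rw [interior_Iic] at h
  exact h.symm
theorem int_ge (f : Pt →ₗ[ℝ] ℝ) (hf : Function.Surjective f) (c : ℝ) :
    interior {p | c ≤ f p} = {p | c < f p} := by
  have h := (f.isOpenMap_of_finiteDimensional hf).preimage_interior_eq_interior_preimage
    f.continuous_of_finiteDimensional (Set.Ici c)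
  rw [interior_Ici] at h
  exact h.symm

theorem U_surj : Function.Surjective U := fun x => ⟨mkP x 0, by simp⟩
theorem V_surj : Function.Surjective V := fun x => ⟨mkP 0 x, by simp⟩
theorem W_surj : Function.Surjective W := fun x => ⟨mkP 0 x, by simp⟩

/-- closed strips -/
def box (f g : Pt →ₗ[ℝ] ℝ) (c d : ℝ) : Set Pt := {p | c ≤ f p ∧ f p ≤ c + 1 ∧ d ≤ g p ∧ g p ≤ d + 1}

theorem box_eq (f g : Pt →ₗ[ℝ] ℝ) (c d : ℝ) : box f g c d =
    {p | c ≤ f p} ∩ ({p | f p ≤ c + 1} ∩ ({p | d ≤ g p} ∩ {p | g p ≤ d + 1})) := rfl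

theorem box_convex (f g : Pt →ₗ[ℝ] ℝ) (c d : ℝ) : Convex ℝ (box f g c d) := by
  rw [box_eq]
  exact (cvx_ge _ _).inter ((cvx_le _ _).inter ((cvx_ge _ _).inter (cvx_le _ _)))

theorem box_int (f g : Pt →ₗ[ℝ] ℝ) (hf : Function.Surjective f) (hg : Function.Surjective g) (c d : ℝ) (p : Pt) :
    p ∈ interior (box f g c d) ↔ c < f p ∧ f p < c + 1 ∧ d < g p ∧ g p < d + 1 := by
  rw [box_eq, interior_inter, interior_inter, interior_inter, int_le _ hf, int_ge _ hf, int_le _ hg, int_ge _ hg]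
  rfl

def shape : Lz → Set Pt
  | Lz.A i j => box U V i j
  | Lz.B i j => box U W i (i + j + 1)
  | Lz.C i j => box V W j (i + j)

def Q (p u v : Pt) : Set Pt := {p, p + u, p + v, p + u + v}

theorem Q_comm (p u v : Pt) : Q p u v = Q p v u := by
  unfold Q
  rw [add_right_comm p u v]
  rw [Set.insert_comm (p + u) (p + v)]

theorem Q_neg (p u v : Pt) : Q p (-u) v = Q (p + -u) u v := by
  unfold Q
  ext x
  simp only [Set.mem_insert_iff, Set.mem_singleton_iff, neg_add_cancel_right]
  tauto

theorem hull_A (m n : ℝ) : convexHull ℝ (Q (mkP m n) (mkP 1 0) (mkP 0 1)) = box U V m n := by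
  unfold Q
  simp only [mk_add, add_zero]
  apply Set.Subset.antisymm
  · apply convexHull_min _ (box_convex _ _ _ _)
    intro x hx
    simp only [Set.mem_insert_iff, Set.mem_singleton_iff] at hx
    rcases hx with rfl | rfl | rfl | rfl <;> simp [box]
  · intro p hp
    rw [← mk_UV p]
    obtain ⟨h1, h2, h3, h4⟩ := hp
    have hC := convex_convexHull ℝ ({mkP m n, mkP (m + 1) n, mkP m (n + 1), mkP (m + 1) (n + 1)} : Set Pt)
    have hs := subset_convexHull ℝ ({mkP m n, mkP (m + 1) n, mkP m (n + 1), mkP (m + 1) (n + 1)} : Set Pt)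
    refine convV hC (x := n) (y := n + 1) (convU hC (x := m) (y := m + 1) (hs ?_) (hs ?_) h1 h2)
      (convU hC (x := m) (y := m + 1) (hs ?_) (hs ?_) h1 h2) h3 h4 <;> simp

theorem hull_B (m n : ℝ) : convexHull ℝ (Q (mkP m n) (mkP 0 1) (mkP 1 (-1))) = box U W m (m + n) := by
  unfold Q
  simp only [mk_add, add_zero]
  apply Set.Subset.antisymm
  · apply convexHull_min _ (box_convex _ _ _ _)
    intro x hx
    simp only [Set.mem_insert_iff, Set.mem_singleton_iff] at hx
    rcases hx with rfl | rfl | rfl | rfl <;> simp [box] <;> first | linarith | (constructor <;> linarith)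
  · intro p hp
    rw [← mk_UV p]
    obtain ⟨h1, h2, h3, h4⟩ := hp
    rw [W_eq] at h3 h4
    set D : Set Pt := {mkP m n, mkP m (n + 1), mkP (m + 1) (n + -1), mkP (m + 1) (n + 1 + -1)} with hD
    have hC := convex_convexHull ℝ D
    have hs := subset_convexHull ℝ D
    refine convV hC (x := m + n - U p) (y := m + n + 1 - U p)
      (convW' hC (m + n) (x := m) (x' := n) (y := m + 1) (y' := n + -1) (hs ?_) (hs ?_) ?_ ?_ ?_ h1 h2)
      (convW' hC (m + n + 1) (x := m) (x' := n + 1) (y := m + 1) (y' := n + 1 + -1) (hs ?_) (hs ?_) ?_ ?_ ?_ h1 h2)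
      (by linarith) (by linarith) <;> first | (rw [hD]; simp; done) | linarith

theorem hull_C (m n : ℝ) : convexHull ℝ (Q (mkP m n) (mkP 1 0) (mkP 1 (-1))) = box V W (n - 1) (m + n) := by
  unfold Q
  simp only [mk_add, add_zero]
  apply Set.Subset.antisymm
  · apply convexHull_min _ (box_convex _ _ _ _)
    intro x hx
    simp only [Set.mem_insert_iff, Set.mem_singleton_iff] at hx
    rcases hx with rfl | rfl | rfl | rfl <;> simp [box] <;> (repeat' constructor) <;> linarith
  · intro p hp
    rw [← mk_UV p]
    obtain ⟨h1, h2, h3, h4⟩ := hp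
    rw [W_eq] at h3 h4
    set D : Set Pt := {mkP m n, mkP (m + 1) n, mkP (m + 1) (n + -1), mkP (m + 1 + 1) (n + -1)} with hD
    have hC := convex_convexHull ℝ D
    have hs := subset_convexHull ℝ D
    refine convU hC (x := m + n - V p) (y := m + n + 1 - V p)
      (convW' hC (m + n) (x := m) (x' := n) (y := m + 1) (y' := n + -1) (hs ?_) (hs ?_) ?_ ?_ ?_ ?_ ?_)
      (convW' hC (m + n + 1) (x := m + 1) (x' := n) (y := m + 1 + 1) (y' := n + -1) (hs ?_) (hs ?_) ?_ ?_ ?_ ?_ ?_)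
      (by linarith) (by linarith) <;> first | (rw [hD]; simp; done) | linarith

theorem lat_iff (p : Pt) : p ∈ triLattice ↔ ∃ m n : ℤ, p = mkP m n := by
  unfold triLattice mkP
  simp only [Set.mem_ofPred_eq]
  constructor <;> rintro ⟨m, n, rfl⟩ <;> exact ⟨m, n, by ext <;> simp <;> ring⟩

def E3 : Set Pt := {mkP 1 0, mkP 0 1, mkP 1 (-1)}

theorem unit_iff (p : Pt) : p ∈ unitVecs ↔ p ∈ E3 ∨ ∃ e ∈ E3, p = -e := by
  unfold unitVecs E3
  have e1 : ((0 : ℝ), (1 : ℝ)) = mkP 0 1 := by ext <;> simp [mkP]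
  have e2 : ((0 : ℝ), (-1 : ℝ)) = -mkP 0 1 := by ext <;> simp [mkP]
  have e3 : (s3 / 2, (1 / 2 : ℝ)) = mkP 1 0 := by ext <;> simp [mkP]
  have e4 : (-(s3 / 2), (-(1 / 2) : ℝ)) = -mkP 1 0 := by ext <;> simp [mkP]
  have e5 : (s3 / 2, (-(1 / 2) : ℝ)) = mkP 1 (-1) := by ext <;> simp [mkP]; norm_num
  have e6 : (-(s3 / 2), ((1 / 2) : ℝ)) = -mkP 1 (-1) := by ext <;> simp [mkP]; norm_num
  rw [e1, e2, e3, e4, e5, e6]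
  simp only [Set.mem_insert_iff, Set.mem_singleton_iff, exists_eq_or_imp, exists_eq_left]
  tauto

theorem E3_int {e : Pt} (he : e ∈ E3) : ∃ m n : ℤ, e = mkP m n := by
  simp only [E3, Set.mem_insert_iff, Set.mem_singleton_iff] at he
  rcases he with rfl | rfl | rfl
  · exact ⟨1, 0, by simp⟩
  · exact ⟨0, 1, by simp⟩
  · exact ⟨1, -1, by simp⟩

theorem shape_of_E3 (m n : ℤ) {u v : Pt} (hu : u ∈ E3) (hv : v ∈ E3) (h : u ≠ v) :
    ∃ x, convexHull ℝ (Q (mkP m n) u v) = shape x := by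
  have hA : ∃ x, convexHull ℝ (Q (mkP m n) (mkP 1 0) (mkP 0 1)) = shape x := ⟨Lz.A m n, by rw [hull_A]; rfl⟩
  have hB : ∃ x, convexHull ℝ (Q (mkP m n) (mkP 0 1) (mkP 1 (-1))) = shape x :=
    ⟨Lz.B m (n - 1), by rw [hull_B, shape]; push_cast; congr 1; ring⟩
  have hC : ∃ x, convexHull ℝ (Q (mkP m n) (mkP 1 0) (mkP 1 (-1))) = shape x :=
    ⟨Lz.C (m + 1) (n - 1), by rw [hull_C, shape]; push_cast; congr 1; ring⟩
  simp only [E3, Set.mem_insert_iff, Set.mem_singleton_iff] at hu hv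
  rcases hu with rfl | rfl | rfl <;> rcases hv with rfl | rfl | rfl <;>
    first | exact absurd rfl h | assumption | (rw [Q_comm]; assumption)

theorem lozenge_iff (L : Set Pt) : IsLozenge L ↔ ∃ x, L = shape x := by
  constructor
  · rintro ⟨p, u, v, hp, hu, hv, h1, h2, rfl⟩
    change ∃ x, convexHull ℝ (Q p u v) = shape x
    rw [lat_iff] at hp
    rw [unit_iff] at hu hv
    obtain ⟨m, n, rfl⟩ := hp
    rcases hu with hu | ⟨e, he, rfl⟩ <;> rcases hv with hv | ⟨e', he', rfl⟩
    · exact shape_of_E3 m n hu hv h1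
    · obtain ⟨m', n', hm⟩ := E3_int he'
      rw [Q_comm, Q_neg]
      have := shape_of_E3 (m - m') (n - n') he' hu (by rintro rfl; simp at h2)
      convert this using 5
      rw [hm, mk_neg, mk_add]
      push_cast
      congr 1
    · obtain ⟨m', n', hm⟩ := E3_int he
      rw [Q_neg]
      have := shape_of_E3 (m - m') (n - n') he hv (by rintro rfl; simp at h2)
      convert this using 5
      rw [hm, mk_neg, mk_add]
      push_cast
      congr 1
    · obtain ⟨m', n', hm⟩ := E3_int he
      obtain ⟨m'', n'', hm'⟩ := E3_int he'
      rw [Q_neg, Q_comm, Q_neg]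
      have := shape_of_E3 (m - m' - m'') (n - n' - n'') he' he (by rintro rfl; simp at h1)
      convert this using 5
      rw [hm, hm', mk_neg, mk_neg, mk_add, mk_add]
      push_cast
      congr 1
  · rintro ⟨x, rfl⟩
    have k1 : ∀ p ∈ E3, p ∈ unitVecs := fun p hp => (unit_iff p).2 (Or.inl hp)
    have m1 : mkP 1 0 ∈ unitVecs := k1 _ (by simp [E3])
    have m2 : mkP 0 1 ∈ unitVecs := k1 _ (by simp [E3])
    have m3 : mkP 1 (-1) ∈ unitVecs := k1 _ (by simp [E3])
    have hne : ∀ {u v u' v' : ℝ}, (u ≠ u' ∨ v ≠ v') → mkP u v ≠ mkP u' v' := by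
      intro u v u' v' h e
      have := mk_inj e
      tauto
    cases x with
    | A i j =>
      refine ⟨mkP i j, _, _, (lat_iff _).2 ⟨i, j, rfl⟩, m1, m2, hne (by norm_num), ?_, (hull_A i j).symm⟩
      rw [mk_neg]; exact hne (by norm_num)
    | B i j =>
      refine ⟨mkP i (j + 1 : ℤ), _, _, (lat_iff _).2 ⟨i, j + 1, rfl⟩, m2, m3, hne (by norm_num), ?_, ?_⟩
      · rw [mk_neg]; exact hne (by norm_num)
      · refine Eq.trans ?_ (hull_B _ _).symm
        rw [shape]; push_cast; congr 1; ring
    | C i j =>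
      refine ⟨mkP (i - 1 : ℤ) (j + 1 : ℤ), _, _, (lat_iff _).2 ⟨i - 1, j + 1, rfl⟩, m1, m3, hne (by norm_num), ?_, ?_⟩
      · rw [mk_neg]; exact hne (by norm_num)
      · refine Eq.trans ?_ (hull_C _ _).symm
        rw [shape]; push_cast; congr 1 <;> ring


theorem pt_eq {x y u v : ℝ} (h1 : x = u * (s3 / 2)) (h2 : y = v + u / 2) : (x, y) = mkP u v := by
  rw [h1, h2]; rfl

theorem hex_mem (a b : ℕ) (p : Pt) : p ∈ hexagon (2 * a) b ↔
    0 ≤ U p ∧ U p ≤ 4 * a ∧ -(2 * a : ℝ) ≤ V p ∧ V p ≤ 2 * b ∧ 0 ≤ W p ∧ W p ≤ 2 * a + 2 * b := by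
  have ha : (0 : ℝ) ≤ a := by positivity
  have hb : (0 : ℝ) ≤ b := by positivity
  have e : hexagon (2 * a) b = convexHull ℝ {mkP 0 0, mkP 0 (2 * b), mkP (2 * a) (2 * b), mkP (4 * a) (2 * b - 2 * a),
      mkP (4 * a) (-(2 * a)), mkP (2 * a) (-(2 * a))} := by
    unfold hexagon
    refine congrArg (convexHull ℝ) (congrArg₂ insert (pt_eq ?_ ?_) (congrArg₂ insert (pt_eq ?_ ?_) (congrArg₂ insert (pt_eq ?_ ?_) (congrArg₂ insert (pt_eq ?_ ?_) (congrArg₂ insert (pt_eq ?_ ?_) (congrArg singleton (pt_eq ?_ ?_))))))) <;> push_cast <;> ring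
  rw [e]
  set D : Set Pt := {mkP 0 0, mkP 0 (2 * b), mkP (2 * a) (2 * b), mkP (4 * a) (2 * b - 2 * a),
      mkP (4 * a) (-(2 * a)), mkP (2 * a) (-(2 * a))} with hD
  constructor
  · have h : convexHull ℝ D ⊆ {p | 0 ≤ U p} ∩ ({p | U p ≤ 4 * a} ∩ ({p | -(2 * a : ℝ) ≤ V p} ∩ ({p | V p ≤ 2 * b} ∩
      ({p | 0 ≤ W p} ∩ {p | W p ≤ 2 * a + 2 * b})))) := by
      apply convexHull_min _ ((cvx_ge _ _).inter ((cvx_le _ _).inter ((cvx_ge _ _).inter ((cvx_le _ _).inter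
        ((cvx_ge _ _).inter (cvx_le _ _))))))
      intro x hx
      rw [hD] at hx
      simp only [Set.mem_insert_iff, Set.mem_singleton_iff] at hx
      simp only [Set.mem_inter_iff, Set.mem_ofPred_eq]
      rcases hx with rfl | rfl | rfl | rfl | rfl | rfl <;>
        simp only [U_mk, V_mk, W_mk] <;> refine ⟨?_, ?_, ?_, ?_, ?_, ?_⟩ <;> linarith
    exact fun hp => h hp
  · rintro ⟨h1, h2, h3, h4, h5, h6⟩
    rw [W_eq] at h5 h6
    rw [← mk_UV p]
    have hC := convex_convexHull ℝ D
    have hs := subset_convexHull ℝ D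
    rcases le_total (U p) (2 * a) with h | h
    · refine convV hC (x := - U p) (y := 2 * b)
        (convW' hC 0 (x := 0) (x' := 0) (y := 2 * a) (y' := -(2 * a)) (hs ?_) (hs ?_) ?_ ?_ ?_ ?_ ?_)
        (convU hC (x := 0) (y := 2 * a) (hs ?_) (hs ?_) ?_ ?_) ?_ ?_ <;> first | (rw [hD]; simp; done) | linarith
    · refine convV hC (x := -(2 * a)) (y := 2 * b + 2 * a - U p)
        (convU hC (x := 2 * a) (y := 4 * a) (hs ?_) (hs ?_) ?_ ?_)
        (convW' hC (2 * b + 2 * a) (x := 2 * a) (x' := 2 * b) (y := 4 * a) (y' := 2 * b - 2 * a) (hs ?_) (hs ?_) ?_ ?_ ?_ ?_ ?_)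
        ?_ ?_ <;> first | (rw [hD]; simp; done) | linarith

theorem leftHole_eq (b k : ℕ) : leftHole b k = {p | U p ≤ 2 * k} ∩ ({p | V p ≤ b + 1 - k} ∩ {p | b + k - 1 ≤ W p}) := by
  have e : leftHole b k = convexHull ℝ {mkP (2 * k) (b - 1 - k), mkP (2 * k) (b + 1 - k), mkP (2 * k - 2) (b + 1 - k)} := by
    unfold leftHole
    refine congrArg (convexHull ℝ) (congrArg₂ insert (pt_eq ?_ ?_) (congrArg₂ insert (pt_eq ?_ ?_) (congrArg singleton (pt_eq ?_ ?_)))) <;> push_cast <;> ring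
  rw [e]
  set D : Set Pt := {mkP (2 * k) (b - 1 - k), mkP (2 * k) (b + 1 - k), mkP (2 * k - 2) (b + 1 - k)} with hD
  apply Set.Subset.antisymm
  · apply convexHull_min _ ((cvx_le _ _).inter ((cvx_le _ _).inter (cvx_ge _ _)))
    intro x hx
    rw [hD] at hx
    simp only [Set.mem_insert_iff, Set.mem_singleton_iff] at hx
    simp only [Set.mem_inter_iff, Set.mem_ofPred_eq]
    rcases hx with rfl | rfl | rfl <;> simp only [U_mk, V_mk, W_mk] <;> refine ⟨?_, ?_, ?_⟩ <;> linarith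
  · rintro p ⟨h1, h2, h3⟩
    simp only [Set.mem_ofPred_eq] at h1 h2 h3
    rw [W_eq] at h3
    rw [← mk_UV p]
    have hC := convex_convexHull ℝ D
    have hs := subset_convexHull ℝ D
    refine convV hC (x := b + k - 1 - U p) (y := b + 1 - k)
      (convW' hC (b + k - 1) (x := 2 * k - 2) (x' := b + 1 - k) (y := 2 * k) (y' := b - 1 - k) (hs ?_) (hs ?_) ?_ ?_ ?_ ?_ ?_)
      (convU hC (x := 2 * k - 2) (y := 2 * k) (hs ?_) (hs ?_) ?_ ?_) ?_ ?_ <;> first | (rw [hD]; simp; done) | linarith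

theorem rightHole_eq (a b k : ℕ) : rightHole (2 * a) b k =
    {p | 4 * a - 2 * k ≤ U p} ∩ ({p | b - 1 - 2 * a + k ≤ V p} ∩ {p | W p ≤ b + 2 * a - k + 1}) := by
  have e : rightHole (2 * a) b k = convexHull ℝ {mkP (4 * a - 2 * k) (b - 1 - 2 * a + k), mkP (4 * a - 2 * k) (b + 1 - 2 * a + k),
      mkP (4 * a - 2 * k + 2) (b - 1 - 2 * a + k)} := by
    unfold rightHole
    refine congrArg (convexHull ℝ) (congrArg₂ insert (pt_eq ?_ ?_) (congrArg₂ insert (pt_eq ?_ ?_) (congrArg singleton (pt_eq ?_ ?_)))) <;> push_cast <;> ring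
  rw [e]
  set D : Set Pt := {mkP (4 * a - 2 * k) (b - 1 - 2 * a + k), mkP (4 * a - 2 * k) (b + 1 - 2 * a + k),
      mkP (4 * a - 2 * k + 2) (b - 1 - 2 * a + k)} with hD
  apply Set.Subset.antisymm
  · apply convexHull_min _ ((cvx_ge _ _).inter ((cvx_ge _ _).inter (cvx_le _ _)))
    intro x hx
    rw [hD] at hx
    simp only [Set.mem_insert_iff, Set.mem_singleton_iff] at hx
    simp only [Set.mem_inter_iff, Set.mem_ofPred_eq]
    rcases hx with rfl | rfl | rfl <;> simp only [U_mk, V_mk, W_mk] <;> refine ⟨?_, ?_, ?_⟩ <;> linarith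
  · rintro p ⟨h1, h2, h3⟩
    simp only [Set.mem_ofPred_eq] at h1 h2 h3
    rw [W_eq] at h3
    rw [← mk_UV p]
    have hC := convex_convexHull ℝ D
    have hs := subset_convexHull ℝ D
    refine convV hC (x := b - 1 - 2 * a + k) (y := b + 2 * a - k + 1 - U p)
      (convU hC (x := 4 * a - 2 * k) (y := 4 * a - 2 * k + 2) (hs ?_) (hs ?_) ?_ ?_)
      (convW' hC (b + 2 * a - k + 1) (x := 4 * a - 2 * k) (x' := b + 1 - 2 * a + k) (y := 4 * a - 2 * k + 2) (y' := b - 1 - 2 * a + k)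
        (hs ?_) (hs ?_) ?_ ?_ ?_ ?_ ?_) ?_ ?_ <;> first | (rw [hD]; simp; done) | linarith

/-- coordinates of the region -/
def Reg (a b : ℕ) (K : Finset ℕ) (u v : ℝ) : Prop :=
  (0 ≤ u ∧ u ≤ 4 * a ∧ -(2 * a : ℝ) ≤ v ∧ v ≤ 2 * b ∧ 0 ≤ u + v ∧ u + v ≤ 2 * a + 2 * b) ∧
  ∀ k ∈ K, ¬ (u < 2 * k ∧ v < b + 1 - k ∧ b + k - 1 < u + v) ∧
    ¬ (4 * a - 2 * k < u ∧ b - 1 - 2 * a + k < v ∧ u + v < b + 2 * a - k + 1)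

theorem Hreg_mem (a b s : ℕ) (k : Fin s → ℕ) (p : Pt) :
    p ∈ Hreg (2 * a) b s k ↔ Reg a b (univ.image k) (U p) (V p) := by
  unfold Hreg Reg
  rw [Set.mem_sdiff, hex_mem]
  simp only [leftHole_eq, rightHole_eq, interior_inter, int_le _ U_surj, int_ge _ U_surj, int_le _ V_surj,
    int_ge _ V_surj, int_le _ W_surj, int_ge _ W_surj, Set.mem_iUnion, Set.mem_union, Set.mem_inter_iff,
    Set.mem_ofPred_eq, not_exists, not_or, mem_image, mem_univ, true_and, forall_exists_index,
    forall_apply_eq_imp_iff]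
  simp only [W_eq]

theorem rot_mkP (a b : ℕ) (u v : ℝ) : rot180 (2 * a) b (mkP u v) = mkP (4 * a - u) (2 * b - 2 * a - v) := by
  unfold rot180 mkP
  ext <;> simp <;> ring

theorem U_rot (a b : ℕ) (p : Pt) : U (rot180 (2 * a) b p) = 4 * a - U p := by
  rw [← mk_UV p, rot_mkP]; simp
theorem V_rot (a b : ℕ) (p : Pt) : V (rot180 (2 * a) b p) = 2 * b - 2 * a - V p := by
  rw [← mk_UV p, rot_mkP]; simp
theorem rot_rot (a b : ℕ) (p : Pt) : rot180 (2 * a) b (rot180 (2 * a) b p) = p := by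
  rw [← mk_UV p, rot_mkP, rot_mkP]; congr 1 <;> ring

theorem rot_shape (a b : ℕ) (x : Lz) : rot180 (2 * a) b '' shape x = shape (rotL a b x) := by
  have key : ∀ x p, p ∈ shape x → rot180 (2 * a) b p ∈ shape (rotL a b x) := by
    intro x p hp
    cases x <;> simp only [shape, rotL, box, Set.mem_ofPred_eq, W_eq, U_rot, V_rot] at hp ⊢ <;> push_cast <;>
      refine ⟨?_, ?_, ?_, ?_⟩ <;> linarith
  apply Set.Subset.antisymm
  · rintro _ ⟨p, hp, rfl⟩
    exact key x p hp
  · intro p hp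
    refine ⟨rot180 (2 * a) b p, ?_, rot_rot a b p⟩
    have := key _ _ hp
    rwa [rotL_rotL] at this


def cR (i j : ℤ) (u v : ℝ) : Prop := (i : ℝ) ≤ u ∧ (j : ℝ) ≤ v ∧ u + v ≤ i + j + 1
def cL (i j : ℤ) (u v : ℝ) : Prop := u ≤ i + 1 ∧ v ≤ j + 1 ∧ (i : ℝ) + j + 1 ≤ u + v

theorem shape_A (i j : ℤ) (p : Pt) : p ∈ shape (Lz.A i j) ↔ cR i j (U p) (V p) ∨ cL i j (U p) (V p) := by
  simp only [shape, box, Set.mem_ofPred_eq, cR, cL]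
  constructor
  · rintro ⟨h1, h2, h3, h4⟩
    rcases le_total (U p + V p) (i + j + 1) with h | h
    · exact Or.inl ⟨h1, h3, h⟩
    · exact Or.inr ⟨h2, h4, h⟩
  · rintro (⟨h1, h2, h3⟩ | ⟨h1, h2, h3⟩) <;> refine ⟨?_, ?_, ?_, ?_⟩ <;> linarith

theorem shape_B (i j : ℤ) (p : Pt) : p ∈ shape (Lz.B i j) ↔ cR i (j + 1) (U p) (V p) ∨ cL i j (U p) (V p) := by
  simp only [shape, box, Set.mem_ofPred_eq, cR, cL, W_eq]
  push_cast
  constructor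
  · rintro ⟨h1, h2, h3, h4⟩
    rcases le_total (V p) (j + 1) with h | h
    · exact Or.inr ⟨h2, h, h3⟩
    · exact Or.inl ⟨h1, h, by linarith⟩
  · rintro (⟨h1, h2, h3⟩ | ⟨h1, h2, h3⟩) <;> refine ⟨?_, ?_, ?_, ?_⟩ <;> linarith

theorem shape_C (i j : ℤ) (p : Pt) : p ∈ shape (Lz.C i j) ↔ cR i j (U p) (V p) ∨ cL (i - 1) j (U p) (V p) := by
  simp only [shape, box, Set.mem_ofPred_eq, cR, cL, W_eq]
  push_cast
  constructor
  · rintro ⟨h1, h2, h3, h4⟩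
    rcases le_total (U p) i with h | h
    · exact Or.inr ⟨by linarith, h2, by linarith⟩
    · exact Or.inl ⟨h, h1, by linarith⟩
  · rintro (⟨h1, h2, h3⟩ | ⟨h1, h2, h3⟩) <;> refine ⟨?_, ?_, ?_, ?_⟩ <;> linarith

theorem cR_sub {a b : ℕ} {K : Finset ℕ} {i j : ℤ} {u v : ℝ} (h : InR a b K i j) (hc : cR i j u v) :
    Reg a b K u v := by
  obtain ⟨⟨h1, h2, h3, h4, h5, h6⟩, hk⟩ := h
  obtain ⟨c1, c2, c3⟩ := hc
  have h1' : (0 : ℝ) ≤ i := by exact_mod_cast h1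
  have h2' : (i : ℝ) ≤ 4 * a - 1 := by exact_mod_cast h2
  have h3' : -2 * (a : ℝ) ≤ j := by exact_mod_cast h3
  have h4' : (j : ℝ) ≤ 2 * b - 1 := by exact_mod_cast h4
  have h5' : (0 : ℝ) ≤ i + j := by exact_mod_cast h5
  have h6' : (i : ℝ) + j ≤ 2 * a + 2 * b - 1 := by exact_mod_cast h6
  refine ⟨⟨?_, ?_, ?_, ?_, ?_, ?_⟩, fun k hkK => ⟨?_, ?_⟩⟩
  iterate 6 linarith
  · rintro ⟨g1, g2, g3⟩
    have q1 : (i : ℝ) < 2 * k := by linarith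
    have q2 : (j : ℝ) < b + 1 - k := by linarith
    have q3 : (b : ℝ) + k - 1 < i + j + 1 := by linarith
    have q1 : i < 2 * k := by exact_mod_cast q1
    have q2 : j < b + 1 - k := by exact_mod_cast q2
    have q3 : (b : ℤ) + k - 1 < i + j + 1 := by exact_mod_cast q3
    exact (hk k hkK).1 ⟨by omega, by omega, by omega⟩
  · rintro ⟨g1, g2, g3⟩
    have q1 : 4 * (a : ℝ) - 2 * k < i + 1 := by linarith
    have q2 : (b : ℝ) - 1 - 2 * a + k < j + 1 := by linarith
    have q3 : (i : ℝ) + j < b + 2 * a - k + 1 := by linarith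
    have q1 : 4 * (a : ℤ) - 2 * k < i + 1 := by exact_mod_cast q1
    have q2 : (b : ℤ) - 1 - 2 * a + k < j + 1 := by exact_mod_cast q2
    have q3 : i + j < b + 2 * a - k + 1 := by exact_mod_cast q3
    exact (hk k hkK).2 ⟨by omega, by omega, by omega⟩

theorem cL_sub {a b : ℕ} {K : Finset ℕ} {i j : ℤ} {u v : ℝ} (h : InL a b K i j) (hc : cL i j u v) :
    Reg a b K u v := by
  obtain ⟨⟨h1, h2, h3, h4, h5, h6⟩, hk⟩ := h
  obtain ⟨c1, c2, c3⟩ := hc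
  have h1' : (0 : ℝ) ≤ i := by exact_mod_cast h1
  have h2' : (i : ℝ) ≤ 4 * a - 1 := by exact_mod_cast h2
  have h3' : -2 * (a : ℝ) ≤ j := by exact_mod_cast h3
  have h4' : (j : ℝ) ≤ 2 * b - 1 := by exact_mod_cast h4
  have h5' : (-1 : ℝ) ≤ i + j := by exact_mod_cast h5
  have h6' : (i : ℝ) + j ≤ 2 * a + 2 * b - 2 := by exact_mod_cast h6
  refine ⟨⟨?_, ?_, ?_, ?_, ?_, ?_⟩, fun k hkK => ⟨?_, ?_⟩⟩
  iterate 6 linarith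
  · rintro ⟨g1, g2, g3⟩
    have q1 : (i : ℝ) < 2 * k := by linarith
    have q2 : (j : ℝ) < b + 1 - k := by linarith
    have q3 : (b : ℝ) + k - 1 < i + j + 2 := by linarith
    have q1 : i < 2 * k := by exact_mod_cast q1
    have q2 : j < b + 1 - k := by exact_mod_cast q2
    have q3 : (b : ℤ) + k - 1 < i + j + 2 := by exact_mod_cast q3
    exact (hk k hkK).1 ⟨by omega, by omega, by omega⟩
  · rintro ⟨g1, g2, g3⟩
    have q1 : 4 * (a : ℝ) - 2 * k < i + 1 := by linarith
    have q2 : (b : ℝ) - 1 - 2 * a + k < j + 1 := by linarith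
    have q3 : (i : ℝ) + j + 1 < b + 2 * a - k + 1 := by linarith
    have q1 : 4 * (a : ℤ) - 2 * k < i + 1 := by exact_mod_cast q1
    have q2 : (b : ℤ) - 1 - 2 * a + k < j + 1 := by exact_mod_cast q2
    have q3 : i + j + 1 < b + 2 * a - k + 1 := by exact_mod_cast q3
    exact (hk k hkK).2 ⟨by omega, by omega, by omega⟩

theorem pick (x : ℝ) (N M : ℤ) (h : N < M) (h1 : (N : ℝ) ≤ x) (h2 : x ≤ M) :
    ∃ i : ℤ, N ≤ i ∧ i ≤ M - 1 ∧ (i : ℝ) ≤ x ∧ x ≤ i + 1 := by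
  by_cases hx : x = M
  · refine ⟨M - 1, by omega, le_rfl, ?_, ?_⟩ <;> push_cast <;> linarith
  · refine ⟨⌊x⌋, Int.le_floor.2 h1, ?_, Int.floor_le x, (Int.lt_floor_add_one x).le⟩
    have : ⌊x⌋ < M := Int.floor_lt.2 (lt_of_le_of_ne h2 hx)
    omega

def Cov (a b : ℕ) (K : Finset ℕ) (u v : ℝ) : Prop :=
  (∃ i j, InR a b K i j ∧ cR i j u v) ∨ (∃ i j, InL a b K i j ∧ cL i j u v)

theorem hex_cell {a b : ℕ} (ha : 0 < a) (hb : 0 < b) {u v : ℝ} (h1 : 0 ≤ u) (h2 : u ≤ 4 * a) (h3 : -(2 * a : ℝ) ≤ v)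
    (h4 : v ≤ 2 * b) (h5 : 0 ≤ u + v) (h6 : u + v ≤ 2 * a + 2 * b) : Cov a b ∅ u v := by
  unfold Cov InR InL
  obtain ⟨i, i1, i2, i3, i4⟩ := pick u 0 (4 * a) (by omega) (by simpa using h1) (by push_cast; exact h2)
  obtain ⟨j, j1, j2, j3, j4⟩ := pick v (-(2 * a)) (2 * b) (by omega) (by push_cast; exact h3) (by push_cast; exact h4)
  have l1 : (-2 : ℝ) ≤ i + j := by linarith
  have l2 : (i : ℝ) + j ≤ 2 * a + 2 * b := by linarith
  have l1 : -2 ≤ i + j := by exact_mod_cast l1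
  have l2 : i + j ≤ 2 * a + 2 * b := by exact_mod_cast l2
  by_cases h : u + v ≤ i + j + 1
  · have l3 : (-1 : ℝ) ≤ i + j := by linarith
    have l3 : -1 ≤ i + j := by exact_mod_cast l3
    by_cases c1 : i + j = -1
    · right
      have c1' : (i : ℝ) + j = -1 := by exact_mod_cast c1
      refine ⟨i, j, ⟨by omega, by simp⟩, i4, j4, ?_⟩
      linarith
    by_cases c2 : i + j = 2 * a + 2 * b
    · right
      have c2' : (i : ℝ) + j = 2 * a + 2 * b := by exact_mod_cast c2
      refine ⟨i - 1, j - 1, ⟨by omega, by simp⟩, ?_, ?_, ?_⟩ <;> push_cast <;> linarith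
    · left
      exact ⟨i, j, ⟨by omega, by simp⟩, i3, j3, h⟩
  · push Not at h
    have l4 : (i : ℝ) + j + 1 < 2 * a + 2 * b := by linarith
    by_cases c1 : i + j = -2
    · left
      have c1' : (i : ℝ) + j = -2 := by exact_mod_cast c1
      refine ⟨i + 1, j + 1, ⟨by omega, by simp⟩, ?_, ?_, ?_⟩ <;> push_cast <;> linarith
    right
    have l4 : i + j + 1 < 2 * a + 2 * b := by exact_mod_cast l4
    exact ⟨i, j, ⟨by omega, by simp⟩, i4, j4, h.le⟩

/-- boundary of a left hole -/
theorem bdL {a b : ℕ} {K : Finset ℕ} (hK : ∀ k ∈ K, 2 ≤ k ∧ k + 1 ≤ a) {k : ℕ} (hk : k ∈ K) {u v : ℝ}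
    (h1 : u ≤ 2 * k) (h2 : v ≤ b + 1 - k) (h3 : b + k - 1 ≤ u + v)
    (h : ¬ (u < 2 * k ∧ v < b + 1 - k ∧ b + k - 1 < u + v)) : Cov a b K u v := by
  left
  have := hK k hk
  have key : ∀ i j : ℤ, 2 * k - 2 ≤ i → i ≤ 2 * k → b - 1 - k ≤ j → j ≤ b + 1 - k → b + k - 2 ≤ i + j → i + j ≤ b + k + 1 →
      (i = 2 * k ∨ j = b + 1 - k ∨ i + j = b + k - 2) → InR a b K i j := by
    intro i j g1 g2 g3 g4 g5 g6 g
    refine ⟨by omega, fun k' hk' => ?_⟩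
    have := hK k' hk'
    refine ⟨?_, ?_⟩
    · omega
    · omega
  by_cases e1 : u = 2 * k
  · have f1 := Int.floor_le v
    have f2 := Int.lt_floor_add_one v
    have b1 : (b : ℤ) - 1 - k ≤ ⌊v⌋ := Int.le_floor.2 (by push_cast; linarith)
    have b2 : (⌊v⌋ : ℝ) ≤ b + 1 - k := by linarith
    have b2 : ⌊v⌋ ≤ b + 1 - k := by exact_mod_cast b2
    refine ⟨2 * k, ⌊v⌋, key _ _ ?_ ?_ ?_ ?_ ?_ ?_ ?_, ?_, f1, ?_⟩
    any_goals omega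
    all_goals push_cast
    all_goals linarith
  have f1 := Int.floor_le u
  have f2 := Int.lt_floor_add_one u
  have b1 : (2 * k - 2 : ℤ) ≤ ⌊u⌋ := Int.le_floor.2 (by push_cast; linarith)
  have b2 : (⌊u⌋ : ℝ) < 2 * k := lt_of_le_of_lt f1 (lt_of_le_of_ne h1 e1)
  have b2 : ⌊u⌋ < 2 * k := by exact_mod_cast b2
  by_cases e2 : v = b + 1 - k
  · refine ⟨⌊u⌋, b + 1 - k, key _ _ ?_ ?_ ?_ ?_ ?_ ?_ ?_, f1, ?_, ?_⟩
    any_goals omega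
    all_goals push_cast
    all_goals linarith
  by_cases e3 : u + v = b + k - 1
  · refine ⟨⌊u⌋, b + k - 2 - ⌊u⌋, key _ _ ?_ ?_ ?_ ?_ ?_ ?_ ?_, f1, ?_, ?_⟩
    any_goals omega
    all_goals push_cast
    all_goals linarith
  exact absurd ⟨lt_of_le_of_ne h1 e1, lt_of_le_of_ne h2 e2, lt_of_le_of_ne h3 (Ne.symm e3)⟩ h

/-- boundary of a right hole -/
theorem bdR {a b : ℕ} {K : Finset ℕ} (hK : ∀ k ∈ K, 2 ≤ k ∧ k + 1 ≤ a) {k : ℕ} (hk : k ∈ K) {u v : ℝ}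
    (h1 : 4 * a - 2 * k ≤ u) (h2 : b - 1 - 2 * a + k ≤ v) (h3 : u + v ≤ b + 2 * a - k + 1)
    (h : ¬ (4 * a - 2 * k < u ∧ b - 1 - 2 * a + k < v ∧ u + v < b + 2 * a - k + 1)) : Cov a b K u v := by
  right
  have := hK k hk
  have key : ∀ i j : ℤ, 4 * a - 2 * k - 1 ≤ i → i ≤ 4 * a - 2 * k + 1 → b - 2 - 2 * a + k ≤ j → j ≤ b - 2 * a + k →
      (i = 4 * a - 2 * k - 1 ∨ j = b - 2 - 2 * a + k ∨ i + j = b + 2 * a - k) → InL a b K i j := by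
    intro i j g1 g2 g3 g4 g
    refine ⟨by omega, fun k' hk' => ?_⟩
    have := hK k' hk'
    refine ⟨?_, ?_⟩
    · omega
    · omega
  by_cases e1 : u = 4 * a - 2 * k
  · have f1 := Int.le_ceil v
    have f2 := Int.ceil_lt_add_one v
    have b1 : ⌈v⌉ ≤ (b : ℤ) + 1 - 2 * a + k := Int.ceil_le.2 (by push_cast; linarith)
    have b2 : (b : ℝ) - 1 - 2 * a + k ≤ ⌈v⌉ := by linarith
    have b2 : (b : ℤ) - 1 - 2 * a + k ≤ ⌈v⌉ := by exact_mod_cast b2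
    refine ⟨4 * a - 2 * k - 1, ⌈v⌉ - 1, key _ _ ?_ ?_ ?_ ?_ ?_, ?_, ?_, ?_⟩
    any_goals omega
    all_goals push_cast
    all_goals linarith
  have f1 := Int.le_ceil u
  have f2 := Int.ceil_lt_add_one u
  have b1 : ⌈u⌉ ≤ (4 * a - 2 * k + 2 : ℤ) := Int.ceil_le.2 (by push_cast; linarith)
  have b2 : (4 : ℝ) * a - 2 * k < ⌈u⌉ := lt_of_lt_of_le (lt_of_le_of_ne h1 (Ne.symm e1)) f1
  have b2 : (4 : ℤ) * a - 2 * k < ⌈u⌉ := by exact_mod_cast b2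
  by_cases e2 : v = b - 1 - 2 * a + k
  · refine ⟨⌈u⌉ - 1, b - 2 - 2 * a + k, key _ _ ?_ ?_ ?_ ?_ ?_, ?_, ?_, ?_⟩
    any_goals omega
    all_goals push_cast
    all_goals linarith
  by_cases e3 : u + v = b + 2 * a - k + 1
  · refine ⟨⌈u⌉ - 1, b + 2 * a - k + 1 - ⌈u⌉, key _ _ ?_ ?_ ?_ ?_ ?_, ?_, ?_, ?_⟩
    any_goals omega
    all_goals push_cast
    all_goals linarith
  exact absurd ⟨lt_of_le_of_ne h1 (Ne.symm e1), lt_of_le_of_ne h2 (Ne.symm e2), lt_of_le_of_ne h3 e3⟩ h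

theorem cover {a b : ℕ} {K : Finset ℕ} (hK : ∀ k ∈ K, 2 ≤ k ∧ k + 1 ≤ a) (ha : 0 < a) (hb : 0 < b) {u v : ℝ}
    (h : Reg a b K u v) : Cov a b K u v := by
  obtain ⟨⟨h1, h2, h3, h4, h5, h6⟩, hk⟩ := h
  rcases hex_cell ha hb h1 h2 h3 h4 h5 h6 with ⟨i, j, hij, c1, c2, c3⟩ | ⟨i, j, hij, c1, c2, c3⟩
  · by_cases hc : ∀ k ∈ K, ¬ (i ≤ 2 * k - 1 ∧ j ≤ b - k ∧ b + k - 1 ≤ i + j) ∧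
      ¬ (4 * a - 2 * k ≤ i ∧ b - 1 - 2 * a + k ≤ j ∧ i + j ≤ b + 2 * a - k)
    · exact Or.inl ⟨i, j, ⟨hij.1, hc⟩, c1, c2, c3⟩
    · push Not at hc
      obtain ⟨k, hkK, hc⟩ := hc
      by_cases hl : i ≤ 2 * k - 1 ∧ j ≤ b - k ∧ (b : ℤ) + k - 1 ≤ i + j
      · obtain ⟨g1, g2, g3⟩ := hl
        have g1 : (i : ℝ) ≤ 2 * k - 1 := by exact_mod_cast g1
        have g2 : (j : ℝ) ≤ b - k := by exact_mod_cast g2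
        have g3 : (b : ℝ) + k - 1 ≤ i + j := by exact_mod_cast g3
        exact bdL hK hkK (by linarith) (by linarith) (by linarith) (hk k hkK).1
      · obtain ⟨g1, g2, g3⟩ := hc (by omega)
        have g1 : 4 * (a : ℝ) - 2 * k ≤ i := by exact_mod_cast g1
        have g2 : (b : ℝ) - 1 - 2 * a + k ≤ j := by exact_mod_cast g2
        have g3 : (i : ℝ) + j ≤ b + 2 * a - k := by exact_mod_cast g3
        exact bdR hK hkK (by linarith) (by linarith) (by linarith) (hk k hkK).2
  · by_cases hc : ∀ k ∈ K, ¬ (i ≤ 2 * k - 1 ∧ j ≤ b - k ∧ b + k - 2 ≤ i + j) ∧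
      ¬ (4 * a - 2 * k ≤ i ∧ b - 1 - 2 * a + k ≤ j ∧ i + j ≤ b + 2 * a - k - 1)
    · exact Or.inr ⟨i, j, ⟨hij.1, hc⟩, c1, c2, c3⟩
    · push Not at hc
      obtain ⟨k, hkK, hc⟩ := hc
      by_cases hl : i ≤ 2 * k - 1 ∧ j ≤ b - k ∧ (b : ℤ) + k - 2 ≤ i + j
      · obtain ⟨g1, g2, g3⟩ := hl
        have g1 : (i : ℝ) ≤ 2 * k - 1 := by exact_mod_cast g1
        have g2 : (j : ℝ) ≤ b - k := by exact_mod_cast g2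
        have g3 : (b : ℝ) + k - 2 ≤ i + j := by exact_mod_cast g3
        exact bdL hK hkK (by linarith) (by linarith) (by linarith) (hk k hkK).1
      · obtain ⟨g1, g2, g3⟩ := hc (by omega)
        have g1 : 4 * (a : ℝ) - 2 * k ≤ i := by exact_mod_cast g1
        have g2 : (b : ℝ) - 1 - 2 * a + k ≤ j := by exact_mod_cast g2
        have g3 : (i : ℝ) + j ≤ b + 2 * a - k - 1 := by exact_mod_cast g3
        exact bdR hK hkK (by linarith) (by linarith) (by linarith) (hk k hkK).2


/-- points with coordinates in thirds -/
def P3 (m n : ℤ) : Pt := mkP ((m : ℝ) / 3) ((n : ℝ) / 3)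

theorem le3 (x m : ℤ) : (x : ℝ) ≤ (m : ℝ) / 3 ↔ 3 * x ≤ m := by
  rw [le_div_iff₀ (by norm_num)]
  constructor <;> intro h
  · have : (x * 3 : ℤ) ≤ m := by exact_mod_cast h
    omega
  · have : (x * 3 : ℤ) ≤ m := by omega
    exact_mod_cast this
theorem lt3 (x m : ℤ) : (x : ℝ) < (m : ℝ) / 3 ↔ 3 * x < m := by
  rw [lt_div_iff₀ (by norm_num)]
  constructor <;> intro h
  · have : (x * 3 : ℤ) < m := by exact_mod_cast h
    omega
  · have : (x * 3 : ℤ) < m := by omega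
    exact_mod_cast this
theorem ge3 (x m : ℤ) : (m : ℝ) / 3 ≤ x ↔ m ≤ 3 * x := by
  rw [← not_lt, lt3, not_lt]
theorem gt3 (x m : ℤ) : (m : ℝ) / 3 < x ↔ m < 3 * x := by
  rw [← not_le, le3, not_le]

theorem P3_UV (m n : ℤ) : U (P3 m n) = (m : ℝ) / 3 ∧ V (P3 m n) = (n : ℝ) / 3 ∧ W (P3 m n) = ((m + n : ℤ) : ℝ) / 3 := by
  unfold P3
  simp
  ring

theorem P3_box (m n c d : ℤ) (f g : Pt →ₗ[ℝ] ℝ) (x y : ℤ) (hf : f (P3 m n) = (x : ℝ) / 3) (hg : g (P3 m n) = (y : ℝ) / 3) :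
    P3 m n ∈ box f g c d ↔ 3 * c ≤ x ∧ x ≤ 3 * c + 3 ∧ 3 * d ≤ y ∧ y ≤ 3 * d + 3 := by
  simp only [box, Set.mem_ofPred_eq, hf, hg]
  have e1 : (c : ℝ) + 1 = ((c + 1 : ℤ) : ℝ) := by push_cast; rfl
  have e2 : (d : ℝ) + 1 = ((d + 1 : ℤ) : ℝ) := by push_cast; rfl
  rw [e1, e2, le3, le3, ge3, ge3]
  omega

theorem P3_boxi (m n c d : ℤ) (f g : Pt →ₗ[ℝ] ℝ) (x y : ℤ) (hf : f (P3 m n) = (x : ℝ) / 3) (hg : g (P3 m n) = (y : ℝ) / 3)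
    (hf' : Function.Surjective f) (hg' : Function.Surjective g) :
    P3 m n ∈ interior (box f g c d) ↔ 3 * c < x ∧ x < 3 * c + 3 ∧ 3 * d < y ∧ y < 3 * d + 3 := by
  rw [box_int _ _ hf' hg', hf, hg]
  have e1 : (c : ℝ) + 1 = ((c + 1 : ℤ) : ℝ) := by push_cast; rfl
  have e2 : (d : ℝ) + 1 = ((d + 1 : ℤ) : ℝ) := by push_cast; rfl
  rw [e1, e2, lt3, lt3, gt3, gt3]
  omega

def inS (m n : ℤ) : Lz → Prop
  | Lz.A i j => 3 * i ≤ m ∧ m ≤ 3 * i + 3 ∧ 3 * j ≤ n ∧ n ≤ 3 * j + 3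
  | Lz.B i j => 3 * i ≤ m ∧ m ≤ 3 * i + 3 ∧ 3 * (i + j + 1) ≤ m + n ∧ m + n ≤ 3 * (i + j + 1) + 3
  | Lz.C i j => 3 * j ≤ n ∧ n ≤ 3 * j + 3 ∧ 3 * (i + j) ≤ m + n ∧ m + n ≤ 3 * (i + j) + 3

theorem P3_shape (m n : ℤ) (x : Lz) : P3 m n ∈ shape x ↔ inS m n x := by
  obtain ⟨h1, h2, h3⟩ := P3_UV m n
  cases x with
  | A i j => exact P3_box m n i j U V _ _ h1 h2
  | B i j =>
    have := P3_box m n i (i + j + 1) U W _ _ h1 h3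
    push_cast at this
    exact this
  | C i j =>
    have := P3_box m n j (i + j) V W _ _ h2 h3
    push_cast at this
    exact this

def inSi (m n : ℤ) : Lz → Prop
  | Lz.A i j => 3 * i < m ∧ m < 3 * i + 3 ∧ 3 * j < n ∧ n < 3 * j + 3
  | Lz.B i j => 3 * i < m ∧ m < 3 * i + 3 ∧ 3 * (i + j + 1) < m + n ∧ m + n < 3 * (i + j + 1) + 3
  | Lz.C i j => 3 * j < n ∧ n < 3 * j + 3 ∧ 3 * (i + j) < m + n ∧ m + n < 3 * (i + j) + 3

theorem P3_shapei (m n : ℤ) (x : Lz) : P3 m n ∈ interior (shape x) ↔ inSi m n x := by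
  obtain ⟨h1, h2, h3⟩ := P3_UV m n
  cases x with
  | A i j => exact P3_boxi m n i j U V _ _ h1 h2 U_surj V_surj
  | B i j =>
    have := P3_boxi m n i (i + j + 1) U W _ _ h1 h3 U_surj W_surj
    push_cast at this
    exact this
  | C i j =>
    have := P3_boxi m n j (i + j) V W _ _ h2 h3 V_surj W_surj
    push_cast at this
    exact this

theorem R_mem (i j : ℤ) (x : Lz) : P3 (3 * i + 1) (3 * j + 1) ∈ shape x ↔ x = Lz.A i j ∨ x = Lz.B i (j - 1) ∨ x = Lz.C i j := by
  rw [P3_shape]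
  cases x <;> simp only [inS, Lz.A.injEq, Lz.B.injEq, Lz.C.injEq, reduceCtorEq, false_or, or_false] <;> omega

theorem L_mem (i j : ℤ) (x : Lz) : P3 (3 * i + 2) (3 * j + 2) ∈ shape x ↔ x = Lz.A i j ∨ x = Lz.B i j ∨ x = Lz.C (i + 1) j := by
  rw [P3_shape]
  cases x <;> simp only [inS, Lz.A.injEq, Lz.B.injEq, Lz.C.injEq, reduceCtorEq, false_or, or_false] <;> omega

theorem R_memi (i j : ℤ) (x : Lz) (h : x = Lz.A i j ∨ x = Lz.B i (j - 1) ∨ x = Lz.C i j) :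
    P3 (3 * i + 1) (3 * j + 1) ∈ interior (shape x) := by
  rw [P3_shapei]
  rcases h with rfl | rfl | rfl <;> simp only [inSi] <;> omega

theorem L_memi (i j : ℤ) (x : Lz) (h : x = Lz.A i j ∨ x = Lz.B i j ∨ x = Lz.C (i + 1) j) :
    P3 (3 * i + 2) (3 * j + 2) ∈ interior (shape x) := by
  rw [P3_shapei]
  rcases h with rfl | rfl | rfl <;> simp only [inSi] <;> omega

theorem shape_inj : Function.Injective shape := by
  have key : ∀ x y, shape x = shape y → ∀ i j,
      (x = Lz.A i j ∨ x = Lz.B i (j - 1) ∨ x = Lz.C i j → y = Lz.A i j ∨ y = Lz.B i (j - 1) ∨ y = Lz.C i j) ∧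
      (x = Lz.A i j ∨ x = Lz.B i j ∨ x = Lz.C (i + 1) j → y = Lz.A i j ∨ y = Lz.B i j ∨ y = Lz.C (i + 1) j) := by
    intro x y h i j
    rw [← R_mem, ← R_mem, ← L_mem, ← L_mem, h]
    exact ⟨id, id⟩
  intro x y h
  have k := key x y h
  cases x with
  | A i j =>
    have k1 := (k i j).1 (Or.inl rfl)
    have k2 := (k i j).2 (Or.inl rfl)
    rcases k1 with rfl | rfl | rfl <;> simp at k2 ⊢
  | B i j =>
    have k1 := (k i (j + 1)).1 (Or.inr (Or.inl (by rw [add_sub_cancel_right])))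
    have k2 := (k i j).2 (Or.inr (Or.inl rfl))
    rcases k1 with rfl | rfl | rfl <;> simp at k2 ⊢
  | C i j =>
    have k1 := (k i j).1 (Or.inr (Or.inr rfl))
    have k2 := (k (i - 1) j).2 (Or.inr (Or.inr (by rw [sub_add_cancel])))
    rcases k1 with rfl | rfl | rfl <;> simp at k2 ⊢
    omega

theorem Reg_R (a b : ℕ) (K : Finset ℕ) (i j : ℤ) :
    Reg a b K (U (P3 (3 * i + 1) (3 * j + 1))) (V (P3 (3 * i + 1) (3 * j + 1))) ↔ InR a b K i j := by
  constructor
  · obtain ⟨h1, h2, h3⟩ := P3_UV (3 * i + 1) (3 * j + 1)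
    rw [h1, h2]
    rintro ⟨⟨g1, g2, g3, g4, g5, g6⟩, hk⟩
    rw [← h1, ← h2, ← W_eq, h3] at g5 g6
    have g1 : ((0 : ℤ) : ℝ) ≤ ((3 * i + 1 : ℤ) : ℝ) / 3 := by push_cast at g1 ⊢; exact g1
    have g2 : ((3 * i + 1 : ℤ) : ℝ) / 3 ≤ ((4 * a : ℤ) : ℝ) := by push_cast at g2 ⊢; exact g2
    have g3 : ((-(2 * a) : ℤ) : ℝ) ≤ ((3 * j + 1 : ℤ) : ℝ) / 3 := by push_cast at g3 ⊢; exact g3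
    have g4 : ((3 * j + 1 : ℤ) : ℝ) / 3 ≤ ((2 * b : ℤ) : ℝ) := by push_cast at g4 ⊢; exact g4
    have g5 : ((0 : ℤ) : ℝ) ≤ ((3 * i + 1 + (3 * j + 1) : ℤ) : ℝ) / 3 := by push_cast at g5 ⊢; exact g5
    have g6 : ((3 * i + 1 + (3 * j + 1) : ℤ) : ℝ) / 3 ≤ ((2 * a + 2 * b : ℤ) : ℝ) := by push_cast at g6 ⊢; exact g6
    rw [le3] at g1 g3 g5
    rw [ge3] at g2 g4 g6
    refine ⟨by omega, fun k hkK => ⟨?_, ?_⟩⟩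
    · rintro ⟨q1, q2, q3⟩
      have q1 : (i : ℝ) ≤ 2 * k - 1 := by exact_mod_cast q1
      have q2 : (j : ℝ) ≤ b - k := by exact_mod_cast q2
      have q3 : (b : ℝ) + k - 1 ≤ i + j := by exact_mod_cast q3
      apply (hk k hkK).1
      refine ⟨?_, ?_, ?_⟩ <;> push_cast <;> linarith
    · rintro ⟨q1, q2, q3⟩
      have q1 : 4 * (a : ℝ) - 2 * k ≤ i := by exact_mod_cast q1
      have q2 : (b : ℝ) - 1 - 2 * a + k ≤ j := by exact_mod_cast q2
      have q3 : (i : ℝ) + j ≤ b + 2 * a - k := by exact_mod_cast q3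
      apply (hk k hkK).2
      refine ⟨?_, ?_, ?_⟩ <;> push_cast <;> linarith
  · intro h
    apply cR_sub h
    obtain ⟨h1, h2, h3⟩ := P3_UV (3 * i + 1) (3 * j + 1)
    rw [h1, h2]
    refine ⟨?_, ?_, ?_⟩ <;> push_cast <;> linarith

theorem Reg_L (a b : ℕ) (K : Finset ℕ) (i j : ℤ) :
    Reg a b K (U (P3 (3 * i + 2) (3 * j + 2))) (V (P3 (3 * i + 2) (3 * j + 2))) ↔ InL a b K i j := by
  constructor
  · obtain ⟨h1, h2, h3⟩ := P3_UV (3 * i + 2) (3 * j + 2)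
    rw [h1, h2]
    rintro ⟨⟨g1, g2, g3, g4, g5, g6⟩, hk⟩
    rw [← h1, ← h2, ← W_eq, h3] at g5 g6
    have g1 : ((0 : ℤ) : ℝ) ≤ ((3 * i + 2 : ℤ) : ℝ) / 3 := by push_cast at g1 ⊢; exact g1
    have g2 : ((3 * i + 2 : ℤ) : ℝ) / 3 ≤ ((4 * a : ℤ) : ℝ) := by push_cast at g2 ⊢; exact g2
    have g3 : ((-(2 * a) : ℤ) : ℝ) ≤ ((3 * j + 2 : ℤ) : ℝ) / 3 := by push_cast at g3 ⊢; exact g3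
    have g4 : ((3 * j + 2 : ℤ) : ℝ) / 3 ≤ ((2 * b : ℤ) : ℝ) := by push_cast at g4 ⊢; exact g4
    have g5 : ((0 : ℤ) : ℝ) ≤ ((3 * i + 2 + (3 * j + 2) : ℤ) : ℝ) / 3 := by push_cast at g5 ⊢; exact g5
    have g6 : ((3 * i + 2 + (3 * j + 2) : ℤ) : ℝ) / 3 ≤ ((2 * a + 2 * b : ℤ) : ℝ) := by push_cast at g6 ⊢; exact g6
    rw [le3] at g1 g3 g5
    rw [ge3] at g2 g4 g6
    refine ⟨by omega, fun k hkK => ⟨?_, ?_⟩⟩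
    · rintro ⟨q1, q2, q3⟩
      have q1 : (i : ℝ) ≤ 2 * k - 1 := by exact_mod_cast q1
      have q2 : (j : ℝ) ≤ b - k := by exact_mod_cast q2
      have q3 : (b : ℝ) + k - 2 ≤ i + j := by exact_mod_cast q3
      apply (hk k hkK).1
      refine ⟨?_, ?_, ?_⟩ <;> push_cast <;> linarith
    · rintro ⟨q1, q2, q3⟩
      have q1 : 4 * (a : ℝ) - 2 * k ≤ i := by exact_mod_cast q1
      have q2 : (b : ℝ) - 1 - 2 * a + k ≤ j := by exact_mod_cast q2
      have q3 : (i : ℝ) + j ≤ b + 2 * a - k - 1 := by exact_mod_cast q3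
      apply (hk k hkK).2
      refine ⟨?_, ?_, ?_⟩ <;> push_cast <;> linarith
  · intro h
    apply cL_sub h
    obtain ⟨h1, h2, h3⟩ := P3_UV (3 * i + 2) (3 * j + 2)
    rw [h1, h2]
    refine ⟨?_, ?_, ?_⟩ <;> push_cast <;> linarith

/-- overlapping lozenges share a cell -/
theorem overlap (x y : Lz) (h : (interior (shape x) ∩ interior (shape y)).Nonempty) : x = y ∨ ∃ i j : ℤ,
    ((x = Lz.A i j ∨ x = Lz.B i (j - 1) ∨ x = Lz.C i j) ∧ (y = Lz.A i j ∨ y = Lz.B i (j - 1) ∨ y = Lz.C i j)) ∨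
    ((x = Lz.A i j ∨ x = Lz.B i j ∨ x = Lz.C (i + 1) j) ∧ (y = Lz.A i j ∨ y = Lz.B i j ∨ y = Lz.C (i + 1) j)) := by
  have key : ∀ c c' : ℤ, ∀ t : ℝ, (c : ℝ) < t → t < c' → c < c' := fun c c' t h1 h2 => by
    exact_mod_cast h1.trans h2
  have key1 : ∀ (c c' : ℤ) (t : ℝ), (c : ℝ) < t → t < c + 1 → (c' : ℝ) < t → t < c' + 1 → c = c' := by
    intro c c' t h1 h2 h3 h4
    have q1 : (c : ℝ) < c' + 1 := by linarith
    have q2 : (c' : ℝ) < c + 1 := by linarith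
    have q1 : c < c' + 1 := by exact_mod_cast q1
    have q2 : c' < c + 1 := by exact_mod_cast q2
    omega
  have AB : ∀ (i j i' j' : ℤ), (interior (shape (Lz.A i j)) ∩ interior (shape (Lz.B i' j'))).Nonempty →
      i' = i ∧ (j' = j - 1 ∨ j' = j) := by
    rintro i j i' j' ⟨p, hp, hp'⟩
    rw [shape, box_int _ _ U_surj V_surj] at hp
    rw [shape, box_int _ _ U_surj W_surj, W_eq] at hp'
    obtain ⟨h1, h2, h3, h4⟩ := hp
    obtain ⟨g1, g2, g3, g4⟩ := hp'
    obtain rfl := key1 i i' _ h1 h2 g1 g2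
    have q1 : (j' : ℝ) < j + 1 := by linarith
    have q2 : (j : ℝ) < j' + 2 := by linarith
    have q1 : j' < j + 1 := by exact_mod_cast q1
    have q2 : j < j' + 2 := by exact_mod_cast q2
    omega
  have AC : ∀ (i j i' j' : ℤ), (interior (shape (Lz.A i j)) ∩ interior (shape (Lz.C i' j'))).Nonempty →
      j' = j ∧ (i' = i ∨ i' = i + 1) := by
    rintro i j i' j' ⟨p, hp, hp'⟩
    rw [shape, box_int _ _ U_surj V_surj] at hp
    rw [shape, box_int _ _ V_surj W_surj, W_eq] at hp'
    obtain ⟨h1, h2, h3, h4⟩ := hp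
    obtain ⟨g1, g2, g3, g4⟩ := hp'
    obtain rfl := key1 j j' _ h3 h4 g1 g2
    have q1 : (i' : ℝ) < i + 2 := by linarith
    have q2 : (i : ℝ) < i' + 1 := by linarith
    have q1 : i' < i + 2 := by exact_mod_cast q1
    have q2 : i < i' + 1 := by exact_mod_cast q2
    omega
  have BC : ∀ (i j i' j' : ℤ), (interior (shape (Lz.B i j)) ∩ interior (shape (Lz.C i' j'))).Nonempty →
      (i' = i ∧ j' = j + 1) ∨ (i' = i + 1 ∧ j' = j) := by
    rintro i j i' j' ⟨p, hp, hp'⟩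
    rw [shape, box_int _ _ U_surj W_surj, W_eq] at hp
    rw [shape, box_int _ _ V_surj W_surj, W_eq] at hp'
    obtain ⟨h1, h2, h3, h4⟩ := hp
    obtain ⟨g1, g2, g3, g4⟩ := hp'
    have q0 := key1 (i + j + 1) (i' + j') _ (by push_cast; exact h3) (by push_cast; exact h4)
      (by push_cast; exact g3) (by push_cast; exact g4)
    have q1 : (i' : ℝ) < i + 2 := by linarith
    have q2 : (i : ℝ) < i' + 1 := by linarith
    have q1 : i' < i + 2 := by exact_mod_cast q1
    have q2 : i < i' + 1 := by exact_mod_cast q2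
    omega
  cases x with
  | A i j =>
    cases y with
    | A i' j' =>
      left
      obtain ⟨p, hp, hp'⟩ := h
      rw [shape, box_int _ _ U_surj V_surj] at hp hp'
      obtain ⟨h1, h2, h3, h4⟩ := hp
      obtain ⟨g1, g2, g3, g4⟩ := hp'
      rw [key1 i i' _ h1 h2 g1 g2, key1 j j' _ h3 h4 g3 g4]
    | B i' j' =>
      right
      obtain ⟨rfl, rfl | rfl⟩ := AB _ _ _ _ h
      · exact ⟨i', j, by simp⟩
      · exact ⟨i', j', by simp⟩
    | C i' j' =>
      right
      obtain ⟨rfl, rfl | rfl⟩ := AC _ _ _ _ h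
      · exact ⟨i', j', by simp⟩
      · exact ⟨i, j', by simp⟩
  | B i j =>
    cases y with
    | A i' j' =>
      right
      rw [Set.inter_comm] at h
      obtain ⟨rfl, rfl | rfl⟩ := AB _ _ _ _ h
      · exact ⟨i, j', by simp⟩
      · exact ⟨i, j, by simp⟩
    | B i' j' =>
      left
      obtain ⟨p, hp, hp'⟩ := h
      rw [shape, box_int _ _ U_surj W_surj, W_eq] at hp hp'
      obtain ⟨h1, h2, h3, h4⟩ := hp
      obtain ⟨g1, g2, g3, g4⟩ := hp'
      have q := key1 i i' _ h1 h2 g1 g2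
      have q0 := key1 (i + j + 1) (i' + j' + 1) _ (by push_cast; exact h3) (by push_cast; exact h4)
        (by push_cast; exact g3) (by push_cast; exact g4)
      rw [q, show j = j' by omega]
    | C i' j' =>
      right
      obtain ⟨rfl, rfl⟩ | ⟨rfl, rfl⟩ := BC _ _ _ _ h
      · exact ⟨i', j + 1, by simp⟩
      · exact ⟨i, j', by simp⟩
  | C i j =>
    cases y with
    | A i' j' =>
      right
      rw [Set.inter_comm] at h
      obtain ⟨rfl, rfl | rfl⟩ := AC _ _ _ _ h
      · exact ⟨i, j, by simp⟩
      · exact ⟨i', j, by simp⟩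
    | B i' j' =>
      right
      rw [Set.inter_comm] at h
      obtain ⟨rfl, rfl⟩ | ⟨rfl, rfl⟩ := BC _ _ _ _ h
      · exact ⟨i, j' + 1, by simp⟩
      · exact ⟨i', j, by simp⟩
    | C i' j' =>
      left
      obtain ⟨p, hp, hp'⟩ := h
      rw [shape, box_int _ _ V_surj W_surj, W_eq] at hp hp'
      obtain ⟨h1, h2, h3, h4⟩ := hp
      obtain ⟨g1, g2, g3, g4⟩ := hp'
      have q := key1 j j' _ h1 h2 g1 g2
      have q0 := key1 (i + j) (i' + j') _ (by push_cast; exact h3) (by push_cast; exact h4)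
        (by push_cast; exact g3) (by push_cast; exact g4)
      rw [q, show i = i' by omega]


theorem tiling_iff {a b s : ℕ} {k : Fin s → ℕ} (hK : ∀ κ ∈ univ.image k, 2 ≤ κ ∧ κ + 1 ≤ a) (ha : 0 < a) (hb : 0 < b)
    (τ : Set Lz) : IsLozengeTiling (Hreg (2 * a) b s k) (shape '' τ) ↔ CT a b (univ.image k) τ := by
  constructor
  · rintro ⟨-, h2, h3⟩
    have hd : ∀ x ∈ τ, ∀ y ∈ τ, ∀ p, p ∈ interior (shape x) → p ∈ interior (shape y) → x = y := by
      intro x hx y hy p hp hp'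
      by_contra hne
      have := h3 _ ⟨x, hx, rfl⟩ _ ⟨y, hy, rfl⟩ (fun e => hne (shape_inj e))
      rw [Set.eq_empty_iff_forall_notMem] at this
      exact this p ⟨hp, hp'⟩
    have hc : ∀ p, Reg a b (univ.image k) (U p) (V p) ↔ ∃ x ∈ τ, p ∈ shape x := by
      intro p
      rw [← Hreg_mem, ← h2, Set.mem_sUnion]
      simp
    intro i j
    refine ⟨⟨?_, ?_, ?_, ?_⟩, ⟨?_, ?_, ?_, ?_⟩⟩
    · rw [← Reg_R, hc]
      simp only [R_mem]
      constructor
      · rintro ⟨x, hx, rfl | rfl | rfl⟩ <;> tauto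
      · rintro (h | h | h)
        · exact ⟨_, h, Or.inl rfl⟩
        · exact ⟨_, h, Or.inr (Or.inl rfl)⟩
        · exact ⟨_, h, Or.inr (Or.inr rfl)⟩
    · rintro ⟨p, q⟩
      simpa using hd _ p _ q _ (R_memi i j _ (by tauto)) (R_memi i j _ (by tauto))
    · rintro ⟨p, q⟩
      simpa using hd _ p _ q _ (R_memi i j _ (by tauto)) (R_memi i j _ (by tauto))
    · rintro ⟨p, q⟩
      simpa using hd _ p _ q _ (R_memi i j _ (by tauto)) (R_memi i j _ (by tauto))
    · rw [← Reg_L, hc]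
      simp only [L_mem]
      constructor
      · rintro ⟨x, hx, rfl | rfl | rfl⟩ <;> tauto
      · rintro (h | h | h)
        · exact ⟨_, h, Or.inl rfl⟩
        · exact ⟨_, h, Or.inr (Or.inl rfl)⟩
        · exact ⟨_, h, Or.inr (Or.inr rfl)⟩
    · rintro ⟨p, q⟩
      simpa using hd _ p _ q _ (L_memi i j _ (by tauto)) (L_memi i j _ (by tauto))
    · rintro ⟨p, q⟩
      simpa using hd _ p _ q _ (L_memi i j _ (by tauto)) (L_memi i j _ (by tauto))
    · rintro ⟨p, q⟩
      simpa using hd _ p _ q _ (L_memi i j _ (by tauto)) (L_memi i j _ (by tauto))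
  · intro h
    refine ⟨?_, ?_, ?_⟩
    · rintro _ ⟨x, -, rfl⟩
      exact (lozenge_iff _).2 ⟨x, rfl⟩
    · ext p
      rw [Hreg_mem, Set.mem_sUnion]
      constructor
      · rintro ⟨_, ⟨x, hx, rfl⟩, hp⟩
        cases x with
        | A i j =>
          rcases (shape_A i j p).1 hp with hp | hp
          · exact cR_sub ((h i j).1.1.2 (Or.inl hx)) hp
          · exact cL_sub ((h i j).2.1.2 (Or.inl hx)) hp
        | B i j =>
          rcases (shape_B i j p).1 hp with hp | hp
          · exact cR_sub ((h i (j + 1)).1.1.2 (Or.inr (Or.inl (by rwa [add_sub_cancel_right])))) hp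
          · exact cL_sub ((h i j).2.1.2 (Or.inr (Or.inl hx))) hp
        | C i j =>
          rcases (shape_C i j p).1 hp with hp | hp
          · exact cR_sub ((h i j).1.1.2 (Or.inr (Or.inr hx))) hp
          · exact cL_sub ((h (i - 1) j).2.1.2 (Or.inr (Or.inr (by rwa [sub_add_cancel])))) hp
      · intro hp
        rcases cover hK ha hb hp with ⟨i, j, hi, hc⟩ | ⟨i, j, hi, hc⟩
        · rcases (h i j).1.1.1 hi with hx | hx | hx
          · exact ⟨_, ⟨_, hx, rfl⟩, (shape_A _ _ _).2 (Or.inl hc)⟩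
          · exact ⟨_, ⟨_, hx, rfl⟩, (shape_B _ _ _).2 (Or.inl (by rwa [sub_add_cancel]))⟩
          · exact ⟨_, ⟨_, hx, rfl⟩, (shape_C _ _ _).2 (Or.inl hc)⟩
        · rcases (h i j).2.1.1 hi with hx | hx | hx
          · exact ⟨_, ⟨_, hx, rfl⟩, (shape_A _ _ _).2 (Or.inr hc)⟩
          · exact ⟨_, ⟨_, hx, rfl⟩, (shape_B _ _ _).2 (Or.inr hc)⟩
          · exact ⟨_, ⟨_, hx, rfl⟩, (shape_C _ _ _).2 (Or.inr (by rwa [add_sub_cancel_right]))⟩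
    · rintro _ ⟨x, hx, rfl⟩ _ ⟨y, hy, rfl⟩ hne
      by_contra hn
      rw [← ne_eq, ← Set.nonempty_iff_ne_empty] at hn
      rcases overlap x y hn with rfl | ⟨i, j, ⟨h1, h2⟩ | ⟨h1, h2⟩⟩
      · exact hne rfl
      · obtain ⟨e1, e2, e3⟩ := (h i j).1.2
        rcases h1 with rfl | rfl | rfl <;> rcases h2 with rfl | rfl | rfl <;> tauto
      · obtain ⟨e1, e2, e3⟩ := (h i j).2.2
        rcases h1 with rfl | rfl | rfl <;> rcases h2 with rfl | rfl | rfl <;> tauto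

theorem rot_iff (a b : ℕ) (τ : Set Lz) : RotInvariant (2 * a) b (shape '' τ) ↔ CRot a b τ := by
  unfold RotInvariant CRot
  rw [Set.forall_mem_image]
  refine forall₂_congr fun x _ => ?_
  rw [rot_shape, shape_inj.mem_set_image]

theorem Mrot_eq {a b s : ℕ} {k : Fin s → ℕ} (hK : ∀ κ ∈ univ.image k, 2 ≤ κ ∧ κ + 1 ≤ a) (ha : 0 < a) (hb : 0 < b) :
    Mrot (2 * a) b (Hreg (2 * a) b s k) = ∑ S ∈ symS a b, Nseq b (univ.image k) (2 * a) S := by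
  rw [← card_CT hK ha, Mrot]
  symm
  refine Nat.card_eq_of_bijective (fun τ : {τ : Set Lz // CT a b (univ.image k) τ ∧ CRot a b τ} =>
    ⟨shape '' τ.1, (tiling_iff hK ha hb _).2 τ.2.1, (rot_iff a b _).2 τ.2.2⟩) ⟨?_, ?_⟩
  · intro τ τ' h
    have := congrArg Subtype.val h
    exact Subtype.ext (shape_inj.image_injective this)
  · rintro ⟨T, hT, hR⟩
    have e : shape '' (shape ⁻¹' T) = T := by
      rw [Set.image_preimage_eq_iff]
      intro L hL
      obtain ⟨x, rfl⟩ := (lozenge_iff L).1 (hT.1 L hL)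
      exact ⟨x, rfl⟩
    refine ⟨⟨shape ⁻¹' T, (tiling_iff hK ha hb _).1 (e.symm ▸ hT), (rot_iff a b _).1 (e.symm ▸ hR)⟩, ?_⟩
    exact Subtype.ext e

theorem final (a b s : ℕ) (ha : 0 < a) (hb : 0 < b)
    (hsa : s < a) (k : Fin s → ℕ) (hmono : StrictMono k)
    (hk2 : ∀ i, 2 ≤ k i) (hka : ∀ i, k i ≤ a - 1)
    (q : Fin (a - s) → ℕ) (hq : StrictMono q)
    (hqrange : Finset.image q Finset.univ
      = Finset.Icc 1 a \ Finset.image (fun i => a - k i + 1) Finset.univ) :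
    (Mrot (2 * a) b (Hreg (2 * a) b s k) : ℚ)
      = ((∏ j : Fin (a - s), ((a + b + q j - 1).choose (2 * q j - 1) : ℚ))
          * ∏ p ∈ Finset.univ.filter (fun p : Fin (a - s) × Fin (a - s) => p.1 < p.2),
              ((q p.2 : ℚ) - (q p.1 : ℚ)) / ((q p.1 : ℚ) + (q p.2 : ℚ) - 1)) ^ 2 := by
  have hK : ∀ κ ∈ univ.image k, 2 ≤ κ ∧ κ + 1 ≤ a := by
    intro κ hκ
    obtain ⟨i, -, rfl⟩ := mem_image.1 hκ
    have := hk2 i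
    have := hka i
    omega
  have hk1 : ∀ i, 1 ≤ k i := fun i => by have := hk2 i; omega
  have hka' : ∀ i, k i ≤ a := fun i => by have := hka i; omega
  have hqm : ∀ n, (∃ j, q j = n) ↔ (1 ≤ n ∧ n ≤ a) ∧ ∀ i, a - k i + 1 ≠ n := by
    intro n
    have := Finset.ext_iff.1 hqrange n
    simpa using this
  have hq1 : ∀ j, (1 ≤ q j ∧ q j ≤ a) ∧ ∀ i, a - k i + 1 ≠ q j := fun j => (hqm _).1 ⟨j, rfl⟩
  let c : Fin (a - s) → Fin (a + b) := fun j => ⟨q j - 1, by have := hq1 j; omega⟩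
  have hcv : ∀ j, (c j : ℕ) = q j - 1 := fun j => rfl
  have hsurj : Function.Surjective (Sum.elim (jm a b s k hk1 hka') c) := by
    rintro ⟨n, hn⟩
    by_cases h1 : a ≤ n
    · refine ⟨Sum.inl (Fin.castAdd s ⟨n - a, by omega⟩), ?_⟩
      rw [Sum.elim_inl, jm, Fin.addCases_left]
      apply Fin.ext
      simp
      omega
    · by_cases h2 : ∃ i, a - k i = n
      · obtain ⟨i, hi⟩ := h2
        refine ⟨Sum.inl (Fin.natAdd b i), ?_⟩
        rw [Sum.elim_inl, jm, Fin.addCases_right]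
        exact Fin.ext hi
      · obtain ⟨j, hj⟩ := (hqm (n + 1)).2 ⟨by omega, fun i hi => h2 ⟨i, by omega⟩⟩
        refine ⟨Sum.inr j, ?_⟩
        rw [Sum.elim_inr]
        apply Fin.ext
        rw [hcv]
        change q j - 1 = n
        omega
  have hbij : Function.Bijective (Sum.elim (jm a b s k hk1 hka') c) := by
    rw [Fintype.bijective_iff_surjective_and_card]
    refine ⟨hsurj, ?_⟩
    simp
    omega
  rw [Mrot_eq hK ha hb, count2 a b s (a - s) k hmono.injective hk1 hka' c hbij]
  congr 2
  · refine prod_congr rfl fun j _ => ?_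
    have := hq1 j
    rw [hcv, show a + b + (q j - 1) = a + b + q j - 1 by omega, show 2 * (q j - 1) + 1 = 2 * q j - 1 by omega]
  · refine prod_congr rfl fun p _ => ?_
    have h1 := (hq1 p.1).1.1
    have h2 := (hq1 p.2).1.1
    rw [hcv, hcv, Nat.cast_sub h1, Nat.cast_sub h2]
    congr 1 <;> push_cast <;> ring


end LT

open PP in
/-- `M_⊙(H_{2a,2b}(k_1,…,k_s))` is the perfect square
`( ∏_j C(a+b+q_j−1, 2q_j−1) · ∏_{j<k} (q_k−q_j)/(q_j+q_k−1) )²`, where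
`q_1 < ⋯ < q_{a−s}` enumerates `{1,…,a} \ {a−k_1+1, …, a−k_s+1}`. -/
theorem Mrot_Hreg_even_eq_product_sq (a b s : ℕ) (ha : 0 < a) (hb : 0 < b) (hs : 0 < s)
    (hsa : s < a) (k : Fin s → ℕ) (hmono : StrictMono k)
    (hk2 : ∀ i, 2 ≤ k i) (hka : ∀ i, k i ≤ a - 1)
    (q : Fin (a - s) → ℕ) (hq : StrictMono q)
    (hqrange : Finset.image q Finset.univ
      = Finset.Icc 1 a \ Finset.image (fun i => a - k i + 1) Finset.univ) :
    (Mrot (2 * a) b (Hreg (2 * a) b s k) : ℚ)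
      = ((∏ j : Fin (a - s), ((a + b + q j - 1).choose (2 * q j - 1) : ℚ))
          * ∏ p ∈ Finset.univ.filter (fun p : Fin (a - s) × Fin (a - s) => p.1 < p.2),
              ((q p.2 : ℚ) - (q p.1 : ℚ)) / ((q p.1 : ℚ) + (q p.2 : ℚ) - 1)) ^ 2 := by
  exact LT.final a b s ha hb hsa k hmono hk2 hka q hq hqrange
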